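/- Let C > 1 be fixed. Then there exists c₃ > 0 such that the estimate M_{g,t}(x) = Li(x)/[ℚ(ζ_t, g^{1/t}) : ℚ] + O(x·e^{−c₃√(log x)}) holds uniformly for all integers t with 1 ≤ t ≤ (log^C x)/|d(g₀)| (the implied constant depending only on g and C), where Li(x) = ∫₂^x dt/log t and ℚ(ζ_t, g^{1/t}) is the splitting field of X^t − g over ℚ. -/

import Mathlib

/-!
The estimate is reduced to counting primes in residue classes, where the Siegel–Walfisz theorem
applies.

*From characters to residue classes.* Put `m = gcd(2h, t)`. Every order `d` occurring in `L` or `Q`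
divides `m`, and conversely, so by orthogonality of characters (`SW.sum_psi`, `SW.Mgt_eq`)
`M_{g,t}(x)` is `m / t` times the number of odd primes `p ≤ x` with `ord_p(g) = 0`, `p ≡ 1 (mod t)`, for
which `g` is an `m`-th power modulo `p`. Write `g₀ = a / b` in lowest terms. Up to `m`-th powers `g` is
`± (a b)^h`, and since `m ∣ 2h` its `m`-th root lies in the cyclotomic field `ℚ(ζ_N)`, `N = 4abt`, which
contains `√(ab)` (`SW.exists_sqrt`). Hence the condition on `p` says that Frobenius at `p` fixes
`E = ℚ(ζ_t, g^{1/m})` (`SW.frob_congr`, `SW.frob_fix`), that is, `p` lies in a set `H` of `φ(N) / [E : ℚ]`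
classes modulo `N` (`SW.exists_class`).

*The main term.* An element `γ` of an abelian extension of `ℚ` in `ℂ` with `γ^e = g` satisfies
`e ∣ 2h`: all conjugates of `γ · conj γ` are positive with the same `e`-th power `g²`, so `γ · conj γ` is rational, and `g₀`
is not a proper power (`SW.abelian_dvd`). Since `E` is abelian, no further roots of `g` can be extracted
in it, and a Kummer-theoretic degree count gives `[ℚ(ζ_t, g^{1/t}) : ℚ] = [E : ℚ] · t / m`
(`SW.finrank_split`). Thus `m / t` times `|H| / φ(N)` is the reciprocal of the degree of the splitting
field.

*The error term.* What remains is the prime number theorem in residue classes modulo `N`, uniformly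
for `N` below a power of `log x` (`SW.pi_class`). Landau's lemma yields the zero-free region
(`SW.zero_free`); the possible exceptional zero is kept away from `1` by Siegel's theorem
(`SW.siegel`), derived from a lower bound of Estermann's type (`SW.est_core`). The weight `1 - n / x`
makes Perron's integral absolutely convergent (`SW.perron`), and shifting its contour (`SW.shift_bound`)
bounds the smoothed sums over characters (`SW.psi_smooth`). Orthogonality, removal of the weight by
monotonicity (`SW.desmooth`) and partial summation lead to prime counts. Summing over the at most `N`
classes of `H` costs only part of the exponent in `exp (- c √(log x))`.
-/

open Polynomial Filter
open scoped Classical Pointwise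

noncomputable section

/-- The reduction of a rational number mod `p`. -/
def ratRed (g : ℚ) (p : ℕ) : ZMod p := (g.num : ZMod p) * ((g.den : ℕ) : ZMod p)⁻¹

/-- `ord_p(g) = 0`: `p` divides neither the numerator nor the denominator of `g`. -/
def OrdZero (g : ℚ) (p : ℕ) : Prop := ¬ (p : ℤ) ∣ g.num ∧ ¬ p ∣ g.den

/-- The residual index `r_g(p) = [(ℤ/pℤ)^* : ⟨g mod p⟩]`. -/
def resIndex (g : ℚ) (p : ℕ) : ℕ := (p - 1) / orderOf (ratRed g p)

/-- The decomposition `g = ± g₀ ^ h` with `g₀ > 0` not an exact power of a rational,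
`h ≥ 1`, for `g ∈ ℚ ∖ {-1,0,1}`. -/
structure Decomp (g g₀ : ℚ) (h : ℕ) : Prop where
  ne_neg_one : g ≠ -1
  ne_zero : g ≠ 0
  ne_one : g ≠ 1
  g₀_pos : 0 < g₀
  not_power : ¬ ∃ (r : ℚ) (k : ℕ), 2 ≤ k ∧ r ^ k = g₀
  h_pos : 1 ≤ h
  eq : g = g₀ ^ h ∨ g = -(g₀ ^ h)

instance (f : ℚ[X]) : NumberField (SplittingField f) where

/-- The splitting field `ℚ(ζ_m, g^{1/m})` of `X^m - g` over `ℚ`. -/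
abbrev splitField (g : ℚ) (m : ℕ) : Type := SplittingField (X ^ m - C g)

/-- The quadratic field `ℚ(√g₀)`, realised as the splitting field of `X² - g₀`. -/
abbrev quadField (g₀ : ℚ) : Type := SplittingField (X ^ 2 - C g₀)

/-- `d(g₀)`, the discriminant of the quadratic field `ℚ(√g₀)`. -/
def discQuad (g₀ : ℚ) : ℤ := NumberField.discr (quadField g₀)

/-- The field `ℚ(ζ_m, √g₀)`. -/
abbrev cycQuadField (g₀ : ℚ) (m : ℕ) : Type :=
  SplittingField ((X ^ m - 1) * (X ^ 2 - C g₀))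

/-- A rational prime `p` splits completely in the number field `K`:
there are `[K:ℚ]` maximal ideals of the ring of integers above `p`. -/
def SplitsCompletely (K : Type*) [Field K] [NumberField K] (p : ℕ) : Prop :=
  Nat.card {P : Ideal (NumberField.RingOfIntegers K) //
      P.IsMaximal ∧ (p : NumberField.RingOfIntegers K) ∈ P} = Module.finrank ℚ K

/-- The number of primes `p ≤ x` satisfying the predicate `P`. -/
def countPrimes (x : ℝ) (P : ℕ → Prop) : ℕ :=
  ((Finset.range (⌊x⌋₊ + 1)).filter fun p => p.Prime ∧ P p).card

/-- `N_{g,t}(x)`: the number of odd primes `p ≤ x` with `ord_p(g) = 0` and `r_g(p) = t`. -/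
def Ngt (g : ℚ) (t : ℕ) (x : ℝ) : ℕ :=
  countPrimes x fun p => Odd p ∧ OrdZero g p ∧ resIndex g p = t

/-- `R_{g,t}(x)`: the number of odd primes `p ≤ x` with `ord_p(g) = 0` and `t ∣ r_g(p)`. -/
def Rgt (g : ℚ) (t : ℕ) (x : ℝ) : ℕ :=
  countPrimes x fun p => Odd p ∧ OrdZero g p ∧ t ∣ resIndex g p

/-- `π(x; m, 1)`: the number of odd primes `p ≤ x` with `ord_p(g) = 0` and `p ≡ 1 (mod m)`. -/
def piCount (g : ℚ) (m : ℕ) (x : ℝ) : ℕ :=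
  countPrimes x fun p => Odd p ∧ OrdZero g p ∧ p ≡ 1 [MOD m]

/-- `P_K(x)` restricted to odd primes `p` with `ord_p(g) = 0`. -/
def PKg (g : ℚ) (K : Type*) [Field K] [NumberField K] (x : ℝ) : ℕ :=
  countPrimes x fun p => Odd p ∧ OrdZero g p ∧ SplitsCompletely K p

/-- The logarithmic integral `Li(x) = ∫₂ˣ dt / log t`. -/
def Li (x : ℝ) : ℝ := ∫ t in (2:ℝ)..x, 1 / Real.log t

/-- `ψ_d(p) = Σ_{ord χ = d} χ(g mod p)`, the sum over the complex multiplicative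
characters of `(ℤ/pℤ)^*` of order exactly `d`. -/
def psiSum (g : ℚ) (p d : ℕ) : ℂ :=
  ∑ᶠ χ ∈ {χ : MulChar (ZMod p) ℂ | orderOf χ = d}, χ (ratRed g p)

/-- The finset of odd primes `p ≤ x` with `ord_p(g) = 0` and `p ≡ 1 (mod t)`. -/
def primesTo (g : ℚ) (t : ℕ) (x : ℝ) : Finset ℕ :=
  (Finset.range (⌊x⌋₊ + 1)).filter fun p => p.Prime ∧ Odd p ∧ OrdZero g p ∧ p ≡ 1 [MOD t]

/-- The `linear' contribution `L_{g,t}(x)`. -/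
def Lgt (g : ℚ) (h t : ℕ) (x : ℝ) : ℂ :=
  (1 / (t : ℂ)) * ∑ p ∈ primesTo g t x, ∑ d ∈ (Nat.gcd h t).divisors, psiSum g p d

/-- The `quadratic' contribution `Q_{g,t}(x)`. -/
def Qgt (g : ℚ) (h t : ℕ) (x : ℝ) : ℂ :=
  (1 / (t : ℂ)) * ∑ p ∈ primesTo g t x,
    ∑ d ∈ (Nat.gcd (2 * h) t).divisors.filter (fun d => ¬ d ∣ h), psiSum g p d

/-- `M_{g,t}(x) = L_{g,t}(x) + Q_{g,t}(x)`. -/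
def Mgt (g : ℚ) (h t : ℕ) (x : ℝ) : ℂ := Lgt g h t x + Qgt g h t x

/-- The weight `w_{g,t}(p)` of Theorem 1 of the paper. -/
def wgt (g g₀ : ℚ) (h t p : ℕ) : ℚ :=
  let e := padicValNat 2 h
  let τ := padicValNat 2 t
  let ht := h / Nat.gcd h t
  let ε₁ : ℚ := if τ < e then 0 else if τ = e then -1 else 1
  if 0 < g ∧ p ≡ 1 [MOD t] ∧ Nat.gcd ((p - 1) / t) ht = 1 then
    1 + ε₁ / 2 * (1 + (-1 : ℚ) ^ ((p - 1) / 2 ^ e)) * (jacobiSym (discQuad g₀) p : ℚ)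
  else if g < 0 ∧ ¬ 2 ∣ ht ∧ p ≡ 1 [MOD Nat.lcm (2 ^ (e + 1)) t] ∧
      Nat.gcd ((p - 1) / t) ht = 1 then
    1 + ε₁ * (-1 : ℚ) ^ ((p - 1) / 2 ^ (e + 1)) * (jacobiSym (discQuad g₀) p : ℚ)
  else if g < 0 ∧ 2 ∣ ht ∧ p ≡ 1 [MOD 2 * t] ∧ Nat.gcd ((p - 1) / (2 * t)) ht = 1 then 2
  else 0

/-- `G^m = {x^m : x ∈ G}`. -/
def powSet (G : Type*) [Monoid G] (m : ℕ) : Set G := Set.range fun x : G => x ^ m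

/-- `ρ`: the density `|a·G^{2h} ∩ G^t| / |G^{2h}|` in a group `G` of order `n`
(and `0` if `t ∤ n`). -/
def rhoDen (G : Type*) [Group G] (n : ℕ) (a : G) (h t : ℕ) : ℚ :=
  if t ∣ n then
    (((a • powSet G (2 * h)) ∩ powSet G t).ncard : ℚ) / ((powSet G (2 * h)).ncard : ℚ)
  else 0

/-- `r_{g,t}(p) = t_h · ρ_{sgn g, (d(g₀)/p), t}`, computed with respect to the
generator `γ` of `(ℤ/pℤ)^*`. -/
def rgt (g g₀ : ℚ) (h t p : ℕ) (γ : (ZMod p)ˣ) : ℚ :=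
  (t / Nat.gcd t h : ℕ) *
    rhoDen (ZMod p)ˣ (p - 1)
      ((if 0 < g then 1 else -1) * (if jacobiSym (discQuad g₀) p = 1 then 1 else γ ^ h)) h t

/-- The coefficients of the Dedekind zeta function of `K`: the number of ideals of
the ring of integers of `K` of absolute norm `n`. -/
def zetaCoeff (K : Type*) [Field K] [NumberField K] (n : ℕ) : ℂ :=
  (Nat.card {I : Ideal (NumberField.RingOfIntegers K) // Ideal.absNorm I = n} : ℂ)

/-- The Riemann Hypothesis for the Dedekind zeta function `ζ_K` of a number field `K`:
any analytic continuation of the Dirichlet series `Σ_I N(I)^{-s}` off `s = 1` has all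
its zeros in the critical strip on the line `Re s = 1/2`. -/
def DedekindRH (K : Type*) [Field K] [NumberField K] : Prop :=
  ∀ Z : ℂ → ℂ, (∀ s : ℂ, s ≠ 1 → AnalyticAt ℂ Z s) →
    (∀ s : ℂ, 1 < s.re → Z s = LSeries (zetaCoeff K) s) →
    ∀ s : ℂ, 0 < s.re → s.re < 1 → Z s = 0 → s.re = 1 / 2

/-- The Ramanujan sum `c_d(m)`. -/
def ramanujanSum (d m : ℕ) : ℂ :=
  ∑ k ∈ (Finset.Icc 1 d).filter (fun k => Nat.gcd k d = 1),
    Complex.exp (2 * Real.pi * Complex.I * k * m / d)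

/-- The sum `Σ_{ord χ = d} χ(γ)` over the complex characters of `G` of order exactly `d`. -/
def charOrdSum {G : Type*} [Group G] (d : ℕ) (γ : G) : ℂ :=
  ∑ᶠ χ ∈ {χ : G →* ℂˣ | orderOf χ = d}, ((χ γ : ℂˣ) : ℂ)

end

/-! ### The Borel–Carathéodory theorem and Landau's local lemma -/

namespace SW
open Complex Metric

/-- A bound for the logarithmic derivative of a zero-free function on a disc: the Borel–Carathéodory
inequality for a branch of `log f`, followed by Cauchy's estimate. -/
theorem bc_zero {f : ℂ → ℂ} {R M : ℝ} (hR : 0 < R) (hM : 0 < M)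
    (hf : DifferentiableOn ℂ f (ball 0 R)) (h0 : ∀ z ∈ ball (0:ℂ) R, f z ≠ 0)
    (hb : ∀ z ∈ ball (0:ℂ) R, ‖f z‖ ≤ Real.exp M * ‖f 0‖) {z : ℂ} (hz : ‖z‖ ≤ 5 * R / 6) :
    ‖deriv f z / f z‖ ≤ 264 * M / R := by
  have hd : DifferentiableOn ℂ (fun z => deriv f z / f z) (ball 0 R) :=
    (hf.deriv isOpen_ball).div hf h0
  obtain ⟨l, hl0, hl⟩ := (hd.isExactOn_ball).with_val_at 0 0
  have hmem0 : (0:ℂ) ∈ ball (0:ℂ) R := mem_ball_self hR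
  have hfd : ∀ w ∈ ball (0:ℂ) R, HasDerivAt f (deriv f w) w := fun w hw =>
    (hf.differentiableAt (isOpen_ball.mem_nhds hw)).hasDerivAt
  have hconst : ∀ w ∈ ball (0:ℂ) R, f w * exp (-l w) = f 0 := by
    intro w hw
    have h1 : ∀ w ∈ ball (0:ℂ) R, HasDerivAt (fun w => f w * exp (-l w)) 0 w := by
      intro w hw
      have := (hfd w hw).mul (((hl w hw).neg).cexp)
      refine this.congr_deriv ?_
      have := h0 w hw
      field_simp
      ring
    have := IsOpen.is_const_of_deriv_eq_zero (𝕜 := ℂ) isOpen_ball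
      (convex_ball (0:ℂ) R).isPreconnected
      (f := fun w => f w * exp (-l w))
      (fun w hw => (h1 w hw).differentiableAt.differentiableWithinAt)
      (fun w hw => (h1 w hw).deriv) hw hmem0
    simpa [hl0] using this
  have hldiff : DifferentiableOn ℂ l (ball 0 R) := fun w hw =>
    (hl w hw).differentiableAt.differentiableWithinAt
  have hre : Set.MapsTo l (ball 0 R) {z | z.re ≤ M} := by
    intro w hw
    have h1 := hconst w hw
    have h2 : f w = f 0 * exp (l w) := by
      rw [← h1, mul_assoc, ← exp_add]; simp
    have h3 := hb w hw
    rw [h2, norm_mul, norm_exp, mul_comm] at h3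
    have h4 : 0 < ‖f 0‖ := norm_pos_iff.2 (h0 0 hmem0)
    exact Real.exp_le_exp.1 (le_of_mul_le_mul_right h3 h4)
  have hbd : ∀ w : ℂ, ‖w‖ ≤ 11 * R / 12 → ‖l w‖ ≤ 22 * M := by
    intro w hw
    have hwb : w ∈ ball (0:ℂ) R := by
      rw [mem_ball_zero_iff]; linarith
    refine (borelCaratheodory_zero hM hldiff hre hR hwb hl0).trans ?_
    rw [div_le_iff₀ (by linarith)]
    nlinarith [norm_nonneg w]
  have hzb : z ∈ ball (0:ℂ) R := by
    rw [mem_ball_zero_iff]; linarith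
  have hsub : closedBall z (R/12) ⊆ ball 0 R := by
    intro w hw
    rw [mem_closedBall_iff_norm] at hw
    rw [mem_ball_zero_iff]
    have := norm_le_norm_add_norm_sub z w
    linarith [norm_sub_rev z w]
  have := norm_deriv_le_of_forall_mem_sphere_norm_le (c := z) (R := R/12) (C := 22 * M) (f := l)
    (by positivity)
    (hldiff.diffContOnCl_ball hsub) (by
      intro w hw
      apply hbd
      rw [mem_sphere_iff_norm] at hw
      have := norm_le_norm_add_norm_sub z w
      linarith [norm_sub_rev z w])
  rw [(hl z hzb).deriv] at this
  calc _ ≤ _ := this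
    _ = _ := by field_simp; ring

/-- The bound `bc_zero` on a disc with arbitrary centre. -/
theorem bc {f : ℂ → ℂ} {c : ℂ} {R M : ℝ} (hR : 0 < R) (hM : 0 < M)
    (hf : DifferentiableOn ℂ f (ball c R)) (h0 : ∀ z ∈ ball c R, f z ≠ 0)
    (hb : ∀ z ∈ ball c R, ‖f z‖ ≤ Real.exp M * ‖f c‖) {z : ℂ} (hz : ‖z - c‖ ≤ 5 * R / 6) :
    ‖deriv f z / f z‖ ≤ 264 * M / R := by
  have key : ∀ w ∈ ball (0:ℂ) R, c + w ∈ ball c R := by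
    intro w hw; simpa [mem_ball_iff_norm] using hw
  have := bc_zero (f := fun w => f (c + w)) hR hM
    (hf.comp (by fun_prop) key) (fun w hw => h0 _ (key w hw))
    (fun w hw => by simpa using hb _ (key w hw)) (z := z - c) hz
  rw [deriv_comp_const_add] at this
  simpa using this

/-- The logarithmic derivative at the centre of a disc of radius `r` is, up to `792 M / r`, the sum of
`- 1 / ρ` over the zeros `ρ` with `‖ρ‖ ≤ r / 3`, counted with multiplicity. Dividing out a zero gains a
factor `2` in the growth bound, so there are only finitely many of them. -/
theorem landau_aux {f : ℂ → ℂ} {r M : ℝ} (hr : 0 < r) (hM : 0 < M)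
    (hf : Differentiable ℂ f) (h0 : f 0 ≠ 0)
    (hb : ∀ z : ℂ, ‖z‖ ≤ r → ‖f z‖ ≤ Real.exp M * ‖f 0‖) :
    ∃ S : Multiset ℂ, (∀ ρ : ℂ, ρ ∈ S ↔ (‖ρ‖ ≤ r / 3 ∧ f ρ = 0)) ∧
      ‖deriv f 0 / f 0 + (S.map (fun ρ => 1 / ρ)).sum‖ ≤ 792 * M / r := by
  let P : ℕ → Prop := fun n => ∃ S : Multiset ℂ, S.card = n ∧ (∀ ρ ∈ S, ‖ρ‖ ≤ r/3) ∧
    ∃ g : ℂ → ℂ, Differentiable ℂ g ∧ (∀ z, f z = (S.map (fun ρ => z - ρ)).prod * g z) ∧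
      deriv f 0 / f 0 + (S.map (fun ρ => 1 / ρ)).sum = deriv g 0 / g 0
  have hbound : ∀ S : Multiset ℂ, (∀ ρ ∈ S, ‖ρ‖ ≤ r/3) → ∀ g : ℂ → ℂ, Differentiable ℂ g →
      (∀ z, f z = (S.map (fun ρ => z - ρ)).prod * g z) →
      (g 0 ≠ 0 ∧ ∀ z : ℂ, ‖z‖ ≤ r → 2 ^ S.card * ‖g z‖ ≤ Real.exp M * ‖g 0‖) := by
    intro S hS g hg hfg
    have hg0 : g 0 ≠ 0 := by
      intro h; apply h0; rw [hfg, h, mul_zero]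
    refine ⟨hg0, ?_⟩
    have hup : ‖f 0‖ ≤ (r/3) ^ S.card * ‖g 0‖ := by
      rw [hfg 0, norm_mul]
      gcongr
      clear hfg
      induction S using Multiset.induction_on with
      | empty => simp
      | cons a S ih =>
        simp only [Multiset.map_cons, Multiset.prod_cons, norm_mul, Multiset.card_cons, pow_succ']
        gcongr
        · simpa using hS a (by simp)
        · exact ih (fun ρ h => hS ρ (by simp [h]))
    have hlow : ∀ z : ℂ, ‖z‖ = r → (2 * r/3) ^ S.card * ‖g z‖ ≤ ‖f z‖ := by
      intro z hz
      rw [hfg z, norm_mul]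
      gcongr
      clear hfg hup
      induction S using Multiset.induction_on with
      | empty => simp
      | cons a S ih =>
        simp only [Multiset.map_cons, Multiset.prod_cons, norm_mul, Multiset.card_cons, pow_succ']
        gcongr
        · have h1 := hS a (by simp)
          have := norm_sub_norm_le z a
          linarith
        · exact ih (fun ρ h => hS ρ (by simp [h]))
    intro z hz
    have hmax : ‖g z‖ ≤ Real.exp M * ‖g 0‖ / 2 ^ S.card := by
      refine norm_le_of_forall_mem_frontier_norm_le (U := ball 0 r) isBounded_ball
        hg.diffContOnCl (fun w hw => ?_) ?_
      · rw [frontier_ball _ hr.ne', mem_sphere_zero_iff_norm] at hw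
        have h1 := hlow w hw
        have h2 := hb w hw.le
        rw [le_div_iff₀ (by positivity)]
        have h3 : (2 * r / 3)^S.card = 2 ^ S.card * (r/3)^S.card := by
          rw [← mul_pow]; congr 1; ring
        have h4 : (r/3)^S.card * (2 ^ S.card * ‖g w‖) ≤ (r/3)^S.card * (Real.exp M * ‖g 0‖) := by
          calc _ = (2 * r / 3)^S.card * ‖g w‖ := by rw [h3]; ring
            _ ≤ _ := h1
            _ ≤ _ := h2
            _ ≤ Real.exp M * ((r/3) ^ S.card * ‖g 0‖) := by gcongr
            _ = _ := by ring
        have h5 := le_of_mul_le_mul_left h4 (by positivity)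
        linarith
      · rw [closure_ball _ hr.ne']; simpa using hz
    rw [le_div_iff₀ (by positivity)] at hmax
    linarith
  have hP0 : P 0 := ⟨0, rfl, by simp, f, hf, by simp, by simp⟩
  obtain ⟨B, hB⟩ : ∃ B : ℕ, ∀ n, P n → n ≤ B := by
    obtain ⟨B, hB⟩ := exists_nat_gt (Real.exp M)
    refine ⟨B, ?_⟩
    rintro n ⟨S, hn, hS, g, hg, hfg, -⟩
    obtain ⟨hg0, h⟩ := hbound S hS g hg hfg
    have h1 := h 0 (by simpa using hr.le)
    have h2 := le_of_mul_le_mul_right h1 (norm_pos_iff.2 hg0)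
    have h3 : (n:ℝ) < 2 ^ n := by exact_mod_cast Nat.lt_two_pow_self
    rw [hn] at h2
    have : (n:ℝ) < B := by linarith
    exact_mod_cast this.le
  have hmaxP : P (Nat.findGreatest P B) := Nat.findGreatest_spec (Nat.zero_le B) hP0
  obtain ⟨S, hn, hS, g, hg, hfg, hlog⟩ := hmaxP
  obtain ⟨hg0, hgb⟩ := hbound S hS g hg hfg
  have hSf : ∀ ρ ∈ S, f ρ = 0 := by
    intro ρ hρ
    rw [hfg, mul_eq_zero]; left
    rw [Multiset.prod_eq_zero_iff, Multiset.mem_map]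
    exact ⟨ρ, hρ, sub_self _⟩
  have hgnz : ∀ z : ℂ, ‖z‖ ≤ r/3 → g z ≠ 0 := by
    intro z hz hgz
    have hz0 : z ≠ 0 := by rintro rfl; exact hg0 hgz
    have hd1 : Differentiable ℂ (dslope g z) := by
      rw [← differentiableOn_univ, differentiableOn_dslope Filter.univ_mem, differentiableOn_univ]
      exact hg
    have hgd : ∀ w, g w = (w - z) * dslope g z w := by
      intro w
      have := sub_smul_dslope g z w
      rw [smul_eq_mul, hgz, sub_zero] at this
      exact this.symm
    have : P (Nat.findGreatest P B + 1) := by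
      refine ⟨z ::ₘ S, by simp [hn], ?_, dslope g z, hd1, ?_, ?_⟩
      · intro ρ hρ
        rcases Multiset.mem_cons.1 hρ with rfl | h
        · exact hz
        · exact hS _ h
      · intro w
        rw [hfg, hgd w]; simp; ring
      · rw [Multiset.map_cons, Multiset.sum_cons, add_left_comm, hlog]
        have h1 : HasDerivAt g (1 * dslope g z 0 + (0 - z) * deriv (dslope g z) 0) 0 := by
          have h3 : HasDerivAt (fun w => (w - z) * dslope g z w)
              (1 * dslope g z 0 + (0 - z) * deriv (dslope g z) 0) 0 :=
            ((hasDerivAt_id (0:ℂ)).sub_const z).mul (hd1 0).hasDerivAt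
          exact h3.congr_of_eventuallyEq (Eventually.of_forall hgd)
        have h2 : dslope g z 0 ≠ 0 := by
          intro h; apply hg0; rw [hgd, h, mul_zero]
        rw [h1.deriv, hgd 0]
        field_simp
        ring
    have h1 := hB _ this
    have := Nat.le_findGreatest h1 this
    omega
  refine ⟨S, fun ρ => ⟨fun h => ⟨hS ρ h, hSf ρ h⟩, ?_⟩, ?_⟩
  · rintro ⟨h1, h2⟩
    rw [hfg, mul_eq_zero] at h2
    rcases h2 with h2 | h2
    · rw [Multiset.prod_eq_zero_iff, Multiset.mem_map] at h2
      obtain ⟨a, ha, hb⟩ := h2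
      rw [sub_eq_zero] at hb; rwa [hb]
    · exact absurd h2 (hgnz ρ h1)
  · rw [hlog]
    have := bc_zero (f := g) (R := r/3) (by positivity) hM hg.differentiableOn
      (fun z hz => hgnz z (mem_ball_zero_iff.1 hz).le) (fun z hz => by
        have h1 := hgb z (by rw [mem_ball_zero_iff] at hz; linarith)
        refine le_trans ?_ h1
        exact le_mul_of_one_le_left (norm_nonneg _) (one_le_pow₀ (by norm_num)))
      (z := 0) (by simp; positivity)
    calc _ ≤ _ := this
      _ = _ := by field_simp; ring

/-- Landau's local lemma. If all zeros of `f` lie to the left of `c` and `|f| ≤ e^M |f c|` on a disc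
of radius `r`, then `Re (-f'/f)(c)` is at most `792 M / r`, and any one zero near `c` may be
subtracted from this bound. -/
theorem landau {f : ℂ → ℂ} {c : ℂ} {r M : ℝ} (hr : 0 < r) (hM : 0 < M)
    (hf : Differentiable ℂ f)
    (hb : ∀ z : ℂ, ‖z - c‖ ≤ r → ‖f z‖ ≤ Real.exp M * ‖f c‖)
    (hz : ∀ z : ℂ, f z = 0 → z.re < c.re) :
    -(deriv f c / f c).re ≤ 792 * M / r ∧
    ∀ ρ : ℂ, ‖ρ - c‖ ≤ r / 3 → f ρ = 0 →
      -(deriv f c / f c).re ≤ 792 * M / r - (1 / (c - ρ)).re := by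
  have hc0 : f c ≠ 0 := fun h => lt_irrefl _ (hz c h)
  obtain ⟨S, hS, hS2⟩ := landau_aux (f := fun w => f (c + w)) hr hM
    (hf.comp (by fun_prop)) (by simpa using hc0)
    (fun z hz => by simpa using hb (c + z) (by simpa using hz))
  rw [deriv_comp_const_add] at hS2
  simp only [add_zero] at hS2
  have hre : ∀ ρ ∈ S, (1 / ρ).re ≤ 0 := by
    intro ρ hρ
    have := hz _ ((hS ρ).1 hρ).2
    rw [one_div, inv_re]
    apply div_nonpos_of_nonpos_of_nonneg _ (normSq_nonneg _)
    simp at this; linarith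
  have hsum : ∀ T : Multiset ℂ, T ≤ S → ((T.map (fun ρ => 1 / ρ)).sum).re ≤ 0 := by
    intro T hT
    induction T using Multiset.induction_on with
    | empty => simp
    | cons a T ih =>
      rw [Multiset.map_cons, Multiset.sum_cons, add_re]
      have h1 := hre a (Multiset.mem_of_le hT (by simp))
      have h2 := ih (le_trans (Multiset.le_cons_self _ _) hT)
      linarith
  have hmain : -(deriv f c / f c).re ≤ 792 * M / r + ((S.map (fun ρ => 1 / ρ)).sum).re := by
    have := (abs_re_le_norm _).trans hS2
    rw [add_re] at this
    have := (abs_le.1 this).1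
    linarith
  refine ⟨by linarith [hsum S le_rfl], ?_⟩
  intro ρ hρ hfρ
  have hmem : ρ - c ∈ S := (hS _).2 ⟨hρ, by simpa using hfρ⟩
  obtain ⟨T, hT⟩ := Multiset.exists_cons_of_mem hmem
  have h1 := hsum T (hT ▸ Multiset.le_cons_self _ _)
  rw [hT, Multiset.map_cons, Multiset.sum_cons, add_re] at hmain
  have h2 : (1 / (ρ - c)).re = - (1 / (c - ρ)).re := by
    rw [← neg_re, ← neg_sub c ρ]; congr 1; rw [div_neg]
  linarith

end SW

/-! ### Dirichlet L-functions: entire normalisation and bounds -/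

namespace SW
open Complex Metric MeasureTheory Set

theorem sum_zmod {N : ℕ} [NeZero N] (f : ZMod N → ℂ) :
    ∑ k ∈ Finset.range N, f (k : ZMod N) = ∑ x : ZMod N, f x := by
  refine Finset.sum_nbij' (fun k => (k : ZMod N)) (fun x => x.val) ?_ ?_ ?_ ?_ ?_
  · simp
  · intro x _; simpa using ZMod.val_lt x
  · intro k hk; simp only [Finset.mem_range] at hk; exact ZMod.val_cast_of_lt hk
  · intro x _; simp
  · simp

theorem sum_period {N : ℕ} [NeZero N] (f : ZMod N → ℂ) (n : ℕ) :
    ∑ k ∈ Finset.Icc 1 (n + N), f (k : ZMod N) =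
      ∑ k ∈ Finset.Icc 1 n, f (k : ZMod N) + ∑ x : ZMod N, f x := by
  induction n with
  | zero =>
    rw [zero_add, ← sum_zmod, Finset.range_eq_Ico]
    have h1 : ∑ k ∈ Finset.Icc 1 N, f (k : ZMod N) = ∑ k ∈ Finset.Ico 0 N, f ((k + 1 : ℕ) : ZMod N) := by
      rw [Finset.sum_Ico_add' (fun k : ℕ => f (k : ZMod N)) 0 N 1]
      rfl
    rw [h1]
    simp only [Finset.Icc_eq_empty_of_lt one_pos, Finset.sum_empty, zero_add]
    rw [← Finset.range_eq_Ico, sum_zmod f]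
    have := sum_zmod (fun x => f (x + 1))
    push_cast
    rw [this]
    exact Equiv.sum_comp (Equiv.addRight (1 : ZMod N)) f
  | succ n ih =>
    have h1 : n + 1 + N = (n + N) + 1 := by ring
    rw [h1, Finset.sum_Icc_succ_top (by omega), ih, Finset.sum_Icc_succ_top (by omega)]
    push_cast
    simp
    ring

/-- Sums of an `N`-periodic function follow their mean value up to `2 N`. -/
theorem sum_period_bound {N : ℕ} [NeZero N] (f : ZMod N → ℂ) (hf : ∀ x, ‖f x‖ ≤ 1) (n : ℕ) :
    ‖∑ k ∈ Finset.Icc 1 n, f (k : ZMod N) - n * ((∑ x : ZMod N, f x) / N)‖ ≤ 2 * N := by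
  have hN : (0:ℝ) < N := by exact_mod_cast Nat.pos_of_ne_zero (NeZero.ne N)
  have hNC : (N:ℂ) ≠ 0 := by exact_mod_cast NeZero.ne N
  have hA : ‖∑ x : ZMod N, f x‖ ≤ N := by
    refine (norm_sum_le _ _).trans ?_
    refine (Finset.sum_le_sum (fun x _ => hf x)).trans ?_
    simp [ZMod.card]
  induction n using Nat.strong_induction_on with
  | _ n ih =>
    by_cases h : n < N
    · refine (norm_sub_le _ _).trans ?_
      have h1 : ‖∑ k ∈ Finset.Icc 1 n, f (k : ZMod N)‖ ≤ n := by
        refine (norm_sum_le _ _).trans ?_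
        refine (Finset.sum_le_sum (fun x _ => hf _)).trans ?_
        simp
      have h2 : ‖(n:ℂ) * ((∑ x : ZMod N, f x) / N)‖ ≤ n := by
        rw [norm_mul, norm_div]
        simp only [Complex.norm_natCast]
        have : ‖∑ x : ZMod N, f x‖ / N ≤ 1 := by rw [div_le_one hN]; exact hA
        calc _ ≤ (n:ℝ) * 1 := by gcongr
          _ = n := mul_one _
      have h3 : (n:ℝ) ≤ N := by exact_mod_cast h.le
      linarith
    · push Not at h
      obtain ⟨m, rfl⟩ := Nat.exists_eq_add_of_le' h
      have := ih m (by have := Nat.pos_of_ne_zero (NeZero.ne N); omega)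
      rw [sum_period]
      convert this using 2
      push_cast
      field_simp
      ring

variable {N : ℕ} [NeZero N]

/-- The mean value of `χ`: the residue of `L(s, χ)` at `s = 1`, namely `φ(N)/N` for the trivial
character and `0` otherwise. -/
noncomputable def kap (χ : DirichletCharacter ℂ N) : ℂ := if χ = 1 then (N.totient : ℂ) / N else 0

/-- The error `∑_{k ≤ u} χ(k) - kap χ · u` in the sum of `χ` over an initial segment. -/
noncomputable def Ech (χ : DirichletCharacter ℂ N) (u : ℝ) : ℂ :=
  ∑ k ∈ Finset.Icc 1 ⌊u⌋₊, χ (k : ZMod N) - kap χ * u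

theorem Nr_pos : (1:ℝ) ≤ N := by exact_mod_cast Nat.pos_of_ne_zero (NeZero.ne N)

theorem norm_kap_le (χ : DirichletCharacter ℂ N) : ‖kap χ‖ ≤ 1 := by
  unfold kap
  split_ifs
  · rw [norm_div, Complex.norm_natCast, Complex.norm_natCast, div_le_one]
    · exact_mod_cast Nat.totient_le N
    · linarith [Nr_pos (N := N)]
  · simp

theorem kap_eq (χ : DirichletCharacter ℂ N) : kap χ = (∑ x : ZMod N, χ x) / N := by
  unfold kap
  split_ifs with h
  · subst h
    rw [MulChar.sum_one_eq_card_units, ZMod.card_units_eq_totient]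
  · rw [MulChar.sum_eq_zero_of_ne_one h]; simp

theorem norm_Ech_le (χ : DirichletCharacter ℂ N) {u : ℝ} (hu : 0 ≤ u) : ‖Ech χ u‖ ≤ 3 * N := by
  have h1 := sum_period_bound (fun x => χ x) (fun x => χ.norm_le_one x) ⌊u⌋₊
  rw [← kap_eq] at h1
  have h2 : Ech χ u = (∑ k ∈ Finset.Icc 1 ⌊u⌋₊, χ (k : ZMod N) - ⌊u⌋₊ * kap χ)
      + kap χ * (((⌊u⌋₊ : ℝ) - u : ℝ) : ℂ) := by
    unfold Ech; push_cast; ring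
  rw [h2]
  refine (norm_add_le _ _).trans ?_
  have h3 : ‖kap χ * (((⌊u⌋₊ : ℝ) - u : ℝ) : ℂ)‖ ≤ 1 := by
    rw [norm_mul, Complex.norm_real]
    have h4 : ‖((⌊u⌋₊ : ℝ) - u)‖ ≤ 1 := by
      rw [Real.norm_eq_abs, abs_le]
      constructor
      · linarith [(Nat.lt_floor_add_one u)]
      · linarith [Nat.floor_le hu]
    calc _ ≤ (1:ℝ) * 1 := by gcongr; exact norm_kap_le χ
      _ = 1 := mul_one _
  linarith [Nr_pos (N := N)]

theorem measurable_Ech (χ : DirichletCharacter ℂ N) : Measurable (Ech χ) := by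
  unfold Ech
  refine Measurable.sub ?_ (by fun_prop)
  exact (measurable_from_nat (f := fun n : ℕ => ∑ k ∈ Finset.Icc 1 n, χ (k : ZMod N))).comp
    Nat.measurable_floor

/-- `Ech χ` restricted to `u > 1`. -/
noncomputable def Fch (χ : DirichletCharacter ℂ N) : ℝ → ℂ := indicator (Ioi 1) (Ech χ)

/-- The integral `∫_1^∞ Ech χ u · u^{-s-1} du`, written as a Mellin transform so that its
holomorphy in `Re s > 0` comes from the general theory; see `Jch_eq`. -/
noncomputable def Jch (χ : DirichletCharacter ℂ N) (s : ℂ) : ℂ := mellin (Fch χ) (-s)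

theorem norm_Fch_le (χ : DirichletCharacter ℂ N) (u : ℝ) : ‖Fch χ u‖ ≤ 3 * N := by
  unfold Fch
  rw [indicator_apply]
  split_ifs with h
  · exact norm_Ech_le χ (by simp at h; linarith)
  · simp

theorem differentiableAt_Jch (χ : DirichletCharacter ℂ N) {s : ℂ} (hs : 0 < s.re) :
    DifferentiableAt ℂ (Jch χ) s := by
  have h1 : LocallyIntegrableOn (Fch χ) (Ioi 0) := by
    have : LocallyIntegrable (Fch χ) := by
      refine (locallyIntegrable_const (3 * N : ℝ)).mono
        ((measurable_Ech χ).indicator measurableSet_Ioi).aestronglyMeasurable ?_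
      refine Eventually.of_forall fun u => ?_
      exact (norm_Fch_le χ u).trans (Real.le_norm_self _)
    exact this.locallyIntegrableOn _
  have h2 : DifferentiableAt ℂ (mellin (Fch χ)) (-s) := by
    refine mellin_differentiableAt_of_isBigO_rpow (a := 0) (b := -s.re - 1) h1 ?_ (by simpa using hs)
      ?_ (by simp)
    · refine Asymptotics.isBigO_of_le' (c := 3 * N) _ fun u => ?_
      simpa using norm_Fch_le χ u
    · refine Asymptotics.IsBigO.of_bound 1 ?_
      filter_upwards [Ioo_mem_nhdsGT (zero_lt_one (α := ℝ))] with u hu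
      simp [Fch, hu.2.le]
  exact h2.comp s (differentiable_neg.differentiableAt)

theorem Jch_eq (χ : DirichletCharacter ℂ N) (s : ℂ) :
    Jch χ s = ∫ t in Ioi (1:ℝ), Ech χ t * (t:ℂ) ^ (-(s+1)) := by
  unfold Jch mellin Fch
  have : ∀ t : ℝ, (t:ℂ) ^ (-s - 1) • (Ioi 1).indicator (Ech χ) t =
      (Ioi 1).indicator (fun t => Ech χ t * (t:ℂ) ^ (-(s+1))) t := by
    intro t
    simp only [indicator_apply]
    split_ifs
    · rw [smul_eq_mul, mul_comm]; congr 2; ring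
    · simp
  simp_rw [this]
  rw [integral_indicator measurableSet_Ioi, Measure.restrict_restrict measurableSet_Ioi]
  congr 2
  ext t; simp only [mem_inter_iff, mem_Ioi, and_iff_left_iff_imp]; intro h; linarith

theorem norm_int_le {h : ℝ → ℂ} {a B : ℝ} {s : ℂ} (hs : a < s.re)
    (hb : ∀ u, 1 < u → ‖h u‖ ≤ B * u ^ a) :
    ‖∫ t in Ioi (1:ℝ), h t * (t:ℂ) ^ (-(s+1))‖ ≤ B / (s.re - a) := by
  have hlt : a - s.re - 1 < -1 := by linarith
  have h1 : ‖∫ t in Ioi (1:ℝ), h t * (t:ℂ) ^ (-(s+1))‖ ≤ ∫ t in Ioi (1:ℝ), B * t ^ (a - s.re - 1) := by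
    refine norm_integral_le_of_norm_le ((integrableOn_Ioi_rpow_of_lt hlt one_pos).const_mul B) ?_
    filter_upwards [ae_restrict_mem measurableSet_Ioi] with t ht
    have ht0 : (0:ℝ) < t := lt_trans one_pos ht
    rw [norm_mul, norm_cpow_eq_rpow_re_of_pos ht0]
    have := hb t ht
    calc _ ≤ (B * t ^ a) * t ^ (-(s+1)).re := by gcongr
      _ = B * t ^ (a - s.re - 1) := by
        rw [mul_assoc, ← Real.rpow_add ht0]; congr 2; simp; ring
  refine h1.trans (le_of_eq ?_)
  rw [integral_const_mul, integral_Ioi_rpow_of_lt hlt one_pos]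
  simp
  have : s.re - a ≠ 0 := by linarith
  have : a - s.re ≠ 0 := by linarith
  field_simp
  ring

theorem integrable_aux {h : ℝ → ℂ} (hm : Measurable h) {a B : ℝ} {s : ℂ} (hs : a < s.re)
    (hb : ∀ u, 1 < u → ‖h u‖ ≤ B * u ^ a) :
    IntegrableOn (fun t => h t * (t:ℂ) ^ (-(s+1))) (Ioi (1:ℝ)) := by
  have hlt : a - s.re - 1 < -1 := by linarith
  refine ((integrableOn_Ioi_rpow_of_lt hlt one_pos).const_mul B).mono' ?_ ?_
  · exact (hm.mul (by fun_prop)).aestronglyMeasurable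
  · filter_upwards [ae_restrict_mem measurableSet_Ioi] with t ht
    have ht0 : (0:ℝ) < t := lt_trans one_pos ht
    rw [norm_mul, norm_cpow_eq_rpow_re_of_pos ht0]
    have := hb t ht
    calc _ ≤ (B * t ^ a) * t ^ (-(s+1)).re := by gcongr
      _ = B * t ^ (a - s.re - 1) := by
        rw [mul_assoc, ← Real.rpow_add ht0]; congr 2; simp; ring

theorem LSeries_rep {f : ℕ → ℂ} (hf : ∀ n, ‖f n‖ ≤ 1) {s : ℂ} (hs : 1 < s.re) :
    LSeries f s = s * ∫ t in Ioi (1 : ℝ), (∑ k ∈ Finset.Icc 1 ⌊t⌋₊, f k) * t ^ (-(s + 1)) := by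
  refine LSeries_eq_mul_integral' f zero_le_one hs ?_
  refine Asymptotics.isBigO_of_le _ fun n => ?_
  rw [Real.norm_of_nonneg (by positivity), Real.rpow_one, Real.norm_of_nonneg (by positivity)]
  refine (Finset.sum_le_sum (fun x _ => hf _)).trans ?_
  simp

theorem LFunction_rep_one_lt (χ : DirichletCharacter ℂ N) {s : ℂ} (hs : 1 < s.re) :
    χ.LFunction s = s * Jch χ s + kap χ * s / (s - 1) := by
  rw [DirichletCharacter.LFunction_eq_LSeries χ hs,
    LSeries_rep (fun n => χ.norm_le_one n) hs, Jch_eq]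
  have h0 : s - 1 ≠ 0 := by
    intro h; rw [sub_eq_zero] at h; rw [h] at hs; simp at hs
  have h1 : ∀ t : ℝ, (∑ k ∈ Finset.Icc 1 ⌊t⌋₊, χ (k : ZMod N)) * (t:ℂ) ^ (-(s + 1)) =
      Ech χ t * (t:ℂ) ^ (-(s+1)) + (kap χ * t) * (t:ℂ) ^ (-(s+1)) := by
    intro t; unfold Ech; ring
  simp_rw [h1]
  rw [integral_add]
  · rw [mul_add]
    congr 1
    have h2 : ∫ t in Ioi (1:ℝ), (kap χ * t) * (t:ℂ) ^ (-(s+1)) =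
        ∫ t in Ioi (1:ℝ), kap χ * (t:ℂ) ^ (-s) := by
      refine setIntegral_congr_fun measurableSet_Ioi fun t ht => ?_
      have ht0 : (t:ℂ) ≠ 0 := by
        have : (0:ℝ) < t := lt_trans one_pos ht
        exact_mod_cast this.ne'
      rw [mul_assoc]
      congr 1
      rw [neg_add, cpow_add _ _ ht0, cpow_neg_one]
      field_simp
    rw [h2, integral_const_mul, integral_Ioi_cpow_of_lt (by simpa using hs) one_pos]
    have h3 : -s + 1 ≠ 0 := by
      intro h; apply h0; linear_combination -h
    rw [Complex.ofReal_one, one_cpow]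
    field_simp
    ring
  · refine integrable_aux (measurable_Ech χ) (a := 0) (B := 3 * N) (by linarith) fun u hu => ?_
    simpa using norm_Ech_le χ (by linarith)
  · refine integrable_aux (by fun_prop) (a := 1) (B := 1) hs fun u hu => ?_
    rw [norm_mul, Complex.norm_real, Real.rpow_one, Real.norm_of_nonneg (by linarith)]
    gcongr; exact norm_kap_le χ

/-- The entire function `L(s, χ)` for `χ ≠ 1` and `(s - 1) L(s, χ)` for `χ = 1`. Removing the pole
in this way lets trivial and nontrivial characters be treated together. -/
noncomputable def Gch (χ : DirichletCharacter ℂ N) (s : ℂ) : ℂ :=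
  if χ = 1 then DirichletCharacter.LFunctionTrivChar₁ N s else χ.LFunction s

theorem Gch_of_ne (χ : DirichletCharacter ℂ N) (h : χ ≠ 1) : Gch χ = χ.LFunction := by
  ext s; simp [Gch, h]

theorem Gch_one : Gch (1 : DirichletCharacter ℂ N) = DirichletCharacter.LFunctionTrivChar₁ N := by
  ext s; simp [Gch]

theorem differentiable_Gch (χ : DirichletCharacter ℂ N) : Differentiable ℂ (Gch χ) := by
  by_cases h : χ = 1
  · subst h; rw [Gch_one]; exact DirichletCharacter.differentiable_LFunctionTrivChar₁ N
  · rw [Gch_of_ne χ h]; exact DirichletCharacter.differentiable_LFunction h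

/-- The order of the pole of `L(s, χ)` at `s = 1`: `1` for the trivial character, `0` otherwise. -/
noncomputable def dl (χ : DirichletCharacter ℂ N) : ℂ := if χ = 1 then 1 else 0

theorem Gch_eq_mul (χ : DirichletCharacter ℂ N) {s : ℂ} (hs : s ≠ 1) :
    Gch χ s = (if χ = 1 then s - 1 else 1) * χ.LFunction s := by
  by_cases h : χ = 1
  · subst h; rw [Gch_one, if_pos rfl, DirichletCharacter.LFunctionTrivChar₁,
      Function.update_of_ne hs]
  · rw [Gch_of_ne χ h, if_neg h, one_mul]

/-- Partial summation represents `Gch χ` through `Jch χ`; the identity extends from `Re s > 1` to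
`Re s > 0` by analytic continuation. -/
theorem Gch_rep (χ : DirichletCharacter ℂ N) {s : ℂ} (hs : 0 < s.re) :
    Gch χ s = (if χ = 1 then s - 1 else 1) * s * Jch χ s + kap χ * s := by
  let U : Set ℂ := {s | 0 < s.re}
  have hU : IsOpen U := isOpen_lt continuous_const continuous_re
  have hUc : Convex ℝ U := convex_halfSpace_re_gt 0
  have hA : AnalyticOnNhd ℂ (Gch χ) U :=
    ((differentiable_Gch χ).differentiableOn).analyticOnNhd hU
  have hB : AnalyticOnNhd ℂ (fun s => (if χ = 1 then s - 1 else 1) * s * Jch χ s + kap χ * s) U := by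
    refine DifferentiableOn.analyticOnNhd (fun s hs => ?_) hU
    have := differentiableAt_Jch χ hs
    refine DifferentiableAt.differentiableWithinAt ?_
    split_ifs <;> fun_prop
  refine hA.eqOn_of_preconnected_of_eventuallyEq hB hUc.isPreconnected (z₀ := 2)
    (by simp [U]) ?_ hs
  have hV : IsOpen {s : ℂ | 1 < s.re} := isOpen_lt continuous_const continuous_re
  filter_upwards [hV.mem_nhds (show (2:ℂ) ∈ {s : ℂ | 1 < s.re} by simp)] with s hs
  have h0 : s ≠ 1 := by
    rintro rfl; simp at hs
  have h1 : s - 1 ≠ 0 := sub_ne_zero.2 h0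
  rw [Gch_eq_mul χ h0, LFunction_rep_one_lt χ hs]
  by_cases h : χ = 1
  · simp only [h, if_true]; field_simp
  · simp [h, kap]

theorem norm_Jch_le (χ : DirichletCharacter ℂ N) {s : ℂ} (hs : 0 < s.re) :
    ‖Jch χ s‖ ≤ 3 * N / s.re := by
  rw [Jch_eq]
  have := norm_int_le (h := Ech χ) (a := 0) (B := 3 * N) hs (fun u hu => by
    simpa using norm_Ech_le χ (by linarith))
  simpa using this

/-- Polynomial growth of `L(s, χ)`, normalised to be entire, in the half-plane `Re s ≥ 1/2`. -/
theorem norm_Gch_le (χ : DirichletCharacter ℂ N) {s : ℂ} (hs : 1 / 2 ≤ s.re) :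
    ‖Gch χ s‖ ≤ 7 * N * (‖s‖ + 2) ^ 2 := by
  rw [Gch_rep χ (by linarith)]
  have h1 := norm_Jch_le χ (s := s) (by linarith)
  have h2 : ‖Jch χ s‖ ≤ 6 * N := by
    refine h1.trans ?_
    rw [div_le_iff₀ (by linarith)]
    nlinarith [Nr_pos (N := N)]
  have h3 : ‖(if χ = 1 then s - 1 else 1 : ℂ)‖ ≤ ‖s‖ + 1 := by
    split_ifs
    · simpa using norm_sub_le s 1
    · simp
  calc _ ≤ ‖(if χ = 1 then s - 1 else 1 : ℂ)‖ * ‖s‖ * ‖Jch χ s‖ + ‖kap χ‖ * ‖s‖ := by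
        refine (norm_add_le _ _).trans ?_
        rw [norm_mul, norm_mul, norm_mul]
    _ ≤ (‖s‖ + 1) * ‖s‖ * (6 * N) + 1 * ‖s‖ := by gcongr; exact norm_kap_le χ
    _ ≤ _ := by nlinarith [Nr_pos (N := N), norm_nonneg s, mul_nonneg (norm_nonneg s) (norm_nonneg s)]

/-- `∑ n^{-σ} ≤ σ / (σ - 1)`, with the sum written as the series of norms of the terms of `ζ(σ)`. -/
theorem zeta_bound {σ : ℝ} (hσ : 1 < σ) :
    Summable (fun n : ℕ => ‖LSeries.term 1 (σ:ℂ) n‖) ∧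
      ∑' n : ℕ, ‖LSeries.term 1 (σ:ℂ) n‖ ≤ σ / (σ - 1) := by
  have hs : LSeriesSummable 1 (σ:ℂ) := LSeriesSummable_one_iff.2 (by simpa using hσ)
  refine ⟨hs.norm, ?_⟩
  have h1 : LSeries 1 (σ:ℂ) = ((∑' n : ℕ, ‖LSeries.term 1 (σ:ℂ) n‖ : ℝ) : ℂ) := by
    rw [LSeries, Complex.ofReal_tsum]
    congr 1
    ext n
    rcases eq_or_ne n 0 with rfl | hn
    · simp
    · have hn' : (0:ℝ) < n := by exact_mod_cast Nat.pos_of_ne_zero hn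
      rw [LSeries.norm_term_eq, LSeries.term_of_ne_zero hn]
      simp only [hn, if_false]
      simp
      rw [Complex.ofReal_cpow hn'.le]
      simp
  have h2 := LSeries_rep (f := 1) (by simp) (s := (σ:ℂ)) (by simpa using hσ)
  have h3 := norm_int_le (h := fun t => ∑ k ∈ Finset.Icc 1 ⌊t⌋₊, (1 : ℕ → ℂ) k) (a := 1) (B := 1)
    (s := (σ:ℂ)) (by simpa using hσ) (fun u hu => by
      simp
      exact Nat.floor_le (by linarith))
  have h4 : ‖LSeries 1 (σ:ℂ)‖ ≤ σ * (1 / (σ - 1)) := by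
    rw [h2, norm_mul, Complex.norm_real, Real.norm_of_nonneg (by linarith)]
    simp only [ofReal_re] at h3
    gcongr
  rw [h1, Complex.norm_real, Real.norm_of_nonneg (tsum_nonneg fun _ => norm_nonneg _)] at h4
  calc _ ≤ _ := h4
    _ = _ := by ring

theorem norm_LSeries_le {f : ℕ → ℂ} (hf : ∀ n, ‖f n‖ ≤ 1) {s : ℂ} (hs : 1 < s.re) :
    ‖LSeries f s‖ ≤ s.re / (s.re - 1) := by
  obtain ⟨h1, h2⟩ := zeta_bound hs
  refine le_trans ?_ h2
  refine tsum_of_norm_bounded h1.hasSum fun n => ?_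
  rw [LSeries.norm_term_eq, LSeries.norm_term_eq]
  split_ifs
  · rfl
  · simp only [ofReal_re]
    gcongr
    simpa using hf n

/-- A lower bound just to the right of `Re s = 1`, from `L(s, χ) · ∑ μ(n) χ(n) n^{-s} = 1`. -/
theorem norm_Gch_ge (χ : DirichletCharacter ℂ N) {s : ℂ} (hs : 1 < s.re) (hs2 : s.re ≤ 2) :
    (s.re - 1) ^ 2 / 2 ≤ ‖Gch χ s‖ := by
  have h0 : s ≠ 1 := by rintro rfl; simp at hs
  have h1 := DirichletCharacter.LSeries.mul_mu_eq_one χ hs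
  rw [← DirichletCharacter.LFunction_eq_LSeries χ hs] at h1
  have h2 := norm_LSeries_le (f := (fun n : ℕ => χ n) * fun n : ℕ => ((ArithmeticFunction.moebius n : ℤ) : ℂ))
    (fun n => by
      simp only [Pi.mul_apply, norm_mul]
      refine mul_le_one₀ (χ.norm_le_one _) (norm_nonneg _) ?_
      rw [Complex.norm_intCast]
      exact_mod_cast ArithmeticFunction.abs_moebius_le_one) hs
  have h3 := congrArg norm h1
  rw [norm_mul, norm_one] at h3
  have h4 : (s.re - 1) / 2 ≤ ‖χ.LFunction s‖ := by
    have h5 : 1 ≤ ‖χ.LFunction s‖ * (s.re / (s.re - 1)) := by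
      exact h3.symm.le.trans (by gcongr)
    rw [mul_div_assoc', le_div_iff₀ (by linarith)] at h5
    nlinarith [norm_nonneg (χ.LFunction s)]
  rw [Gch_eq_mul χ h0, norm_mul]
  have h6 : s.re - 1 ≤ ‖(if χ = 1 then s - 1 else 1 : ℂ)‖ := by
    split_ifs
    · exact le_trans (le_of_eq (by simp)) (Complex.re_le_norm _)
    · rw [norm_one]; linarith
  calc (s.re - 1) ^ 2 / 2 = (s.re - 1) * ((s.re - 1) / 2) := by ring
    _ ≤ _ := by gcongr

/-- `∑ χ(n) Λ(n) n^{-s}` is minus the logarithmic derivative of `Gch χ`, up to the pole at `1`. -/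
theorem logDeriv_Gch (χ : DirichletCharacter ℂ N) {s : ℂ} (hs : 1 < s.re) :
    LSeries ((fun n : ℕ => χ n) * fun n : ℕ => ((ArithmeticFunction.vonMangoldt n : ℝ) : ℂ)) s =
      - (deriv (Gch χ) s / Gch χ s) + dl χ / (s - 1) := by
  have h0 : s ≠ 1 := by rintro rfl; simp at hs
  have h1 : s - 1 ≠ 0 := sub_ne_zero.2 h0
  rw [DirichletCharacter.LSeries_twist_vonMangoldt_eq χ hs]
  have hL : LSeries (fun n : ℕ => χ n) =ᶠ[nhds s] χ.LFunction := by
    have hV : IsOpen {s : ℂ | 1 < s.re} := isOpen_lt continuous_const continuous_re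
    filter_upwards [hV.mem_nhds hs] with w hw
    rw [DirichletCharacter.LFunction_eq_LSeries χ hw]
  rw [hL.deriv_eq, hL.self_of_nhds]
  have hne : χ.LFunction s ≠ 0 := by
    refine DirichletCharacter.LFunction_ne_zero_of_one_le_re χ (Or.inr h0) hs.le
  by_cases h : χ = 1
  · subst h
    rw [Gch_one, DirichletCharacter.deriv_LFunctionTrivChar₁_apply_of_ne_one N h0]
    have : DirichletCharacter.LFunctionTrivChar₁ N s =
        (s - 1) * DirichletCharacter.LFunctionTrivChar N s := Function.update_of_ne h0 _ _
    rw [this]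
    have hne' : DirichletCharacter.LFunctionTrivChar N s ≠ 0 := hne
    simp only [dl, if_true]
    change -deriv (DirichletCharacter.LFunctionTrivChar N) s / DirichletCharacter.LFunctionTrivChar N s = _
    field_simp
    ring
  · rw [Gch_of_ne χ h]; simp [dl, h]; ring

theorem Gch_ne_zero (χ : DirichletCharacter ℂ N) {s : ℂ} (hs : 1 ≤ s.re) : Gch χ s ≠ 0 := by
  by_cases h : χ = 1
  · subst h
    rw [Gch_one]
    by_cases h0 : s = 1
    · rw [h0]; exact DirichletCharacter.LFunctionTrivChar₁_apply_one_ne_zero N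
    · rw [DirichletCharacter.LFunctionTrivChar₁, Function.update_of_ne h0]
      exact mul_ne_zero (sub_ne_zero.2 h0)
        (DirichletCharacter.LFunction_ne_zero_of_one_le_re _ (Or.inr h0) hs)
  · rw [Gch_of_ne χ h]
    exact DirichletCharacter.LFunction_ne_zero_of_one_le_re χ (Or.inl h) hs

/-- `∑ Λ(n) n^{-σ} ≤ 1 / (σ - 1) + C`, since `ζ'/ζ` has a simple pole at `1` and is otherwise
bounded on `[1, 2]`. -/
theorem exists_vonMangoldt_bound : ∃ C : ℝ, 0 < C ∧ ∀ σ : ℝ, 1 < σ → σ ≤ 2 →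
    Summable (fun n : ℕ => ArithmeticFunction.vonMangoldt n * (n:ℝ) ^ (-σ)) ∧
    ∑' n : ℕ, ArithmeticFunction.vonMangoldt n * (n:ℝ) ^ (-σ) ≤ 1 / (σ - 1) + C := by
  have hc : ContinuousOn (fun s => deriv (Gch (1 : DirichletCharacter ℂ 1)) s /
      Gch (1 : DirichletCharacter ℂ 1) s) ((fun x : ℝ => (x:ℂ)) '' Icc 1 2) := by
    refine ContinuousOn.div ?_ (differentiable_Gch _).continuous.continuousOn ?_
    · exact ((differentiable_Gch _).contDiff (n := 1)).continuous_deriv le_rfl |>.continuousOn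
    · rintro _ ⟨x, hx, rfl⟩
      exact Gch_ne_zero _ (by simpa using hx.1)
  obtain ⟨C, hC⟩ := (isCompact_Icc.image continuous_ofReal).exists_bound_of_continuousOn hc
  refine ⟨|C| + 1, by positivity, fun σ h1 h2 => ?_⟩
  have hs : 1 < (σ:ℂ).re := by simpa using h1
  have hterm : ∀ n : ℕ, LSeries.term ((fun n : ℕ => (1 : DirichletCharacter ℂ 1) n) *
      fun n : ℕ => ((ArithmeticFunction.vonMangoldt n : ℝ) : ℂ)) (σ:ℂ) n =
      ((ArithmeticFunction.vonMangoldt n * (n:ℝ) ^ (-σ) : ℝ) : ℂ) := by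
    intro n
    rcases eq_or_ne n 0 with rfl | hn
    · simp
    · rw [LSeries.term_of_ne_zero hn]
      have : ((1 : DirichletCharacter ℂ 1) (n : ZMod 1)) = 1 := by
        rw [MulChar.one_apply]; exact isUnit_of_subsingleton _
      simp only [Pi.mul_apply, this, one_mul]
      rw [ofReal_mul, Complex.ofReal_cpow (Nat.cast_nonneg n)]
      simp [cpow_neg, div_eq_mul_inv]
  have hsum := DirichletCharacter.LSeriesSummable_twist_vonMangoldt (1 : DirichletCharacter ℂ 1) hs
  have hS : Summable (fun n : ℕ => ArithmeticFunction.vonMangoldt n * (n:ℝ) ^ (-σ)) := by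
    rw [← Complex.summable_ofReal]
    refine hsum.congr fun n => (hterm n)
  refine ⟨hS, ?_⟩
  have h3 := logDeriv_Gch (1 : DirichletCharacter ℂ 1) hs
  have h4 : LSeries ((fun n : ℕ => (1 : DirichletCharacter ℂ 1) n) *
      fun n : ℕ => ((ArithmeticFunction.vonMangoldt n : ℝ) : ℂ)) (σ:ℂ) =
      ((∑' n : ℕ, ArithmeticFunction.vonMangoldt n * (n:ℝ) ^ (-σ) : ℝ) : ℂ) := by
    rw [LSeries, Complex.ofReal_tsum]
    exact tsum_congr hterm
  rw [h4] at h3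
  have h5 := hC (σ:ℂ) ⟨σ, ⟨h1.le, h2⟩, rfl⟩
  have h6 := congrArg Complex.re h3
  simp only [dl, if_true, add_re, neg_re, ofReal_re] at h6
  rw [h6]
  have h7 : (1 / ((σ:ℂ) - 1)).re = 1 / (σ - 1) := by
    rw [show (1 / ((σ:ℂ) - 1)) = ((1 / (σ - 1) : ℝ) : ℂ) by push_cast; ring, ofReal_re]
  rw [h7]
  have h8 := (abs_le.1 ((abs_re_le_norm _).trans h5)).1
  linarith [le_abs_self C]

/-- Near `s = 1` a nontrivial `L(s, χ)` is at most a small power of the modulus. The bound comes from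
interpolating between the trivial bound `u` and the periodicity bound `3 N` for the character sums
in the Mellin integral. -/
theorem norm_LFunction_near_one_le (χ : DirichletCharacter ℂ N) (hχ : χ ≠ 1) {η : ℝ} (hη : 0 < η)
    (hη2 : η ≤ 1 / 4) {s : ℂ} (hs : ‖s - 1‖ ≤ η) :
    ‖χ.LFunction s‖ ≤ 6 / η * (N:ℝ) ^ (2 * η) := by
  have hre : 1 - η ≤ s.re := by
    have := (abs_le.1 ((abs_re_le_norm _).trans hs)).1
    simp at this; linarith
  have hns : ‖s‖ ≤ 5/4 := by
    have := norm_add_le (s - 1) 1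
    simp at this; linarith
  have hN := Nr_pos (N := N)
  have h1 := Gch_rep χ (s := s) (by linarith)
  rw [Gch_of_ne χ hχ] at h1
  simp only [hχ, if_false, kap, one_mul, zero_mul, add_zero] at h1
  rw [h1, norm_mul, Jch_eq]
  have hInt := norm_int_le (h := Ech χ) (a := 1 - 2 * η) (B := (3 * N : ℝ) ^ (2 * η)) (s := s)
    (by linarith) (fun u hu => by
      have hb1 := norm_Ech_le χ (u := u) (by linarith)
      have hb2 : ‖Ech χ u‖ ≤ u := by
        unfold Ech
        simp only [kap, hχ, if_false, zero_mul, sub_zero]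
        refine (norm_sum_le _ _).trans ?_
        refine (Finset.sum_le_sum (fun x _ => χ.norm_le_one _)).trans ?_
        simp
        exact Nat.floor_le (by linarith)
      rcases (norm_nonneg (Ech χ u)).eq_or_lt with h | h
      · rw [← h]; have : (0:ℝ) < u := by linarith
        positivity
      · calc ‖Ech χ u‖ = ‖Ech χ u‖ ^ (2 * η) * ‖Ech χ u‖ ^ (1 - 2 * η) := by
              rw [← Real.rpow_add h]; simp
          _ ≤ _ := by gcongr; linarith)
  have h3 : (3 * N : ℝ) ^ (2 * η) / (s.re - (1 - 2 * η)) ≤ 3 * (N:ℝ) ^ (2 * η) / η := by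
    rw [Real.mul_rpow (by norm_num) (by linarith)]
    have : (3:ℝ) ^ (2 * η) ≤ 3 ^ (1:ℝ) := by
      apply Real.rpow_le_rpow_of_exponent_le <;> linarith
    rw [Real.rpow_one] at this
    gcongr
    linarith
  calc _ ≤ (5/4) * (3 * (N:ℝ) ^ (2 * η) / η) := by gcongr; exact hInt.trans h3
    _ ≤ _ := by
      rw [div_mul_eq_mul_div 6, le_div_iff₀ hη, mul_assoc, div_mul_cancel₀ _ hη.ne']
      nlinarith [Real.rpow_nonneg (by linarith : (0:ℝ) ≤ N) (2 * η)]

end SW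

/-! ### The zero-free region -/

namespace SW
open Complex Metric MeasureTheory Set

variable {N : ℕ} [NeZero N]

/-- von Mangoldt coefficients twisted by `χ`. -/
noncomputable def cL (χ : DirichletCharacter ℂ N) : ℕ → ℂ :=
  (fun n : ℕ => χ n) * fun n : ℕ => ((ArithmeticFunction.vonMangoldt n : ℝ) : ℂ)

/-- The Dirichlet series `-ζ'/ζ` at a real point `σ > 1`. -/
noncomputable def AL (σ : ℝ) : ℝ := ∑' n : ℕ, ArithmeticFunction.vonMangoldt n * (n:ℝ) ^ (-σ)

theorem cL_term (χ : DirichletCharacter ℂ N) (σ t : ℝ) (n : ℕ) :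
    LSeries.term (cL χ) (σ + t * I) n =
      ((ArithmeticFunction.vonMangoldt n * (n:ℝ) ^ (-σ) : ℝ) : ℂ) * (χ n * (n:ℂ) ^ (-(t * I))) := by
  rcases eq_or_ne n 0 with rfl | hn
  · simp
  · rw [LSeries.term_of_ne_zero hn]
    have hn' : (n:ℂ) ≠ 0 := by exact_mod_cast hn
    rw [ofReal_mul, Complex.ofReal_cpow (Nat.cast_nonneg n), div_eq_mul_inv, ← cpow_neg, neg_add,
      cpow_add _ _ hn']
    simp only [cL, Pi.mul_apply, ofReal_neg, ofReal_natCast]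
    ring

theorem norm_z_le (χ : DirichletCharacter ℂ N) (t : ℝ) {n : ℕ} (hn : n ≠ 0) :
    ‖χ n * (n:ℂ) ^ (-(t * I))‖ ≤ 1 := by
  have hn' : (0:ℝ) < n := by exact_mod_cast Nat.pos_of_ne_zero hn
  rw [norm_mul, ← ofReal_natCast, norm_cpow_eq_rpow_re_of_pos hn']
  simpa using χ.norm_le_one _

theorem three_four_one_aux {z : ℂ} (hz : ‖z‖ ≤ 1) : 0 ≤ 3 + 4 * z.re + (z ^ 2).re := by
  have h1 : z.re ^ 2 + z.im ^ 2 ≤ 1 := by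
    have := Complex.sq_norm z
    rw [normSq_apply] at this
    nlinarith [norm_nonneg z]
  rw [pow_two, mul_re]
  nlinarith [sq_nonneg (1 + z.re)]

theorem cL_summable (χ : DirichletCharacter ℂ N) {s : ℂ} (hs : 1 < s.re) :
    LSeriesSummable (cL χ) s :=
  DirichletCharacter.LSeriesSummable_twist_vonMangoldt χ hs

theorem AL_summable {σ : ℝ} (h : 1 < σ) :
    Summable (fun n : ℕ => ArithmeticFunction.vonMangoldt n * (n:ℝ) ^ (-σ)) := by
  have hs : 1 < (σ:ℂ).re := by simpa using h
  have hsum := (cL_summable (1 : DirichletCharacter ℂ 1) hs)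
  rw [← Complex.summable_ofReal]
  refine hsum.congr fun n => ?_
  have := cL_term (1 : DirichletCharacter ℂ 1) σ 0 n
  simp only [ofReal_zero, zero_mul, add_zero, neg_zero, cpow_zero, mul_one] at this
  rw [this]
  have : ((1 : DirichletCharacter ℂ 1) (n : ZMod 1)) = 1 := by
    rw [MulChar.one_apply]; exact isUnit_of_subsingleton _
  rw [this, mul_one]

theorem norm_cL_le (χ : DirichletCharacter ℂ N) {s : ℂ} (hs : 1 < s.re) :
    ‖LSeries (cL χ) s‖ ≤ AL s.re := by
  refine tsum_of_norm_bounded (AL_summable hs).hasSum fun n => ?_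
  rcases eq_or_ne n 0 with rfl | hn
  · simp
  have := cL_term χ s.re s.im n
  rw [re_add_im] at this
  rw [this, norm_mul, Complex.norm_real, Real.norm_of_nonneg]
  · exact mul_le_of_le_one_right (mul_nonneg ArithmeticFunction.vonMangoldt_nonneg (by positivity))
      (norm_z_le χ s.im hn)
  · exact mul_nonneg ArithmeticFunction.vonMangoldt_nonneg (by positivity)

/-- The `3 + 4 cos θ + cos 2θ ≥ 0` inequality, summed against `Λ(n) n^{-σ}`. -/
theorem three_four_one (χ : DirichletCharacter ℂ N) {σ : ℝ} (hσ : 1 < σ) (t : ℝ) :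
    0 ≤ 3 * AL σ + 4 * (LSeries (cL χ) (σ + t * I)).re +
      (LSeries (cL (χ ^ 2)) (σ + (2 * t : ℝ) * I)).re := by
  have h1 : 1 < ((σ:ℂ) + t * I).re := by simpa using hσ
  have h2 : 1 < ((σ:ℂ) + (2 * t : ℝ) * I).re := by simpa using hσ
  have s0 := (AL_summable hσ).hasSum
  have s1 := Complex.hasSum_re (cL_summable χ h1).LSeriesHasSum
  have s2 := Complex.hasSum_re (cL_summable (χ ^ 2) h2).LSeriesHasSum
  have := ((s0.mul_left 3).add (s1.mul_left 4)).add s2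
  refine this.nonneg fun n => ?_
  rw [cL_term, cL_term, re_ofReal_mul, re_ofReal_mul]
  rcases eq_or_ne n 0 with rfl | hn
  · simp
  have hn' : (n:ℂ) ≠ 0 := by exact_mod_cast hn
  have hz : (χ ^ 2) n * (n:ℂ) ^ (-((2 * t : ℝ) * I)) = (χ n * (n:ℂ) ^ (-(t * I))) ^ 2 := by
    rw [mul_pow, ← cpow_nat_mul, MulChar.pow_apply' _ (by norm_num)]
    congr 2; push_cast; ring
  rw [hz]
  have h3 := three_four_one_aux (norm_z_le χ t hn)
  have h4 : 0 ≤ ArithmeticFunction.vonMangoldt n * (n:ℝ) ^ (-σ) :=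
    mul_nonneg ArithmeticFunction.vonMangoldt_nonneg (by positivity)
  nlinarith [mul_nonneg h4 h3]

/-- The growth hypothesis of Landau's lemma for `Gch χ` about a point slightly to the right of the
line `Re s = 1`. Here `l` bounds the logarithms of the conductor and of the height. -/
theorem ratio_bound (χ : DirichletCharacter ℂ N) {l d δ t : ℝ} (hl : 1 ≤ l) (hd : 0 < d) (hd1 : d ≤ 1)
    (hN : (N:ℝ) ≤ Real.exp l) (hδ : d ^ 2 / (10 * l) ≤ δ) (hδ1 : δ ≤ 1) (ht : |t| ≤ 2 * Real.exp l)
    {c : ℂ} (hc : c = (1 + δ : ℝ) + t * I) {z : ℂ} (hz : ‖z - c‖ ≤ 1 / 2) :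
    ‖Gch χ z‖ ≤ Real.exp (21 * l / d) * ‖Gch χ c‖ := by
  have hE : 1 + l ≤ Real.exp l := by linarith [Real.add_one_le_exp l]
  have hδ0 : 0 < δ := lt_of_lt_of_le (by positivity) hδ
  have hcre : c.re = 1 + δ := by rw [hc]; simp
  have hcim : c.im = t := by rw [hc]; simp
  have hzre : 1 / 2 ≤ z.re := by
    have := (abs_le.1 ((abs_re_le_norm _).trans hz)).1
    rw [sub_re, hcre] at this; linarith
  have hznorm : ‖z‖ ≤ 5/2 + 2 * Real.exp l := by
    have h1 := norm_add_le (z - c) c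
    have h2 := Complex.norm_le_abs_re_add_abs_im c
    rw [hcre, hcim, abs_of_pos (by linarith)] at h2
    simp only [sub_add_cancel] at h1
    linarith
  have hup := norm_Gch_le χ hzre
  have hlow := norm_Gch_ge χ (s := c) (by rw [hcre]; linarith) (by rw [hcre]; linarith)
  rw [hcre] at hlow
  set E := Real.exp l with hEdef
  have hE0 : 0 < E := Real.exp_pos l
  have h1 : ‖Gch χ z‖ ≤ 7 * E * (5 * E) ^ 2 := by
    refine hup.trans ?_
    gcongr
    linarith
  have h2 : (d ^ 2 / (10 * l)) ^ 2 / 2 ≤ ‖Gch χ c‖ := by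
    refine le_trans ?_ hlow
    gcongr
    linarith
  have h3 : (1 / d) ^ 4 ≤ Real.exp (4 * l / d) := by
    have : 1 / d ≤ Real.exp (l / d) := by
      have h5 := Real.add_one_le_exp (l / d)
      have h6 : 1 / d ≤ l / d := by gcongr
      linarith
    calc (1/d)^4 ≤ (Real.exp (l/d))^4 := by gcongr
      _ = _ := by rw [← Real.exp_nat_mul]; congr 1; push_cast; ring
  have h4 : (35000 : ℝ) ≤ Real.exp (11 * l) := by
    have h5 : (2.7:ℝ) ≤ Real.exp 1 := by linarith [Real.exp_one_gt_d9]
    have h6 : Real.exp (11 * 1) ≤ Real.exp (11 * l) := by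
      apply Real.exp_le_exp.2; linarith
    refine le_trans ?_ h6
    have : Real.exp (11 * 1) = Real.exp 1 ^ 11 := by rw [← Real.exp_nat_mul]; norm_num
    rw [this]
    calc (35000:ℝ) ≤ 2.7 ^ 11 := by norm_num
      _ ≤ _ := by gcongr
  have h5 : Real.exp (11 * l) * E ^ 5 * Real.exp (4 * l / d) ≤ Real.exp (21 * l / d) := by
    rw [hEdef, ← Real.exp_nat_mul, ← Real.exp_add, ← Real.exp_add]
    apply Real.exp_le_exp.2
    have : l ≤ l / d := by rw [le_div_iff₀ hd]; nlinarith
    have h7 : 21 * l / d = 21 * (l / d) := by ring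
    have h8 : 4 * l / d = 4 * (l / d) := by ring
    rw [h7, h8]; push_cast; nlinarith
  have hl2 : l ^ 2 ≤ E ^ 2 := by gcongr; linarith
  calc ‖Gch χ z‖ ≤ 7 * E * (5 * E) ^ 2 := h1
    _ = (35000 * l ^ 2 * (1/d)^4 * E ^ 3) * ((d ^ 2 / (10 * l)) ^ 2 / 2) := by
        field_simp; norm_num
    _ ≤ (Real.exp (11 * l) * E ^ 2 * Real.exp (4 * l / d) * E ^ 3) * ‖Gch χ c‖ := by gcongr
    _ = (Real.exp (11 * l) * E ^ 5 * Real.exp (4 * l / d)) * ‖Gch χ c‖ := by ring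
    _ ≤ _ := by gcongr

theorem re_inv_bound {δ γ : ℝ} (hδ : 0 < δ) (k : ℝ) (hk : 0 ≤ k) (hγ : k * δ ≤ |γ|) :
    (1 / (((1 + δ : ℝ) : ℂ) + γ * I - 1)).re ≤ 1 / ((1 + k^2) * δ) := by
  have h1 : ((1 + δ : ℝ) : ℂ) + γ * I - 1 = (δ : ℂ) + γ * I := by push_cast; ring
  have h2 : k^2 * δ^2 ≤ γ^2 := by
    rw [← mul_pow, ← sq_abs γ]; gcongr
  have h3 : (1 / ((δ : ℂ) + γ * I)).re = δ / (δ * δ + γ * γ) := by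
    rw [one_div, inv_re, normSq_apply]; simp
  rw [h1, h3, div_le_div_iff₀ (by nlinarith [sq_nonneg γ]) (by positivity)]
  nlinarith

/-- `Gch χ` has no zero `ρ` with `Re ρ ≥ 1 - d² / (5 l)` and height at most `e^l`, where `N ≤ e^l`:
such a zero contradicts the `3-4-1` inequality at `1 + d²/l + i Im ρ` and `1 + d²/l + 2 i Im ρ` in view
of Landau's lemma. The pole coming from `χ² = 1` is harmful only for small `Im ρ`, and the
hypothesis `hS` excludes zeros there. -/
theorem no_zero {C : ℝ} (hC : ∀ σ : ℝ, 1 < σ → σ ≤ 2 → AL σ ≤ 1 / (σ - 1) + C)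
    (hC0 : 0 < C) {c₃ d l : ℝ}
    (hd : 0 < d) (hd1 : d ≤ 1) (hdK : 33264 * d ≤ 1 / 100) (hdC : 3 * C * d ^ 2 ≤ 1 / 100)
    (hdc : 11 * d ^ 2 ≤ c₃) (hl : 1 ≤ l)
    (χ : DirichletCharacter ℂ N) (hN : (N:ℝ) ≤ Real.exp l)
    (hS : χ ^ 2 = 1 → ∀ s : ℂ, ‖s - 1‖ ≤ c₃ / l → Gch χ s ≠ 0)
    {ρ : ℂ} (hρ : 1 - (d ^ 2 / l) / 5 ≤ ρ.re) (hρi : |ρ.im| ≤ Real.exp l) : Gch χ ρ ≠ 0 := by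
  intro hz
  set δ := d ^ 2 / l with hδdef
  have hδ0 : 0 < δ := by positivity
  have hd2 : d ^ 2 ≤ 1 / 10 := by nlinarith
  have hδd : δ ≤ d ^ 2 := div_le_self (by positivity) hl
  have hδ1 : δ ≤ 1 / 10 := by linarith
  have hzlt : ∀ (χ : DirichletCharacter ℂ N) (z : ℂ), Gch χ z = 0 → z.re < 1 := by
    intro χ z h
    by_contra hlt
    exact Gch_ne_zero χ (not_lt.1 hlt) h
  set γ := ρ.im
  have hδl : d ^ 2 / (10 * l) ≤ δ := by
    rw [hδdef]; gcongr; linarith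
  have hM : 0 < 21 * l / d := by positivity
  have hKd : 792 * (21 * l / d) / (1 / 2) ≤ (1 / 100) / δ := by
    rw [hδdef]
    have : 792 * (21 * l / d) / (1 / 2) = (33264 * d) * l / d ^ 2 := by field_simp; norm_num
    rw [this, div_div_eq_mul_div]
    gcongr
  obtain ⟨-, L1⟩ := landau (f := Gch χ) (c := ((1 + δ : ℝ) : ℂ) + γ * I) (r := 1/2) (by norm_num) hM
    (differentiable_Gch χ) (fun z hz => ratio_bound χ hl hd hd1 hN hδl (by linarith)
      (by have := Real.exp_pos l; linarith) rfl hz)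
    (fun z hz => by have := hzlt χ z hz; simp; linarith)
  obtain ⟨L2, -⟩ := landau (f := Gch (χ ^ 2)) (c := ((1 + δ : ℝ) : ℂ) + (2 * γ : ℝ) * I) (r := 1/2)
    (by norm_num) hM
    (differentiable_Gch _) (fun z hz => ratio_bound _ hl hd hd1 hN hδl (by linarith)
      (by rw [abs_mul, abs_two]; linarith) rfl hz)
    (fun z hz => by have := hzlt _ z hz; simp; linarith)
  have hsub : ((1 + δ : ℝ) : ℂ) + γ * I - ρ = ((1 + δ - ρ.re : ℝ) : ℂ) := by
    apply Complex.ext <;> simp [γ]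
  have hρ1 := hzlt χ ρ hz
  have L3 := L1 ρ (by
    rw [← norm_neg, neg_sub, hsub, Complex.norm_real, Real.norm_of_nonneg (by linarith)]
    linarith) hz
  have hsub2 : (1 / (((1 + δ : ℝ) : ℂ) + γ * I - ρ)).re = 1 / (1 + δ - ρ.re) := by
    rw [hsub, ← ofReal_one, ← ofReal_div, ofReal_re]
  rw [hsub2] at L3
  have hmain : (5 / 6) / δ ≤ 1 / (1 + δ - ρ.re) := by
    rw [div_le_div_iff₀ hδ0 (by linarith)]
    linarith
  have h341 := three_four_one χ (σ := 1 + δ) (by linarith) γ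
  have hA := hC (1 + δ) (by linarith) (by linarith)
  rw [add_sub_cancel_left] at hA
  have e1 := logDeriv_Gch χ (s := ((1 + δ : ℝ) : ℂ) + γ * I) (by simp; linarith)
  have e2 := logDeriv_Gch (χ ^ 2) (s := ((1 + δ : ℝ) : ℂ) + (2 * γ : ℝ) * I) (by simp; linarith)
  change LSeries (cL χ) _ = _ at e1
  change LSeries (cL (χ ^ 2)) _ = _ at e2
  rw [e1, e2] at h341
  simp only [add_re, neg_re] at h341
  have hCδ : 3 * C ≤ (1 / 100) / δ := by
    rw [le_div_iff₀ hδ0]; nlinarith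
  -- the poles at `1` contribute little: either `χ² ≠ 1`, or `Im ρ` is large compared with `δ`
  have hpole : 4 * (dl χ / (((1 + δ : ℝ) : ℂ) + γ * I - 1)).re +
      (dl (χ ^ 2) / (((1 + δ : ℝ) : ℂ) + (2 * γ : ℝ) * I - 1)).re ≤ (1 / 10) / δ := by
    by_cases h2 : χ ^ 2 = 1
    · have hγ : 10 * δ ≤ |γ| := by
        by_contra hlt
        push Not at hlt
        refine hS h2 ρ ?_ hz
        have h5 := Complex.norm_le_abs_re_add_abs_im (ρ - 1)
        have h6 : |(ρ - 1).re| ≤ δ / 5 := by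
          rw [sub_re, one_re, abs_le]; constructor <;> linarith
        have h7 : (ρ - 1).im = γ := by simp [γ]
        rw [h7] at h5
        have h8 : 11 * δ ≤ c₃ / l := by
          rw [hδdef, mul_div_assoc']; gcongr
        linarith
      have h3 := re_inv_bound hδ0 10 (by norm_num) hγ
      have h4 := re_inv_bound (γ := 2 * γ) hδ0 20 (by norm_num) (by rw [abs_mul, abs_two]; linarith)
      have p1 : (dl χ / (((1 + δ : ℝ) : ℂ) + γ * I - 1)).re ≤ 1 / ((1 + 10^2) * δ) := by
        unfold dl
        split_ifs
        · exact h3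
        · simp; positivity
      have p2 : (dl (χ ^ 2) / (((1 + δ : ℝ) : ℂ) + (2 * γ : ℝ) * I - 1)).re ≤ 1 / ((1 + 20^2) * δ) := by
        unfold dl
        rw [if_pos h2]
        exact h4
      have p3 : 1 / ((1 + 10^2) * δ) = (1 / 101) / δ := by field_simp; norm_num
      have p4 : 1 / ((1 + 20^2) * δ) = (1 / 401) / δ := by field_simp; norm_num
      rw [p3] at p1; rw [p4] at p2
      have p5 : (1 / 10) / δ = (1 / 10) * (1 / δ) := by ring
      have p6 : (1 / 101) / δ = (1 / 101) * (1 / δ) := by ring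
      have p7 : (1 / 401) / δ = (1 / 401) * (1 / δ) := by ring
      rw [p6] at p1; rw [p7] at p2; rw [p5]
      have : 0 < 1 / δ := by positivity
      linarith
    · have h3 : χ ≠ 1 := by rintro rfl; simp at h2
      simp only [dl, h2, h3, if_false, zero_div, zero_re, mul_zero, add_zero]
      positivity
  have q1 : (1 / 10) / δ = (1 / 10) * (1 / δ) := by ring
  have q2 : (1 / 100) / δ = (1 / 100) * (1 / δ) := by ring
  have q3 : (5 / 6) / δ = (5 / 6) * (1 / δ) := by ring
  rw [q1] at hpole
  rw [q2] at hCδ hKd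
  rw [q3] at hmain
  have : 0 < 1 / δ := by positivity
  linarith

/-- The zero-free region together with a bound for the logarithmic derivative in it, for a
modulus `N ≤ e^l` and heights below `e^l - 1`, conditional on real characters having no zero
within `c₃ / l` of `1`. -/
theorem zero_free {c₃ : ℝ} (hc₃ : 0 < c₃) : ∃ δ₀ : ℝ, 0 < δ₀ ∧ δ₀ ≤ 1 / 4 ∧ ∃ B : ℝ, 0 < B ∧
    ∀ (N : ℕ) [NeZero N] (χ : DirichletCharacter ℂ N) (l : ℝ), 1 ≤ l → (N:ℝ) ≤ Real.exp l →
      (χ ^ 2 = 1 → ∀ s : ℂ, ‖s - 1‖ ≤ c₃ / l → Gch χ s ≠ 0) →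
      ∀ s : ℂ, 1 - δ₀ / l ≤ s.re → s.re ≤ 2 → |s.im| ≤ Real.exp l - 1 →
        Gch χ s ≠ 0 ∧ ‖deriv (Gch χ) s / Gch χ s‖ ≤ B * l ^ 2 := by
  obtain ⟨C, hC0, hC⟩ := exists_vonMangoldt_bound
  have hC' : ∀ σ : ℝ, 1 < σ → σ ≤ 2 → AL σ ≤ 1 / (σ - 1) + C := fun σ h1 h2 => (hC σ h1 h2).2
  obtain ⟨d, hd, hd1, hdK, hdC, hdc⟩ : ∃ d : ℝ, 0 < d ∧ d ≤ 1 ∧ 33264 * d ≤ 1 / 100 ∧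
      3 * C * d ^ 2 ≤ 1 / 100 ∧ 11 * d ^ 2 ≤ c₃ := by
    refine ⟨min (1 / 4000000) (min (1 / (300 * C)) (c₃ / 11)), ?_, ?_, ?_, ?_, ?_⟩
    · positivity
    · exact (min_le_left _ _).trans (by norm_num)
    · have := min_le_left (1 / 4000000) (min (1 / (300 * C)) (c₃ / 11)); linarith
    all_goals
      set d := min (1 / 4000000) (min (1 / (300 * C)) (c₃ / 11))
      have hd : 0 < d := by positivity
      have h1 : d ≤ 1 / 4000000 := min_le_left _ _
      have h2 : d ≤ 1 / (300 * C) := (min_le_right _ _).trans (min_le_left _ _)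
      have h3 : d ≤ c₃ / 11 := (min_le_right _ _).trans (min_le_right _ _)
      have h4 : d ^ 2 ≤ d := by nlinarith
    · rw [le_div_iff₀ (by positivity)] at h2
      nlinarith
    · linarith
  refine ⟨d ^ 2 / 10, by positivity, by nlinarith, 22176 / d ^ 3 + 20 / d ^ 2 + C, by positivity, ?_⟩
  intro N _ χ l hl hN hS s hs1 hs2 hsi
  have hnz : ∀ ρ : ℂ, 1 - (d ^ 2 / l) / 5 ≤ ρ.re → |ρ.im| ≤ Real.exp l → Gch χ ρ ≠ 0 :=
    fun ρ h1 h2 => no_zero hC' hC0 hd hd1 hdK hdC hdc hl χ hN hS h1 h2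
  have hl2 : l ≤ l ^ 2 := by nlinarith
  set δ := d ^ 2 / l with hδdef
  have hδ0 : 0 < δ := by positivity
  have hd2 : d ^ 2 ≤ 1 := by nlinarith
  have hδd : δ ≤ d ^ 2 := div_le_self (by positivity) hl
  have e1 : d ^ 2 / 10 / l = δ / 10 := by rw [hδdef]; ring
  rw [e1] at hs1
  refine ⟨hnz s (by linarith) (by linarith), ?_⟩
  by_cases h : s.re ≤ 1 + 3 * δ / 10
  · set c : ℂ := ((1 + δ / 10 : ℝ) : ℂ) + s.im * I with hcdef
    have hball : ∀ z ∈ ball c (δ / 4), 1 - δ / 5 ≤ z.re ∧ |z.im| ≤ Real.exp l ∧ ‖z - c‖ ≤ 1/2 := by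
      intro z hz
      rw [mem_ball_iff_norm] at hz
      have h1 := (abs_le.1 ((abs_re_le_norm _).trans hz.le)).1
      have h2 := (abs_im_le_norm _).trans hz.le
      have e1 : (z - c).re = z.re - (1 + δ/10) := by simp [hcdef]
      have e2 : (z - c).im = z.im - s.im := by simp [hcdef]
      rw [e1] at h1; rw [e2] at h2
      refine ⟨by linarith, ?_, by linarith⟩
      have := abs_sub_abs_le_abs_sub z.im s.im
      linarith
    have hbc := bc (f := Gch χ) (c := c) (R := δ / 4) (M := 21 * l / d) (by positivity) (by positivity)
      (differentiable_Gch χ).differentiableOn (fun z hz => hnz z (hball z hz).1 (hball z hz).2.1)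
      (fun z hz => ratio_bound χ hl hd hd1 hN (δ := δ / 10) (t := s.im)
        (by rw [hδdef, div_div, mul_comm l 10]) (by linarith)
        (by have := Real.exp_pos l; linarith) hcdef (hball z hz).2.2) (z := s) (by
        have : s - c = ((s.re - (1 + δ / 10) : ℝ) : ℂ) := by
          apply Complex.ext <;> simp [hcdef]
        rw [this, Complex.norm_real, Real.norm_eq_abs, abs_le]
        constructor <;> linarith)
    refine hbc.trans ?_
    have : 264 * (21 * l / d) / (δ / 4) = 22176 / d ^ 3 * l ^ 2 := by
      rw [hδdef]; field_simp; norm_num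
    rw [this]
    gcongr
    have : 0 < 20 / d ^ 2 := by positivity
    linarith
  · push Not at h
    have hs : 1 < s.re := by linarith
    have h1 := logDeriv_Gch χ hs
    change LSeries (cL χ) _ = _ at h1
    have h2 : deriv (Gch χ) s / Gch χ s = dl χ / (s - 1) - LSeries (cL χ) s := by
      rw [h1]; ring
    rw [h2]
    have h3 := norm_cL_le χ hs
    have h4 := hC' s.re hs hs2
    have h5 : ‖dl χ / (s - 1)‖ ≤ 1 / (s.re - 1) := by
      rw [norm_div]
      have h6 : s.re - 1 ≤ ‖s - 1‖ := le_trans (le_of_eq (by simp)) (Complex.re_le_norm _)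
      have h7 : ‖dl χ‖ ≤ 1 := by unfold dl; split_ifs <;> simp
      have : 0 < s.re - 1 := by linarith
      gcongr
    have h6 : 1 / (s.re - 1) ≤ 10 / d ^ 2 * l := by
      have : 10 / d ^ 2 * l = 1 / (δ / 10) := by rw [hδdef]; field_simp
      rw [this]
      gcongr
      linarith
    have h7 : 0 < 22176 / d ^ 3 := by positivity
    have h8 : 0 < 20 / d ^ 2 := by positivity
    calc _ ≤ ‖dl χ / (s - 1)‖ + ‖LSeries (cL χ) s‖ := norm_sub_le _ _
      _ ≤ 2 * (10 / d ^ 2 * l) + C := by linarith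
      _ = 20 / d ^ 2 * l + C := by ring
      _ ≤ 20 / d ^ 2 * l ^ 2 + C * l ^ 2 := by
          have : C ≤ C * l ^ 2 := by nlinarith
          gcongr
      _ ≤ _ := by
        have : 0 ≤ 22176 / d ^ 3 * l ^ 2 := by positivity
        linarith

end SW

/-! ### Estermann's lower bound -/

namespace SW
open Complex Metric MeasureTheory Set
open scoped ComplexOrder

/-- If `f' = -D f`, `f(c) ≥ 0` and the derivatives of `D` at `c` alternate in sign, then so do
those of `f`. It replaces the nonnegativity of the Dirichlet coefficients of `f = exp (∑ …)`. -/
theorem sgn_leibniz {f D : ℂ → ℂ} {U : Set ℂ} (hU : IsOpen U) {c : ℂ} (hc : c ∈ U)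
    (hf : AnalyticOnNhd ℂ f U) (hD : AnalyticOnNhd ℂ D U) (hfd : ∀ s ∈ U, deriv f s = - (D s * f s))
    (h0 : 0 ≤ f c) (hDc : ∀ m, 0 ≤ (-1) ^ m * iteratedDeriv m D c) (m : ℕ) :
    0 ≤ (-1) ^ m * iteratedDeriv m f c := by
  induction m using Nat.strong_induction_on with
  | _ m ih =>
    rcases m with _ | m
    · simpa using h0
    · have h1 : deriv f =ᶠ[nhds c] -(D * f) := by
        filter_upwards [hU.mem_nhds hc] with s hs using hfd s hs
      rw [iteratedDeriv_succ', h1.iteratedDeriv_eq, iteratedDeriv_neg,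
        iteratedDeriv_mul ((hD c hc).contDiffAt) ((hf c hc).contDiffAt), mul_neg,
        ← neg_mul, pow_succ, mul_neg_one, neg_neg, Finset.mul_sum]
      refine Finset.sum_nonneg fun i hi => ?_
      have hi' : i ≤ m := Nat.lt_succ_iff.1 (Finset.mem_range.1 hi)
      have h2 := ih (m - i) (by omega)
      have h3 := mul_nonneg (hDc i) h2
      have h4 : (0:ℂ) ≤ (m.choose i : ℂ) := by exact_mod_cast Nat.zero_le _
      have h5 := mul_nonneg h4 h3
      have h6 : (-1 : ℂ) ^ m = (-1) ^ i * (-1) ^ (m - i) := by rw [← pow_add]; congr 1; omega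
      rw [h6]
      calc (0:ℂ) ≤ _ := h5
        _ = _ := by ring

/-- Estermann's lower bound for the residue `F(1)` of `f(s) = F(s) / (s - 1)`. On `Re s > 1` one has
`f' = -D f`, so `f` has nonnegative Taylor coefficients in `2 - s`. Removing the pole, the entire
function `(F(s) - F(1)) / (s - 1)` has Taylor coefficients about `2` that decay geometrically by Cauchy's
estimate; evaluating the series at `β`, where `F(β) ≥ 0`, and truncating after `K` terms shows that
`F(1)` cannot be small. -/
theorem est_core {F D : ℂ → ℂ} {M β : ℝ} {K : ℕ} (hF : Differentiable ℂ F)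
    (hD : AnalyticOnNhd ℂ D {s | 1 < s.re})
    (hDc : ∀ m, 0 ≤ (-1) ^ m * iteratedDeriv m D 2)
    (hfd : ∀ s : ℂ, 1 < s.re → deriv F s = (1 / (s - 1) - D s) * F s)
    (h2 : 0 ≤ F 2) (h2' : 1 / 16 ≤ ‖F 2‖)
    (hM : ∀ s : ℂ, 1 / 2 ≤ s.re → ‖s‖ ≤ 4 → ‖F s‖ ≤ M)
    (hβ : 7 / 8 ≤ β) (hβ1 : β < 1) (hFβ : 0 ≤ (F β).re)
    (hK : 32 / 5 * (6 * M) * (27 / 32) ^ K ≤ 1 / 32) :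
    (1 - β) / 64 * Real.exp (-(1 - β) * K) ≤ ‖F 1‖ := by
  set lam := F 1 with hlam
  set Φ := dslope F 1 with hΦdef
  have hΦ : Differentiable ℂ Φ := by
    intro s
    rw [← differentiableWithinAt_univ]
    have := (differentiableOn_dslope (s := univ) (c := (1:ℂ)) (f := F) univ_mem).2
      hF.differentiableOn
    exact this s (mem_univ _)
  have hΦe : ∀ s : ℂ, s ≠ 1 → Φ s = (F s - lam) / (s - 1) := by
    intro s hs
    rw [hΦdef, dslope_of_ne _ hs, slope_def_field]
  set f : ℂ → ℂ := fun s => F s * (1 * s + (-1))⁻¹ with hf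
  have hU : IsOpen {s : ℂ | 1 < s.re} := isOpen_lt continuous_const continuous_re
  have hne : ∀ s : ℂ, 1 < s.re → 1 * s + (-1) ≠ 0 := by
    intro s hs h
    have : s = 1 := by linear_combination h
    rw [this] at hs; simp at hs
  have hfan : AnalyticOnNhd ℂ f {s | 1 < s.re} := by
    apply DifferentiableOn.analyticOnNhd _ hU
    intro s hs
    apply DifferentiableAt.differentiableWithinAt
    exact (hF s).mul (DifferentiableAt.inv (by fun_prop) (hne s hs))
  have hfd' : ∀ s ∈ {s : ℂ | 1 < s.re}, deriv f s = -(D s * f s) := by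
    intro s hs
    have h1 : HasDerivAt (fun s : ℂ => (1 * s + (-1))⁻¹) (-1 / (1 * s + (-1)) ^ 2) s := by
      have : HasDerivAt (fun s : ℂ => 1 * s + (-1)) 1 s := by
        simpa using ((hasDerivAt_id s).const_mul 1).add_const (-1:ℂ)
      exact this.inv (hne s hs)
    have h3 := ((hF s).hasDerivAt.mul h1).deriv
    have h4 : s - 1 ≠ 0 := by have := hne s hs; rwa [one_mul, ← sub_eq_add_neg] at this
    rw [show f = F * fun s => (1 * s + (-1))⁻¹ from rfl, h3, hfd s hs]
    simp only [one_mul, ← sub_eq_add_neg, Pi.mul_apply]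
    field_simp
    ring
  have hb : ∀ m, 0 ≤ (-1) ^ m * iteratedDeriv m f 2 :=
    sgn_leibniz hU (by simp) hfan hD hfd' (by simp only [hf]; norm_num; exact h2) hDc
  -- `Φ` is `f` with its pole at `1` removed
  have hrel : ∀ m, (-1) ^ m * iteratedDeriv m Φ 2 = (-1) ^ m * iteratedDeriv m f 2 - lam * m.factorial := by
    intro m
    have h1 : Φ =ᶠ[nhds 2] f - fun s => lam * (1 * s + (-1))⁻¹ := by
      filter_upwards [hU.mem_nhds (show (2:ℂ) ∈ {s : ℂ | 1 < s.re} by simp)] with s hs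
      rw [hΦe s (by rintro rfl; simp at hs)]
      simp only [hf, Pi.sub_apply, one_mul, ← sub_eq_add_neg]
      ring
    have hi : ContDiffAt ℂ m (fun s : ℂ => (1 * s + (-1))⁻¹) 2 := by
      apply ContDiffAt.inv (by fun_prop) (by norm_num)
    rw [h1.iteratedDeriv_eq, iteratedDeriv_sub (hfan 2 (by simp)).contDiffAt
      (contDiffAt_const.mul hi), iteratedDeriv_const_mul_field, iteratedDeriv_eq_iterate (f := fun s : ℂ => (1 * s + (-1))⁻¹),
      iter_deriv_inv_linear]
    have : (1 * (2:ℂ) + -1) = 1 := by norm_num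
    beta_reduce
    rw [this, one_zpow, one_pow, mul_sub]
    congr 1
    have : ((-1:ℂ) ^ m) * (-1) ^ m = 1 := by rw [← mul_pow]; simp
    linear_combination lam * m.factorial * this
  have hlamM : ‖lam‖ ≤ M := hM 1 (by norm_num) (by norm_num)
  have hcm : ∀ m, ‖iteratedDeriv m Φ 2‖ ≤ m.factorial * (6 * M) / (4 / 3) ^ m := by
    intro m
    apply norm_iteratedDeriv_le_of_forall_mem_sphere_norm_le m (by norm_num) hΦ.diffContOnCl
    intro z hz
    rw [mem_sphere_iff_norm] at hz
    have h1 : 1 / 3 ≤ ‖z - 1‖ := by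
      have := norm_sub_le (z - 1) 1
      rw [show z - 1 - 1 = z - 2 by ring, hz, norm_one] at this
      linarith
    have hz1 : z ≠ 1 := by rintro rfl; norm_num at h1
    rw [hΦe z hz1, norm_div, div_le_iff₀ (by linarith)]
    have h2 : ‖F z‖ ≤ M := by
      apply hM
      · have := abs_re_le_norm (z - 2)
        rw [hz, abs_le] at this
        have h3 := this.1
        rw [sub_re, re_ofNat] at h3
        linarith
      · have := norm_add_le (z - 2) 2
        rw [sub_add_cancel, hz] at this
        norm_num at this ⊢; linarith
    have h3 := norm_sub_le (F z) lam
    have hM0 : 0 ≤ M := (norm_nonneg _).trans hlamM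
    nlinarith
  -- the Taylor series at β
  have hT := hasSum_taylorSeries_on_ball (f := Φ) (c := 2) (r := 2) hΦ.differentiableOn
    (z := β) (by rw [mem_ball_iff_norm, ← norm_neg, show -((β:ℂ) - 2) = ((2 - β : ℝ) : ℂ) by push_cast; ring,
      Complex.norm_real, Real.norm_of_nonneg (by linarith)]; linarith)
  set x : ℝ := 2 - β with hx
  set a : ℕ → ℝ := fun m => ((-1) ^ m * iteratedDeriv m Φ 2 / m.factorial).re with ha
  have hTr : HasSum (fun m => a m * x ^ m) (Φ β).re := by
    have := (hasSum_re hT)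
    convert this using 2 with m
    have h1 : (β : ℂ) - 2 = ((-1:ℝ):ℂ) * (x : ℂ) := by rw [hx]; push_cast; ring
    rw [ha]
    simp only
    rw [← re_mul_ofReal, h1]
    congr 1
    simp only [smul_eq_mul, mul_pow]
    push_cast
    ring
  have hnm : ∀ m : ℕ, ‖((-1:ℂ)) ^ m‖ = 1 := by intro m; simp
  have hfac : ∀ m : ℕ, (0:ℝ) < m.factorial := fun m => by exact_mod_cast m.factorial_pos
  have hM0 : 0 ≤ M := (norm_nonneg _).trans hlamM
  have habs : ∀ m, |a m| ≤ 6 * M * (3 / 4) ^ m := by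
    intro m
    refine (abs_re_le_norm _).trans ?_
    rw [norm_div, norm_mul, hnm, one_mul, Complex.norm_natCast, div_le_iff₀ (hfac m)]
    refine (hcm m).trans (le_of_eq ?_)
    have : (3 / 4 : ℝ) ^ m * (4 / 3) ^ m = 1 := by rw [← mul_pow]; norm_num
    rw [div_eq_iff (by positivity)]
    linear_combination (-(6 * M * m.factorial)) * this
  have hage : ∀ m, -‖lam‖ ≤ a m := by
    intro m
    rw [ha]
    simp only
    have hf0 : (m.factorial : ℂ) ≠ 0 := by exact_mod_cast m.factorial_ne_zero
    rw [hrel, sub_div, sub_re, mul_div_cancel_right₀ _ hf0]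
    have h1 : 0 ≤ ((-1) ^ m * iteratedDeriv m f 2 / m.factorial).re := by
      rw [← ofReal_natCast, div_ofReal_re]
      exact div_nonneg (Complex.le_def.1 (hb m)).1 (hfac m).le
    have := (abs_le.1 (abs_re_le_norm lam)).2
    linarith
  have ha0 : 1 / 16 - ‖lam‖ ≤ a 0 := by
    rw [ha]
    simp only
    rw [hrel]
    simp only [pow_zero, one_mul, iteratedDeriv_zero, Nat.factorial_zero, Nat.cast_one, mul_one, div_one, sub_re]
    have : f 2 = F 2 := by rw [hf]; norm_num
    rw [this]
    have h3 : ‖F 2‖ = (F 2).re := by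
      have h4 := Complex.le_def.1 h2
      have h5 : F 2 = ((F 2).re : ℂ) := Complex.ext (by simp) (by simp; exact h4.2.symm)
      rw [h5, Complex.norm_real, Real.norm_of_nonneg h4.1, ofReal_re]
    have := (abs_le.1 (abs_re_le_norm lam)).2
    linarith
  have hx1 : 1 < x := by linarith
  have hx2 : x ≤ 9 / 8 := by linarith
  have hsplit := hTr.summable.sum_add_tsum_nat_add K
  rw [hTr.tsum_eq] at hsplit
  have htail : -(32 / 5 * (6 * M) * (27 / 32) ^ K) ≤ ∑' m, a (m + K) * x ^ (m + K) := by
    have hg : HasSum (fun m : ℕ => 6 * M * (27 / 32) ^ K * (27 / 32 : ℝ) ^ m) (6 * M * (27 / 32) ^ K * (1 - 27 / 32)⁻¹) :=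
      (hasSum_geometric_of_lt_one (by norm_num) (by norm_num)).mul_left _
    have h1 : ‖∑' m, a (m + K) * x ^ (m + K)‖ ≤ 6 * M * (27 / 32) ^ K * (1 - 27 / 32)⁻¹ := by
      apply tsum_of_norm_bounded hg
      intro m
      rw [norm_mul, norm_pow, Real.norm_eq_abs, Real.norm_of_nonneg (by linarith : 0 ≤ x)]
      calc |a (m + K)| * x ^ (m + K) ≤ (6 * M * (3 / 4) ^ (m + K)) * (9 / 8) ^ (m + K) := by
            gcongr
            exact habs _
        _ = 6 * M * (27 / 32) ^ (m + K) := by rw [mul_assoc, ← mul_pow]; norm_num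
        _ = _ := by rw [pow_add]; ring
    rw [Real.norm_eq_abs] at h1
    have := (abs_le.1 h1).1
    norm_num at this ⊢
    linarith
  have hgeom : ∑ m ∈ Finset.range K, x ^ m ≤ Real.exp ((1 - β) * K) / (1 - β) := by
    rw [geom_sum_eq hx1.ne', show x - 1 = 1 - β by rw [hx]; ring]
    have : x ^ K ≤ Real.exp ((1 - β) * K) := by
      rw [mul_comm, Real.exp_nat_mul]
      gcongr
      have := Real.add_one_le_exp (1 - β)
      linarith
    have h0 : 0 < 1 - β := by linarith
    gcongr
    linarith
  have hhead : 1 / 16 - ‖lam‖ * ∑ m ∈ Finset.range K, x ^ m ≤ ∑ m ∈ Finset.range K, a m * x ^ m := by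
    have hK0 : K ≠ 0 := by
      rintro rfl
      rw [pow_zero] at hK
      have : 1 / 16 ≤ M := h2'.trans (hM 2 (by norm_num) (by norm_num))
      linarith
    obtain ⟨k, rfl⟩ := Nat.exists_eq_succ_of_ne_zero hK0
    rw [Finset.sum_range_succ', Finset.sum_range_succ', mul_add, Finset.mul_sum, pow_zero, mul_one, mul_one]
    have : ∀ i ∈ Finset.range k, -(‖lam‖ * x ^ (i + 1)) ≤ a (i + 1) * x ^ (i + 1) := by
      intro i _
      rw [← neg_mul]
      have := hage (i + 1)
      have h5 : 0 ≤ x ^ (i + 1) := by positivity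
      exact mul_le_mul_of_nonneg_right this h5
    have := Finset.sum_le_sum this
    rw [Finset.sum_neg_distrib] at this
    linarith
  have hβΦ : (Φ β).re ≤ ‖lam‖ / (1 - β) := by
    have hb1 : (β : ℂ) ≠ 1 := by exact_mod_cast hβ1.ne
    rw [hΦe _ hb1, show (β:ℂ) - 1 = ((β - 1 : ℝ) : ℂ) by push_cast; rfl, div_ofReal_re, sub_re]
    have h0 : 0 < 1 - β := by linarith
    rw [← neg_div_neg_eq, neg_sub β 1]
    gcongr
    have := (abs_le.1 (abs_re_le_norm lam)).2
    linarith
  have h0 : 0 < 1 - β := by linarith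
  have hE1 : 1 ≤ Real.exp ((1 - β) * K) := Real.one_le_exp (by positivity)
  have hl0 := norm_nonneg lam
  have hfin : 1 / 32 ≤ 2 * ‖lam‖ * Real.exp ((1 - β) * K) / (1 - β) := by
    have h6 : ‖lam‖ / (1 - β) ≤ ‖lam‖ * Real.exp ((1 - β) * K) / (1 - β) := by
      gcongr; nlinarith
    have h7 : ‖lam‖ * ∑ m ∈ Finset.range K, x ^ m ≤ ‖lam‖ * Real.exp ((1 - β) * K) / (1 - β) := by
      rw [mul_div_assoc]; gcongr
    have h8 : 2 * ‖lam‖ * Real.exp ((1 - β) * K) / (1 - β) = ‖lam‖ * Real.exp ((1 - β) * K) / (1 - β) + ‖lam‖ * Real.exp ((1 - β) * K) / (1 - β) := by ring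
    rw [h8]
    linarith
  rw [le_div_iff₀ h0] at hfin
  rw [neg_mul, Real.exp_neg, ← div_eq_mul_inv, div_le_iff₀ (Real.exp_pos _)]
  linarith

end SW

/-! ### Real characters and products of four L-functions -/

namespace SW
open Complex Metric MeasureTheory Set
open scoped ComplexOrder

variable {N : ℕ} [NeZero N]

theorem real_vals {χ : DirichletCharacter ℂ N} (h : χ ^ 2 = 1) (a : ZMod N) :
    χ a = 0 ∨ χ a = 1 ∨ χ a = -1 := MulChar.isQuadratic_iff_sq_eq_one.2 h a

theorem real_conj {χ : DirichletCharacter ℂ N} (h : χ ^ 2 = 1) (a : ZMod N) :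
    (starRingEnd ℂ) (χ a) = χ a := by
  rcases real_vals h a with h | h | h <;> simp [h]

theorem term_conj {χ : DirichletCharacter ℂ N} (h : χ ^ 2 = 1) (σ : ℝ) (n : ℕ) :
    (starRingEnd ℂ) (LSeries.term (fun n : ℕ => χ n) σ n) = LSeries.term (fun n : ℕ => χ n) σ n := by
  rcases eq_or_ne n 0 with rfl | hn
  · simp
  · rw [LSeries.term_of_ne_zero hn, ← ofReal_natCast, ← Complex.ofReal_cpow (Nat.cast_nonneg n),
      map_div₀, conj_ofReal, real_conj h]

theorem Gch_eq_LSeries (χ : DirichletCharacter ℂ N) {s : ℂ} (hs : 1 < s.re) :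
    Gch χ s = (if χ = 1 then s - 1 else 1) * LSeries (fun n : ℕ => χ n) s := by
  rw [Gch_eq_mul χ (by rintro rfl; simp at hs), DirichletCharacter.LFunction_eq_LSeries χ hs]

theorem Gch_conj {χ : DirichletCharacter ℂ N} (h : χ ^ 2 = 1) {σ : ℝ} (hσ : 1 < σ) :
    (starRingEnd ℂ) (Gch χ σ) = Gch χ σ := by
  rw [Gch_eq_LSeries χ (by simpa using hσ), map_mul, LSeries, conj_tsum]
  congr 1
  · split_ifs <;> simp
  · exact tsum_congr fun n => term_conj h σ n

/-- A character with `χ² = 1` has a real `L`-function on the whole real axis: this is clear for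
`σ > 1`, and continues analytically. -/
theorem Gch_real {χ : DirichletCharacter ℂ N} (h : χ ^ 2 = 1) (σ : ℝ) : (Gch χ σ).im = 0 := by
  rw [← conj_eq_iff_im]
  have hg : Differentiable ℂ ((starRingEnd ℂ) ∘ (Gch χ) ∘ (starRingEnd ℂ)) := fun z =>
    by simpa using (differentiable_Gch χ (starRingEnd ℂ z)).conj_conj
  have := AnalyticOnNhd.eq_of_frequently_eq (𝕜 := ℂ) (z₀ := 2)
    (hg.differentiableOn.analyticOnNhd isOpen_univ)
    ((differentiable_Gch χ).differentiableOn.analyticOnNhd isOpen_univ) ?_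
  · have h2 := congrFun this σ
    simpa using h2
  · have h3 : Tendsto (fun n : ℕ => ((2 + 1 / ((n:ℝ) + 1) : ℝ) : ℂ)) atTop (nhdsWithin 2 {2}ᶜ) := by
      rw [tendsto_nhdsWithin_iff]
      constructor
      · have h4 := (tendsto_one_div_add_atTop_nhds_zero_nat (𝕜 := ℝ)).const_add 2
        have h5 := (continuous_ofReal.tendsto _).comp h4
        rw [add_zero, ofReal_ofNat] at h5
        exact h5
      · refine Eventually.of_forall fun n => ?_
        have : (0:ℝ) < 1 / ((n:ℝ) + 1) := by positivity
        simp only [mem_compl_iff, mem_singleton_iff]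
        intro h6
        have h7 : (2 + 1 / ((n:ℝ) + 1) : ℝ) = 2 := by exact_mod_cast h6
        linarith
    apply h3.frequently
    refine Eventually.frequently (Eventually.of_forall fun n => ?_)
    have : (0:ℝ) < 1 / ((n:ℝ) + 1) := by positivity
    have := Gch_conj h (σ := 2 + 1 / ((n:ℝ) + 1)) (by linarith)
    simp only [Function.comp_apply, conj_ofReal]
    exact this

theorem Gch_two_re (χ : DirichletCharacter ℂ N) : 0 ≤ (Gch χ 2).re := by
  have hs : 1 < (2:ℂ).re := by simp
  rw [Gch_eq_LSeries χ hs]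
  have : (if χ = 1 then (2:ℂ) - 1 else 1) = 1 := by split_ifs <;> norm_num
  rw [this, one_mul]
  obtain ⟨h1, h2⟩ := zeta_bound (σ := 2) (by norm_num)
  have hle : ∀ n, ‖LSeries.term (fun n : ℕ => χ n) 2 n‖ ≤ ‖LSeries.term 1 2 n‖ := by
    intro n
    apply LSeries.norm_term_le
    simpa using χ.norm_le_one _
  have h1' : Summable fun n => ‖LSeries.term 1 2 n‖ := by simpa using h1
  have h2' : ∑' n, ‖LSeries.term 1 2 n‖ ≤ 2 := by
    refine le_trans (le_of_eq ?_) (h2.trans (by norm_num))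
    norm_num
  have hsum : Summable fun n => LSeries.term (fun n : ℕ => χ n) 2 n :=
    Summable.of_norm_bounded h1' hle
  have e1 := hsum.sum_add_tsum_nat_add 2
  have e2 := h1'.sum_add_tsum_nat_add 2
  rw [LSeries, ← e1]
  have h3 : ‖∑' n, LSeries.term (fun n : ℕ => χ n) 2 (n + 2)‖ ≤ ∑' n, ‖LSeries.term 1 2 (n + 2)‖ :=
    tsum_of_norm_bounded ((summable_nat_add_iff 2).2 h1').hasSum fun n => hle _
  simp only [Finset.sum_range_succ, Finset.sum_range_zero, zero_add, LSeries.term_zero, norm_zero] at e1 e2 ⊢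
  have h4 : LSeries.term (fun n : ℕ => χ n) 2 1 = 1 := by
    rw [LSeries.term_of_ne_zero one_ne_zero]; simp
  have h5 : ‖LSeries.term 1 2 1‖ = 1 := by
    rw [LSeries.term_of_ne_zero one_ne_zero]; simp
  rw [h4, add_re, one_re]
  have := (abs_le.1 ((abs_re_le_norm _).trans h3)).1
  rw [h5] at e2
  linarith

theorem Gch_two_nonneg {χ : DirichletCharacter ℂ N} (h : χ ^ 2 = 1) : 0 ≤ Gch χ 2 := by
  rw [Complex.le_def]
  refine ⟨Gch_two_re χ, ?_⟩
  have := Gch_real h 2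
  simpa using this.symm

/-- A real character without zeros on `[b, 2]` takes a nonnegative value at `b`, because its value at
`2` is nonnegative and it is real on the real axis. -/
theorem Gch_pos_of {χ : DirichletCharacter ℂ N} (h : χ ^ 2 = 1) {b : ℝ} (hb : b ≤ 2)
    (hz : ∀ y : ℝ, b ≤ y → y ≤ 2 → Gch χ y ≠ 0) : 0 ≤ Gch χ b := by
  rw [Complex.le_def]
  refine ⟨?_, (Gch_real h b).symm⟩
  by_contra hneg
  push Not at hneg
  simp only [zero_re] at hneg
  have hc : ContinuousOn (fun y : ℝ => (Gch χ y).re) (Icc b 2) :=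
    (continuous_re.comp ((differentiable_Gch χ).continuous.comp continuous_ofReal)).continuousOn
  have h2 := Gch_two_re χ
  obtain ⟨y, hy, hy0⟩ := intermediate_value_Icc hb hc (show (0:ℝ) ∈ Icc _ _ from
    ⟨hneg.le, by simpa using h2⟩)
  exact hz y hy.1 hy.2 (Complex.ext hy0 (Gch_real h y))

/-- The product `(s - 1) ζ(s) L(s, ψ₁) L(s, ψ₂) L(s, ψ₁ψ₂)` with Euler factors at `N` removed, for
`ψ₁`, `ψ₂`, `ψ₁ψ₂` nontrivial. -/
noncomputable def F4 (ψ₁ ψ₂ : DirichletCharacter ℂ N) (s : ℂ) : ℂ :=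
  Gch (1 : DirichletCharacter ℂ N) s * Gch ψ₁ s * (Gch ψ₂ s * Gch (ψ₁ * ψ₂) s)

theorem deriv_Gch (χ : DirichletCharacter ℂ N) {s : ℂ} (hs : 1 < s.re) :
    deriv (Gch χ) s = (dl χ / (s - 1) - LSeries (cL χ) s) * Gch χ s := by
  have h := logDeriv_Gch χ hs
  change LSeries (cL χ) s = _ at h
  have h0 := Gch_ne_zero χ hs.le
  rw [h, show dl χ / (s - 1) - (-(deriv (Gch χ) s / Gch χ s) + dl χ / (s - 1)) =
    deriv (Gch χ) s / Gch χ s by ring, div_mul_cancel₀ _ h0]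

/-- Estermann's lower bound applied to `F4`. The coefficients of the logarithmic derivative are
`Λ(n) (1 + ψ₁(n)) (1 + ψ₂(n)) ≥ 0` for `n` prime to `N`; the number of Taylor terms retained is
proportional to `1 + log N`. -/
theorem est_arith {ψ₁ ψ₂ : DirichletCharacter ℂ N} (h₁ : ψ₁ ^ 2 = 1) (h₂ : ψ₂ ^ 2 = 1)
    (n₁ : ψ₁ ≠ 1) (n₂ : ψ₂ ≠ 1) (n₃ : ψ₁ * ψ₂ ≠ 1) {β : ℝ} (hβ : 7 / 8 ≤ β) (hβ1 : β < 1)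
    (hF : 0 ≤ (F4 ψ₁ ψ₂ β).re) :
    (1 - β) / 64 * Real.exp (-(1 - β) * (193 * (1 + Real.log N))) ≤ ‖F4 ψ₁ ψ₂ 1‖ := by
  have h₃ : (ψ₁ * ψ₂) ^ 2 = 1 := by rw [mul_pow, h₁, h₂, one_mul]
  have h₀ : (1 : DirichletCharacter ℂ N) ^ 2 = 1 := one_pow 2
  set a : ℕ → ℂ := cL (1 : DirichletCharacter ℂ N) + cL ψ₁ + (cL ψ₂ + cL (ψ₁ * ψ₂)) with ha
  have ha0 : 0 ≤ a := by
    intro n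
    have hL : (0:ℂ) ≤ ((ArithmeticFunction.vonMangoldt n : ℝ) : ℂ) := by
      exact_mod_cast ArithmeticFunction.vonMangoldt_nonneg
    have : a n = ((1 : DirichletCharacter ℂ N) n + ψ₁ n + (ψ₂ n + ψ₁ n * ψ₂ n)) *
        ((ArithmeticFunction.vonMangoldt n : ℝ) : ℂ) := by
      simp only [ha, cL, Pi.add_apply, Pi.mul_apply, MulChar.mul_apply]; ring
    rw [this]
    refine mul_nonneg ?_ hL
    by_cases hu : IsUnit (n : ZMod N)
    · rw [MulChar.one_apply hu]
      rcases real_vals h₁ (n : ZMod N) with e | e | e <;> rcases real_vals h₂ (n : ZMod N) with e' | e' | e' <;>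
        rw [e, e'] <;> norm_num
    · rw [MulChar.map_nonunit _ hu, MulChar.map_nonunit _ hu, MulChar.map_nonunit _ hu]; simp
  have hsum : ∀ s : ℂ, 1 < s.re → LSeries a s = LSeries (cL (1 : DirichletCharacter ℂ N)) s +
      LSeries (cL ψ₁) s + (LSeries (cL ψ₂) s + LSeries (cL (ψ₁ * ψ₂)) s) := by
    intro s hs
    rw [ha, LSeries_add ((cL_summable _ hs).add (cL_summable _ hs))
      ((cL_summable _ hs).add (cL_summable _ hs)), LSeries_add (cL_summable _ hs) (cL_summable _ hs),
      LSeries_add (cL_summable _ hs) (cL_summable _ hs)]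
  have hsm : ∀ s : ℂ, 1 < s.re → LSeriesSummable a s := fun s hs =>
    ((cL_summable _ hs).add (cL_summable _ hs)).add ((cL_summable _ hs).add (cL_summable _ hs))
  have habs : LSeries.abscissaOfAbsConv a ≤ 1 :=
    LSeries.abscissaOfAbsConv_le_of_forall_lt_LSeriesSummable fun y hy => hsm y (by simpa using hy)
  have hFd : Differentiable ℂ (F4 ψ₁ ψ₂) :=
    ((differentiable_Gch _).mul (differentiable_Gch _)).mul ((differentiable_Gch _).mul (differentiable_Gch _))
  have hN1 := Nr_pos (N := N)
  have hlog : 0 ≤ Real.log N := Real.log_nonneg hN1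
  set M : ℝ := (252 * N) ^ 4 with hMdef
  set K : ℕ := ⌈192 * (1 + Real.log N)⌉₊ with hKdef
  have hK1 : 192 * (1 + Real.log N) ≤ K := Nat.le_ceil _
  have hK2 : (K:ℝ) ≤ 193 * (1 + Real.log N) := by
    have := (Nat.ceil_lt_add_one (show 0 ≤ 192 * (1 + Real.log N) by positivity)).le
    linarith
  have key := est_core (F := F4 ψ₁ ψ₂) (D := LSeries a) (M := M) (β := β) (K := K) hFd
    ?_ ?_ ?_ ?_ ?_ ?_ hβ hβ1 hF ?_
  · refine le_trans ?_ key
    have : 0 ≤ (1 - β) := by linarith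
    gcongr ?_ * Real.exp ?_
    rw [neg_mul, neg_mul, neg_le_neg_iff]
    gcongr
  · refine (LSeries_analyticOnNhd a).mono ?_
    intro s hs
    exact lt_of_le_of_lt habs (by exact_mod_cast hs)
  · intro m
    have := LSeries.iteratedDeriv_alternating ha0 (x := 2) (lt_of_le_of_lt habs (by norm_cast)) m
    simpa using this
  · intro s hs
    have e1 : HasDerivAt (F4 ψ₁ ψ₂) _ s :=
      ((differentiable_Gch (1 : DirichletCharacter ℂ N) s).hasDerivAt.mul (differentiable_Gch ψ₁ s).hasDerivAt).mul
      ((differentiable_Gch ψ₂ s).hasDerivAt.mul (differentiable_Gch (ψ₁ * ψ₂) s).hasDerivAt)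
    rw [e1.deriv, deriv_Gch _ hs, deriv_Gch _ hs, deriv_Gch _ hs, deriv_Gch _ hs, hsum s hs]
    simp only [dl, if_neg n₁, if_neg n₂, if_neg n₃, if_true, F4, Pi.mul_apply]
    ring
  · exact mul_nonneg (mul_nonneg (Gch_two_nonneg h₀) (Gch_two_nonneg h₁))
      (mul_nonneg (Gch_two_nonneg h₂) (Gch_two_nonneg h₃))
  · have h : ∀ χ : DirichletCharacter ℂ N, 1 / 2 ≤ ‖Gch χ 2‖ := by
      intro χ
      have := norm_Gch_ge χ (s := 2) (by norm_num) (by norm_num)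
      norm_num at this ⊢
      exact this
    rw [F4, norm_mul, norm_mul, norm_mul]
    calc (1/16:ℝ) = 1/2 * (1/2) * (1/2 * (1/2)) := by norm_num
      _ ≤ _ := by gcongr <;> apply h
  · intro s hs hs4
    have h : ∀ χ : DirichletCharacter ℂ N, ‖Gch χ s‖ ≤ 252 * N := by
      intro χ
      refine (norm_Gch_le χ hs).trans ?_
      calc 7 * (N:ℝ) * (‖s‖ + 2) ^ 2 ≤ 7 * N * (4 + 2) ^ 2 := by gcongr
        _ = _ := by ring
    rw [F4, norm_mul, norm_mul, norm_mul, hMdef]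
    calc _ ≤ (252 * (N:ℝ)) * (252 * N) * ((252 * N) * (252 * N)) := by gcongr <;> apply h
      _ = _ := by ring
  · have e1 : (27 / 32 : ℝ) ^ K ≤ Real.exp (-(5 / 32) * K) := by
      rw [mul_comm, Real.exp_nat_mul]
      gcongr
      have := Real.add_one_le_exp (-(5 / 32 : ℝ))
      linarith
    have e2 : Real.exp (-(5 / 32) * K) ≤ Real.exp (-30) * (N:ℝ) ^ (-4 : ℤ) := by
      have : (N:ℝ) ^ (-4 : ℤ) = Real.exp (-4 * Real.log N) := by
        rw [mul_comm, Real.exp_mul, Real.exp_log (by linarith), ← Real.rpow_intCast]; norm_num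
      rw [this, ← Real.exp_add]
      apply Real.exp_le_exp.2
      linarith
    have e3 : Real.exp (-30) ≤ 1 / 2.7 ^ 30 := by
      have : Real.exp (-30) = 1 / Real.exp 1 ^ 30 := by
        rw [← Real.exp_nat_mul, Real.exp_neg]; norm_num
      rw [this]
      have := Real.exp_one_gt_d9
      gcongr
      linarith
    have e4 : (27 / 32 : ℝ) ^ K ≤ 1 / 2.7 ^ 30 * (N:ℝ) ^ (-4 : ℤ) :=
      e1.trans (e2.trans (by gcongr))
    calc 32 / 5 * (6 * M) * (27 / 32 : ℝ) ^ K ≤ 32 / 5 * (6 * M) * (1 / 2.7 ^ 30 * (N:ℝ) ^ (-4 : ℤ)) := by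
          gcongr
      _ = 32 / 5 * 6 * 252 ^ 4 / 2.7 ^ 30 := by
          have : (N:ℝ) ≠ 0 := by positivity
          rw [hMdef, zpow_neg]; field_simp
      _ ≤ _ := by norm_num

/-- Passing to an imprimitive character multiplies the `L`-function by Euler factors that do not
vanish in `Re s > 0`. -/
theorem Gch_changeLevel_iff {M : ℕ} [NeZero M] (hMN : M ∣ N) (χ : DirichletCharacter ℂ M) {s : ℂ}
    (hs : 0 < s.re) : Gch (DirichletCharacter.changeLevel hMN χ) s = 0 ↔ Gch χ s = 0 := by
  by_cases h1 : s = 1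
  · subst h1
    have a := Gch_ne_zero (DirichletCharacter.changeLevel hMN χ) (s := 1) (by simp)
    have b := Gch_ne_zero χ (s := 1) (by simp)
    tauto
  · rw [Gch_eq_mul _ h1, Gch_eq_mul _ h1, DirichletCharacter.LFunction_changeLevel hMN χ (Or.inr h1)]
    simp only [DirichletCharacter.changeLevel_eq_one_iff]
    rw [← mul_assoc, mul_eq_zero]
    have hp : ∏ p ∈ N.primeFactors, (1 - χ p * (p:ℂ) ^ (-s)) ≠ 0 := by
      rw [Finset.prod_ne_zero_iff]
      intro p hp h0
      have hpp := Nat.prime_of_mem_primeFactors hp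
      have h2 : ‖χ p * (p:ℂ) ^ (-s)‖ < 1 := by
        rw [norm_mul]
        have h3 : ‖(p:ℂ) ^ (-s)‖ < 1 := by
          rw [Complex.norm_natCast_cpow_of_pos hpp.pos]
          apply Real.rpow_lt_one_of_one_lt_of_neg
          · exact_mod_cast hpp.one_lt
          · simpa using hs
        have h4 := χ.norm_le_one (p : ZMod M)
        nlinarith [norm_nonneg ((p:ℂ) ^ (-s)), norm_nonneg (χ (p: ZMod M))]
      rw [← sub_eq_zero.1 h0, norm_one] at h2
      exact lt_irrefl _ h2
    simp [hp]

theorem exists_disc (χ : DirichletCharacter ℂ N) : ∃ r : ℝ, 0 < r ∧ r ≤ 1 / 8 ∧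
    ∀ s : ℂ, ‖s - 1‖ ≤ r → Gch χ s ≠ 0 := by
  have h := (differentiable_Gch χ).continuous.continuousAt (x := 1) |>.eventually_ne
    (Gch_ne_zero χ (s := 1) (by simp))
  obtain ⟨r, hr, hb⟩ := Metric.eventually_nhds_iff.1 h
  refine ⟨min (r / 2) (1 / 8), by positivity, min_le_right _ _, fun s hs => hb ?_⟩
  rw [dist_eq_norm]
  have := hs.trans (min_le_left _ _)
  linarith

theorem re_pos_of_near {s : ℂ} {r : ℝ} (hs : ‖s - 1‖ ≤ r) (hr : r ≤ 1 / 8) : 0 < s.re := by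
  have := (abs_le.1 ((abs_re_le_norm _).trans hs)).1
  simp at this; linarith

/-- A disc about `1` free of zeros of `(s - 1) L(s, χ₀)` for the trivial characters `χ₀` of all
moduli at once. -/
theorem Gch_one_disc : ∃ r : ℝ, 0 < r ∧ r ≤ 1 / 8 ∧
    ∀ (N : ℕ) [NeZero N] (s : ℂ), ‖s - 1‖ ≤ r → Gch (1 : DirichletCharacter ℂ N) s ≠ 0 := by
  obtain ⟨r, hr, hr8, h⟩ := exists_disc (1 : DirichletCharacter ℂ 1)
  refine ⟨r, hr, hr8, fun N _ s hs => ?_⟩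
  have := h s hs
  rw [Ne, ← Gch_changeLevel_iff N.one_dvd _ (re_pos_of_near hs hr8)] at this
  rwa [DirichletCharacter.changeLevel_one] at this

end SW

/-! ### Siegel's theorem -/

namespace SW
open Complex Metric MeasureTheory Set

/-- If a nontrivial `L(s, ψ)` vanishes at `ρ` close to `1`, then `L(1, ψ)` is small: a Cauchy
estimate bounds the difference quotient between `ρ` and `1`. -/
theorem Gch_lip {N : ℕ} [NeZero N] (ψ : DirichletCharacter ℂ N) (hψ : ψ ≠ 1) {η : ℝ} (hη : 0 < η)
    (hη2 : η ≤ 1 / 4) {ρ : ℂ} (hρ : ‖ρ - 1‖ < η) (hz : Gch ψ ρ = 0) :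
    ‖Gch ψ 1‖ ≤ 13 / η ^ 2 * (N:ℝ) ^ (2 * η) * ‖ρ - 1‖ := by
  have hN1 := Nr_pos (N := N)
  have hE : 0 < (N:ℝ) ^ (2 * η) := by positivity
  have hb : ∀ s : ℂ, ‖s - 1‖ ≤ η → ‖Gch ψ s‖ ≤ 6 / η * (N:ℝ) ^ (2 * η) := fun s hs => by
    rw [Gch_of_ne ψ hψ]; exact norm_LFunction_near_one_le ψ hψ hη hη2 hs
  have h := Complex.dist_le_div_mul_dist_of_mapsTo_ball (f := Gch ψ) (c := 1) (R₁ := η)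
    (R₂ := 13 / η * (N:ℝ) ^ (2 * η)) (z := ρ) (differentiable_Gch ψ).differentiableOn ?_ ?_
  · rw [hz, dist_eq_norm, zero_sub, norm_neg, dist_eq_norm] at h
    refine h.trans (le_of_eq ?_)
    field_simp
  · intro s hs
    rw [mem_ball_iff_norm] at hs
    try rw [mem_closedBall_iff_norm]
    try rw [mem_ball_iff_norm]
    have h1 := hb s hs.le
    have h2 := hb 1 (by simpa using hη.le)
    have h3 := norm_sub_le (Gch ψ s) (Gch ψ 1)
    have h4 : 13 / η * (N:ℝ) ^ (2 * η) = 6 / η * (N:ℝ) ^ (2 * η) + 6 / η * (N:ℝ) ^ (2 * η) + 1 / η * (N:ℝ) ^ (2 * η) := by ring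
    have h5 : 0 < 1 / η * (N:ℝ) ^ (2 * η) := by positivity
    linarith
  · rwa [mem_ball_iff_norm]

/-- Repulsion of zeros: when the product `F4` is nonnegative at `β < 1`, a zero `ρ` of `L(s, ψ₂)`
cannot be much closer to `1` than a constant depending on `β` times `N^{-ε}`. -/
theorem siegel_pair {N : ℕ} [NeZero N] {ψ₁ ψ₂ : DirichletCharacter ℂ N} (h₁ : ψ₁ ^ 2 = 1) (h₂ : ψ₂ ^ 2 = 1)
    (n₁ : ψ₁ ≠ 1) (n₂ : ψ₂ ≠ 1) (n₃ : ψ₁ * ψ₂ ≠ 1) {β ε : ℝ} (hε : 0 < ε) (hε1 : ε ≤ 1)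
    (hβ : 1 - ε / 1000 ≤ β) (hβ1 : β < 1)
    (hF : 0 ≤ (F4 ψ₁ ψ₂ β).re) {ρ : ℂ} (hρ : ‖ρ - 1‖ < ε / 100) (hz : Gch ψ₂ ρ = 0) :
    (1 - β) * (Real.exp (-1) * (ε / 100) ^ 4 / 29952) * (N:ℝ) ^ (-ε) ≤ ‖ρ - 1‖ := by
  have hN1 := Nr_pos (N := N)
  have hlog : 0 ≤ Real.log N := Real.log_nonneg hN1
  set η := ε / 100 with hη
  have hη0 : 0 < η := by positivity
  have hη4 : η ≤ 1 / 4 := by linarith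
  have h := est_arith h₁ h₂ n₁ n₂ n₃ (by linarith) hβ1 hF
  rw [F4, norm_mul, norm_mul, norm_mul] at h
  have g0 : ‖Gch (1 : DirichletCharacter ℂ N) 1‖ ≤ 1 := by
    rw [Gch_rep _ (by simp)]
    simpa using norm_kap_le (1 : DirichletCharacter ℂ N)
  have hb : ∀ ψ : DirichletCharacter ℂ N, ψ ≠ 1 → ‖Gch ψ 1‖ ≤ 6 / η * (N:ℝ) ^ (2 * η) := fun ψ hψ => by
    rw [Gch_of_ne ψ hψ]; exact norm_LFunction_near_one_le ψ hψ hη0 hη4 (by simpa using hη0.le)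
  have hl := Gch_lip ψ₂ n₂ hη0 hη4 hρ hz
  have hup : ‖Gch (1 : DirichletCharacter ℂ N) 1‖ * ‖Gch ψ₁ 1‖ * (‖Gch ψ₂ 1‖ * ‖Gch (ψ₁ * ψ₂) 1‖) ≤
      1 * (6 / η * (N:ℝ) ^ (2 * η)) * ((13 / η ^ 2 * (N:ℝ) ^ (2 * η) * ‖ρ - 1‖) * (6 / η * (N:ℝ) ^ (2 * η))) := by
    gcongr
    · exact hb _ n₁
    · exact hb _ n₃
  have hpow : ∀ y : ℝ, (N:ℝ) ^ y = Real.exp (Real.log N * y) := fun y =>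
    Real.rpow_def_of_pos (by linarith) y
  have hlow : (1 - β) / 64 * (Real.exp (-1) * Real.exp (Real.log N * (-(ε / 5)))) ≤
      (1 - β) / 64 * Real.exp (-(1 - β) * (193 * (1 + Real.log N))) := by
    have : 0 ≤ 1 - β := by linarith
    rw [← Real.exp_add]
    gcongr
    nlinarith
  have h5 := (hlow.trans h).trans hup
  have e1 : (N:ℝ) ^ (2 * η) * (N:ℝ) ^ (2 * η) * (N:ℝ) ^ (2 * η) = Real.exp (Real.log N * (6 * η)) := by
    rw [hpow, ← Real.exp_add, ← Real.exp_add]; congr 1; ring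
  have h6 : 1 * (6 / η * (N:ℝ) ^ (2 * η)) * ((13 / η ^ 2 * (N:ℝ) ^ (2 * η) * ‖ρ - 1‖) * (6 / η * (N:ℝ) ^ (2 * η)))
     = 468 / η ^ 4 * ‖ρ - 1‖ * Real.exp (Real.log N * (6 * η)) := by
    rw [← e1]; field_simp; ring
  rw [h6] at h5
  have e2 : (N:ℝ) ^ (-ε) ≤ Real.exp (Real.log N * (-(ε / 5))) * Real.exp (-(Real.log N * (6 * η))) := by
    rw [hpow, ← Real.exp_add]
    apply Real.exp_le_exp.2
    rw [hη]
    nlinarith [mul_nonneg hlog hε.le]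
  have h7 := mul_le_mul_of_nonneg_right h5 (Real.exp_pos (-(Real.log N * (6 * η)))).le
  have e3 : Real.exp (Real.log N * (6 * η)) * Real.exp (-(Real.log N * (6 * η))) = 1 := by
    rw [← Real.exp_add, add_neg_cancel, Real.exp_zero]
  have hb0 : 0 ≤ 1 - β := by linarith
  have h8 : (1 - β) / 64 * Real.exp (-1) * (N:ℝ) ^ (-ε) ≤ 468 / η ^ 4 * ‖ρ - 1‖ := by
    calc _ ≤ (1 - β) / 64 * Real.exp (-1) * (Real.exp (Real.log N * (-(ε / 5))) * Real.exp (-(Real.log N * (6 * η)))) := by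
          gcongr
      _ = (1 - β) / 64 * (Real.exp (-1) * Real.exp (Real.log N * (-(ε / 5)))) * Real.exp (-(Real.log N * (6 * η))) := by ring
      _ ≤ _ := h7
      _ = 468 / η ^ 4 * ‖ρ - 1‖ * (Real.exp (Real.log N * (6 * η)) * Real.exp (-(Real.log N * (6 * η)))) := by ring
      _ = _ := by rw [e3, mul_one]
  have h9 := mul_le_mul_of_nonneg_right h8 (show 0 ≤ η ^ 4 / 468 by positivity)
  calc _ = (1 - β) / 64 * Real.exp (-1) * (N:ℝ) ^ (-ε) * (η ^ 4 / 468) := by ring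
    _ ≤ _ := h9
    _ = _ := by field_simp

/-- Siegel's theorem, stated for complex zeros close to `1`, with an ineffective constant. One
auxiliary real character and one point `β` close to `1` are fixed once and for all, either because
`β` is a zero or because no real character has a zero in `[1 - δ, 1)`; then `siegel_pair` applies
to every other real character. -/
theorem siegel {ε : ℝ} (hε : 0 < ε) (hε1 : ε ≤ 1) : ∃ c : ℝ, 0 < c ∧ ∀ (N : ℕ) [NeZero N]
    (χ : DirichletCharacter ℂ N), χ ^ 2 = 1 → ∀ s : ℂ, ‖s - 1‖ ≤ c * (N:ℝ) ^ (-ε) → Gch χ s ≠ 0 := by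
  obtain ⟨r₀, hr₀, hr₀8, hdisc⟩ := Gch_one_disc
  have hNpow : ∀ (N : ℕ) [NeZero N], (N:ℝ) ^ (-ε) ≤ 1 := fun N _ =>
    Real.rpow_le_one_of_one_le_of_nonpos (Nr_pos (N := N)) (by linarith)
  set δ := min r₀ (ε / 1000) with hδ
  have hδ0 : 0 < δ := by positivity
  by_cases htriv : ∀ (N : ℕ) [NeZero N] (χ : DirichletCharacter ℂ N), χ ^ 2 = 1 → χ = 1
  · refine ⟨r₀, hr₀, fun N _ χ hχ s hs => ?_⟩
    rw [htriv N χ hχ]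
    exact hdisc N s (hs.trans (by nlinarith [hNpow N]))
  push Not at htriv
  -- the auxiliary character and the auxiliary point
  obtain ⟨N₁, i₁, χ₁, hχ₁, hne₁, β, hβ, hβ1, hF⟩ : ∃ (N₁ : ℕ) (_ : NeZero N₁) (χ₁ : DirichletCharacter ℂ N₁),
      χ₁ ^ 2 = 1 ∧ χ₁ ≠ 1 ∧ ∃ β : ℝ, 1 - δ ≤ β ∧ β < 1 ∧ ∀ (N : ℕ) [NeZero N] (h : N₁ ∣ N)
        (ψ₂ : DirichletCharacter ℂ N), ψ₂ ^ 2 = 1 →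
        0 ≤ (F4 (DirichletCharacter.changeLevel h χ₁) ψ₂ β).re := by
    by_cases hex : ∃ (N₁ : ℕ) (_ : NeZero N₁) (χ₁ : DirichletCharacter ℂ N₁), χ₁ ^ 2 = 1 ∧
      ∃ β : ℝ, 1 - δ ≤ β ∧ β < 1 ∧ Gch χ₁ β = 0
    · obtain ⟨N₁, i₁, χ₁, hχ₁, β, hβ, hβ1, hz⟩ := hex
      have hnear : ‖(β:ℂ) - 1‖ ≤ r₀ := by
        rw [show (β:ℂ) - 1 = ((β - 1 : ℝ) : ℂ) by push_cast; rfl, Complex.norm_real, Real.norm_eq_abs,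
          abs_of_neg (by linarith)]
        have := min_le_left r₀ (ε / 1000)
        linarith
      refine ⟨N₁, i₁, χ₁, hχ₁, ?_, β, hβ, hβ1, fun N _ h ψ₂ _ => ?_⟩
      · rintro rfl
        exact hdisc N₁ β hnear hz
      · rw [F4, (Gch_changeLevel_iff h χ₁ (re_pos_of_near hnear hr₀8)).2 hz]; simp
    · push Not at hex
      obtain ⟨N₁, i₁, χ₁, hχ₁, hne⟩ := htriv
      refine ⟨N₁, i₁, χ₁, hχ₁, hne, 1 - δ, le_rfl, by linarith, fun N _ h ψ₂ h₂ => ?_⟩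
      have hpos : ∀ ψ : DirichletCharacter ℂ N, ψ ^ 2 = 1 → ∃ r : ℝ, 0 ≤ r ∧ Gch ψ (1 - δ : ℝ) = r := by
        intro ψ hψ
        have := Gch_pos_of hψ (b := 1 - δ) (by linarith) (fun y hy hy2 => by
          by_cases hy1 : y < 1
          · exact hex N inferInstance ψ hψ y hy hy1
          · exact Gch_ne_zero ψ (by simpa using hy1))
        refine ⟨(Gch ψ (1 - δ : ℝ)).re, (Complex.le_def.1 this).1, Complex.ext (by simp) ?_⟩
        simpa using Gch_real hψ (1 - δ)
      have h₁' : (DirichletCharacter.changeLevel h χ₁) ^ 2 = 1 := by rw [← map_pow, hχ₁, map_one]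
      obtain ⟨a, ha, ea⟩ := hpos 1 (one_pow 2)
      obtain ⟨b, hb, eb⟩ := hpos _ h₁'
      obtain ⟨c, hc, ec⟩ := hpos _ h₂
      obtain ⟨d, hd, ed⟩ := hpos (DirichletCharacter.changeLevel h χ₁ * ψ₂) (by rw [mul_pow, h₁', h₂, one_mul])
      rw [F4, ea, eb, ec, ed, ← ofReal_mul, ← ofReal_mul, ← ofReal_mul, ofReal_re]
      positivity
  obtain ⟨r₁, hr₁, hr₁8, hdisc₁⟩ := exists_disc χ₁
  set c₀ := (1 - β) * (Real.exp (-1) * (ε / 100) ^ 4 / 29952) * (N₁:ℝ) ^ (-ε) with hc₀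
  have hb0 : 0 < 1 - β := by linarith
  have hN₁ := Nr_pos (N := N₁)
  have hc₀0 : 0 < c₀ := by positivity
  refine ⟨min (min r₀ r₁) (min (ε / 200) (c₀ / 2)), by positivity, fun N _ χ hχ s hs hz => ?_⟩
  have hNpos : 0 < (N:ℝ) ^ (-ε) := by have := Nr_pos (N := N); positivity
  have hs1 : ‖s - 1‖ ≤ min (min r₀ r₁) (min (ε / 200) (c₀ / 2)) := by
    refine hs.trans ?_
    have : 0 < min (min r₀ r₁) (min (ε / 200) (c₀ / 2)) := by positivity
    nlinarith [hNpow N]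
  have hsr₀ : ‖s - 1‖ ≤ r₀ := hs1.trans ((min_le_left _ _).trans (min_le_left _ _))
  have hsr₁ : ‖s - 1‖ ≤ r₁ := hs1.trans ((min_le_left _ _).trans (min_le_right _ _))
  have hsε : ‖s - 1‖ ≤ ε / 200 := hs1.trans ((min_le_right _ _).trans (min_le_left _ _))
  have hsc : ‖s - 1‖ ≤ c₀ / 2 * (N:ℝ) ^ (-ε) := by
    refine hs.trans ?_
    gcongr
    exact (min_le_right _ _).trans (min_le_right _ _)
  have hre := re_pos_of_near hsr₀ hr₀8
  have hχ1 : χ ≠ 1 := by rintro rfl; exact hdisc N s hsr₀ hz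
  have d₁ : N₁ ∣ N₁ * N := dvd_mul_right _ _
  have d₂ : N ∣ N₁ * N := dvd_mul_left _ _
  set ψ₁ := DirichletCharacter.changeLevel d₁ χ₁
  set ψ₂ := DirichletCharacter.changeLevel d₂ χ
  have h₁ : ψ₁ ^ 2 = 1 := by rw [← map_pow, hχ₁, map_one]
  have h₂ : ψ₂ ^ 2 = 1 := by rw [← map_pow, hχ, map_one]
  have n₁ : ψ₁ ≠ 1 := by rwa [Ne, DirichletCharacter.changeLevel_eq_one_iff]
  have n₂ : ψ₂ ≠ 1 := by rwa [Ne, DirichletCharacter.changeLevel_eq_one_iff]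
  have hz₂ : Gch ψ₂ s = 0 := (Gch_changeLevel_iff d₂ χ hre).2 hz
  have n₃ : ψ₁ * ψ₂ ≠ 1 := by
    intro h3
    have h4 : ψ₂ = ψ₁ := by
      have : ψ₁ * (ψ₁ * ψ₂) = ψ₁ := by rw [h3, mul_one]
      rwa [← mul_assoc, ← pow_two, h₁, one_mul] at this
    rw [h4] at hz₂
    exact hdisc₁ s hsr₁ ((Gch_changeLevel_iff d₁ χ₁ hre).1 hz₂)
  have := siegel_pair h₁ h₂ n₁ n₂ n₃ hε hε1 (β := β) (by have := min_le_right r₀ (ε / 1000); linarith) hβ1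
    (hF _ d₁ ψ₂ h₂) (ρ := s) (by linarith) hz₂
  push_cast at this
  rw [Real.mul_rpow (by positivity) (by positivity), ← mul_assoc, ← hc₀] at this
  nlinarith [mul_pos hc₀0 hNpos]

end SW

/-! ### Kernels and Mellin inversion -/

namespace SW
open Complex Metric MeasureTheory Set

theorem ss_lower {s : ℂ} (hs : 1 / 2 ≤ s.re) : (1 + s.im ^ 2) / 2 ≤ ‖s * (s + 1)‖ := by
  rw [norm_mul]
  have h1 : (1 + s.im ^ 2) / 4 ≤ ‖s‖ ^ 2 := by
    rw [← normSq_eq_norm_sq, normSq_apply]; nlinarith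
  have h2 : (1 + s.im ^ 2) ≤ ‖s + 1‖ ^ 2 := by
    rw [← normSq_eq_norm_sq, normSq_apply]; simp; nlinarith
  have h3 : 0 ≤ 1 + s.im ^ 2 := by positivity
  refine (le_abs_self _).trans (abs_le_of_sq_le_sq ?_ (by positivity))
  rw [mul_pow]
  calc ((1 + s.im ^ 2) / 2) ^ 2 = ((1 + s.im ^ 2) / 4) * (1 + s.im ^ 2) := by ring
    _ ≤ _ := by gcongr

theorem ss_inv_le {s : ℂ} (hs : 1 / 2 ≤ s.re) : ‖1 / (s * (s + 1))‖ ≤ 2 * (1 + s.im ^ 2)⁻¹ := by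
  have h := ss_lower hs
  have h3 : 0 < 1 + s.im ^ 2 := by positivity
  rw [norm_div, norm_one, div_le_iff₀ (by linarith), ← div_eq_mul_inv, div_mul_eq_mul_div,
    le_div_iff₀ h3]
  linarith

theorem ss_ne {s : ℂ} (hs : 1 / 2 ≤ s.re) : s ≠ 0 ∧ s + 1 ≠ 0 := by
  constructor
  · rintro rfl; norm_num at hs
  · intro h
    have := congrArg re h
    simp at this; linarith

/-- The Riesz kernel `(1 - u)₊`, written as a combination of truncated powers. -/
noncomputable def Wk (u : ℝ) : ℂ :=
  indicator (Ioc 0 1) (fun t => ↑t ^ (0:ℂ) : ℝ → ℂ) u - indicator (Ioc 0 1) (fun t => ↑t ^ (1:ℂ) : ℝ → ℂ) u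

/-- The kernel `(1 - u)₊² / (2u)`, written as a combination of truncated powers. -/
noncomputable def Vk (u : ℝ) : ℂ :=
  (1 / 2 : ℂ) • (indicator (Ioc 0 1) (fun t => ↑t ^ (-1:ℂ) : ℝ → ℂ) u -
    indicator (Ioc 0 1) (fun t => ↑t ^ (0:ℂ) : ℝ → ℂ) u - Wk u)

theorem Wk_eq {u : ℝ} (hu : 0 < u) : Wk u = ((max (1 - u) 0 : ℝ) : ℂ) := by
  unfold Wk
  by_cases h : u ≤ 1
  · simp [indicator, hu, h]
  · rw [max_eq_right (by linarith)]
    simp [indicator, h]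

theorem Vk_eq {u : ℝ} (hu : 0 < u) : Vk u = (((max (1 - u) 0) ^ 2 / (2 * u) : ℝ) : ℂ) := by
  unfold Vk
  rw [Wk_eq hu]
  have : (u:ℂ) ≠ 0 := by exact_mod_cast hu.ne'
  by_cases h : u ≤ 1
  · simp [indicator, hu, h, cpow_neg_one]
    field_simp
    try ring
  · rw [max_eq_right (by linarith)]
    simp [indicator, h]

theorem hasMellin_Wk {s : ℂ} (hs : 1 / 2 ≤ s.re) : HasMellin Wk s (1 / (s * (s + 1))) := by
  have h0 := hasMellin_cpow_Ioc 0 (s := s) (by simp; linarith)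
  have h1 := hasMellin_cpow_Ioc 1 (s := s) (by simp; linarith)
  have := hasMellin_sub h0.1 h1.1
  rw [h0.2, h1.2] at this
  obtain ⟨a, b⟩ := ss_ne hs
  convert! this using 1
  rw [add_zero]
  field_simp
  ring

theorem hasMellin_Vk {s : ℂ} (hs : 1 < s.re) :
    HasMellin Vk s (1 / (s - 1) * (1 / (s * (s + 1)))) := by
  have h0 := hasMellin_cpow_Ioc (-1) (s := s) (by simp; linarith)
  have h1 := hasMellin_cpow_Ioc 0 (s := s) (by simp; linarith)
  have hW := hasMellin_Wk (s := s) (by linarith)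
  have h2 := hasMellin_sub h0.1 h1.1
  have h3 := hasMellin_sub h2.1 hW.1
  have h4 := hasMellin_const_smul h3.1 (1 / 2 : ℂ)
  rw [h3.2, h2.2, h0.2, h1.2, hW.2] at h4
  obtain ⟨a, b⟩ := ss_ne (s := s) (by linarith)
  have c : s - 1 ≠ 0 := by
    intro h
    have := congrArg re h
    simp at this; linarith
  have c' : s + -1 ≠ 0 := c
  convert! h4 using 1
  rw [smul_eq_mul, add_zero, ← sub_eq_add_neg]
  field_simp
  ring

theorem integrable_ss {σ : ℝ} (hs : 1 / 2 ≤ σ) :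
    Integrable fun y : ℝ => 1 / (((σ:ℂ) + y * I) * ((σ:ℂ) + y * I + 1)) := by
  have hre : ∀ y : ℝ, ((σ:ℂ) + y * I).re = σ := fun y => by simp
  refine (integrable_inv_one_add_sq.const_mul 2).mono' ?_ (ae_of_all _ fun y => ?_)
  · apply Continuous.aestronglyMeasurable
    refine Continuous.div continuous_const (by fun_prop) fun y => ?_
    obtain ⟨a, b⟩ := ss_ne (s := (σ:ℂ) + y * I) (by rw [hre]; exact hs)
    exact mul_ne_zero a b
  · have := ss_inv_le (s := (σ:ℂ) + y * I) (by rw [hre]; exact hs)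
    simpa using this

theorem sub_one_ne {s : ℂ} (hs : 1 < s.re) : s - 1 ≠ 0 := by
  intro h
  have := congrArg re h
  simp at this; linarith

theorem integrable_ss1 {σ : ℝ} (hs : 1 < σ) :
    Integrable fun y : ℝ => 1 / ((σ:ℂ) + y * I - 1) * (1 / (((σ:ℂ) + y * I) * ((σ:ℂ) + y * I + 1))) := by
  have hre : ∀ y : ℝ, ((σ:ℂ) + y * I).re = σ := fun y => by simp
  refine (integrable_ss (σ := σ) (by linarith)).bdd_mul (c := 1 / (σ - 1)) ?_ (ae_of_all _ fun y => ?_)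
  · apply Continuous.aestronglyMeasurable
    refine Continuous.div continuous_const (by fun_prop) fun y => ?_
    exact sub_one_ne (by rw [hre]; exact hs)
  · rw [norm_div, norm_one]
    have : σ - 1 ≤ ‖(σ:ℂ) + y * I - 1‖ := by
      have := re_le_norm ((σ:ℂ) + y * I - 1)
      simpa using this
    have h0 : 0 < σ - 1 := by linarith
    gcongr

/-- Mellin inversion for the Riesz kernel. -/
theorem Wk_inv {σ u : ℝ} (hs : 1 / 2 ≤ σ) (hu : 0 < u) :
    ((max (1 - u) 0 : ℝ) : ℂ) = (1 / (2 * Real.pi) : ℝ) • ∫ y : ℝ, (u:ℂ) ^ (-((σ:ℂ) + y * I)) *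
      (1 / (((σ:ℂ) + y * I) * ((σ:ℂ) + y * I + 1))) := by
  have hre : ∀ y : ℝ, ((σ:ℂ) + y * I).re = σ := fun y => by simp
  have hm : ∀ y : ℝ, mellin Wk ((σ:ℂ) + y * I) = 1 / (((σ:ℂ) + y * I) * ((σ:ℂ) + y * I + 1)) :=
    fun y => (hasMellin_Wk (by rw [hre]; exact hs)).2
  have := mellinInv_mellin_eq σ Wk hu (hasMellin_Wk (by simpa using hs)).1 ?_ ?_
  · rw [Wk_eq hu, mellinInv] at this
    simp only [hm, smul_eq_mul] at this
    rw [← this]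
  · unfold VerticalIntegrable
    simp only [hm]
    exact integrable_ss hs
  · have : Wk =ᶠ[nhds u] fun u => ((max (1 - u) 0 : ℝ) : ℂ) := by
      filter_upwards [Ioi_mem_nhds hu] with v hv using Wk_eq hv
    refine ContinuousAt.congr ?_ this.symm
    fun_prop

/-- Mellin inversion for `Vk`, which accounts for the pole of `ζ'/ζ` at `1`. -/
theorem Vk_inv {σ u : ℝ} (hs : 1 < σ) (hu : 0 < u) :
    (((max (1 - u) 0) ^ 2 / (2 * u) : ℝ) : ℂ) = (1 / (2 * Real.pi) : ℝ) • ∫ y : ℝ, (u:ℂ) ^ (-((σ:ℂ) + y * I)) *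
      (1 / ((σ:ℂ) + y * I - 1) * (1 / (((σ:ℂ) + y * I) * ((σ:ℂ) + y * I + 1)))) := by
  have hre : ∀ y : ℝ, ((σ:ℂ) + y * I).re = σ := fun y => by simp
  have hm : ∀ y : ℝ, mellin Vk ((σ:ℂ) + y * I) =
      1 / ((σ:ℂ) + y * I - 1) * (1 / (((σ:ℂ) + y * I) * ((σ:ℂ) + y * I + 1))) :=
    fun y => (hasMellin_Vk (by rw [hre]; exact hs)).2
  have := mellinInv_mellin_eq σ Vk hu (hasMellin_Vk (by simpa using hs)).1 ?_ ?_
  · rw [Vk_eq hu, mellinInv] at this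
    simp only [hm, smul_eq_mul] at this
    rw [← this]
  · unfold VerticalIntegrable
    simp only [hm]
    exact integrable_ss1 hs
  · have : Vk =ᶠ[nhds u] fun u => (((max (1 - u) 0) ^ 2 / (2 * u) : ℝ) : ℂ) := by
      filter_upwards [Ioi_mem_nhds hu] with v hv using Vk_eq hv
    refine ContinuousAt.congr ?_ this.symm
    apply continuous_ofReal.continuousAt.comp
    apply ContinuousAt.div (by fun_prop) (by fun_prop) (by positivity)

end SW

/-! ### Perron's formula -/

namespace SW
open Complex Metric MeasureTheory Set
variable {N : ℕ} [NeZero N]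

/-- Minus the logarithmic derivative of `Gch χ`. -/
noncomputable def Kch (χ : DirichletCharacter ℂ N) (s : ℂ) : ℂ := -(deriv (Gch χ) s / Gch χ s)

/-- The Mellin–Perron weight `x ^ s / (s (s + 1))`. -/
noncomputable def Pw (x : ℝ) (s : ℂ) : ℂ := (x:ℂ) ^ s * (1 / (s * (s + 1)))

theorem LSeries_eq_Kch (χ : DirichletCharacter ℂ N) {s : ℂ} (hs : 1 < s.re) :
    LSeries (cL χ) s = Kch χ s + dl χ / (s - 1) := logDeriv_Gch χ hs

theorem norm_Pw_le {x : ℝ} (hx : 0 < x) {s : ℂ} (hs : 1 / 2 ≤ s.re) :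
    ‖Pw x s‖ ≤ x ^ s.re * (2 * (1 + s.im ^ 2)⁻¹) := by
  rw [Pw, norm_mul, norm_cpow_eq_rpow_re_of_pos hx]
  gcongr
  exact ss_inv_le hs

theorem continuous_Pw {x σ : ℝ} (hx : 0 < x) (hs : 1 / 2 ≤ σ) :
    Continuous fun y : ℝ => Pw x ((σ:ℂ) + y * I) := by
  have hre : ∀ y : ℝ, ((σ:ℂ) + y * I).re = σ := fun y => by simp
  have hx' : (x:ℂ) ≠ 0 := by exact_mod_cast hx.ne'
  unfold Pw
  refine Continuous.mul ?_ ?_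
  · exact Continuous.const_cpow (by fun_prop) (Or.inl hx')
  · refine Continuous.div continuous_const (by fun_prop) fun y => ?_
    obtain ⟨a, b⟩ := ss_ne (s := (σ:ℂ) + y * I) (by rw [hre]; exact hs)
    exact mul_ne_zero a b

theorem integrable_Pw {x σ : ℝ} (hx : 0 < x) (hs : 1 / 2 ≤ σ) :
    Integrable fun y : ℝ => Pw x ((σ:ℂ) + y * I) := by
  refine ((integrable_inv_one_add_sq.const_mul 2).const_mul (x ^ σ)).mono'
    (continuous_Pw hx hs).aestronglyMeasurable (ae_of_all _ fun y => ?_)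
  simpa using norm_Pw_le hx (s := (σ:ℂ) + y * I) (by simpa using hs)

theorem inv_cpow_ofReal_nonneg {x : ℝ} {s : ℂ} (hx : 0 ≤ x) : ((x:ℂ)⁻¹) ^ s = ((x:ℂ) ^ s)⁻¹ := by
  rw [inv_cpow]
  rw [arg_ofReal_of_nonneg hx]; exact Real.pi_pos.ne

/-- Perron's formula with the weight `1 - n / x`, for which the integral converges absolutely. -/
theorem perron_sum (χ : DirichletCharacter ℂ N) {x σ : ℝ} (hx : 0 < x) (hs : 1 < σ) :
    ∑ n ∈ Finset.range (⌊x⌋₊ + 1), cL χ n * (1 - n / x) = (1 / (2 * Real.pi) : ℝ) •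
      ∫ y : ℝ, LSeries (cL χ) ((σ:ℂ) + y * I) * Pw x ((σ:ℂ) + y * I) := by
  have hx' : (x:ℂ) ≠ 0 := by exact_mod_cast hx.ne'
  set F : ℕ → ℝ → ℂ := fun n y => LSeries.term (cL χ) ((σ:ℂ) + y * I) n * Pw x ((σ:ℂ) + y * I) with hF
  have hbd : ∀ (n : ℕ) (y : ℝ), ‖LSeries.term (cL χ) ((σ:ℂ) + y * I) n‖ ≤
      ArithmeticFunction.vonMangoldt n * (n:ℝ) ^ (-σ) := by
    intro n y
    have h0 : 0 ≤ ArithmeticFunction.vonMangoldt n * (n:ℝ) ^ (-σ) :=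
      mul_nonneg ArithmeticFunction.vonMangoldt_nonneg (by positivity)
    rcases eq_or_ne n 0 with rfl | hn
    · simp
    rw [cL_term, norm_mul, Complex.norm_real, Real.norm_of_nonneg h0]
    exact mul_le_of_le_one_right h0 (norm_z_le χ y hn)
  have hcont : ∀ n, Continuous fun y : ℝ => LSeries.term (cL χ) ((σ:ℂ) + y * I) n := by
    intro n
    rcases eq_or_ne n 0 with rfl | hn
    · simp only [LSeries.term_zero]; exact continuous_const
    · simp only [LSeries.term_of_ne_zero hn]
      have hn' : (n:ℂ) ≠ 0 := by exact_mod_cast hn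
      refine Continuous.div continuous_const
        (Continuous.const_cpow (by fun_prop) (Or.inl hn')) fun y => ?_
      simp [cpow_eq_zero_iff, hn]
  have hInt : ∀ n, Integrable (F n) := fun n =>
    (integrable_Pw hx (by linarith)).bdd_mul (hcont n).aestronglyMeasurable (ae_of_all _ (hbd n))
  have hsum : Summable fun n => ∫ y, ‖F n y‖ := by
    refine Summable.of_nonneg_of_le (fun n => integral_nonneg fun y => norm_nonneg _) (fun n => ?_)
      ((AL_summable hs).mul_right (∫ y : ℝ, ‖Pw x ((σ:ℂ) + y * I)‖))
    rw [← integral_const_mul]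
    refine integral_mono (hInt n).norm ((integrable_Pw hx (by linarith)).norm.const_mul _) fun y => ?_
    simp only [hF, norm_mul]
    exact mul_le_mul_of_nonneg_right (hbd n y) (norm_nonneg _)
  have key := hasSum_integral_of_summable_integral_norm hInt hsum
  have e1 : ∀ y, ∑' n, F n y = LSeries (cL χ) ((σ:ℂ) + y * I) * Pw x ((σ:ℂ) + y * I) := by
    intro y; simp only [hF, tsum_mul_right, LSeries]
  simp only [e1] at key
  have e2 : ∀ n, (1 / (2 * Real.pi) : ℝ) • ∫ y, F n y =
      cL χ n * ((max (1 - n / x) 0 : ℝ) : ℂ) := by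
    intro n
    rcases eq_or_ne n 0 with rfl | hn
    · simp [hF, cL]
    have hn0 : (0:ℝ) < n := by exact_mod_cast Nat.pos_of_ne_zero hn
    have hn' : (n:ℂ) ≠ 0 := by exact_mod_cast hn
    rw [Wk_inv (σ := σ) (by linarith) (div_pos hn0 hx), mul_smul_comm, ← integral_const_mul]
    congr 2
    ext y
    simp only [hF, LSeries.term_of_ne_zero hn, Pw]
    have : ((n / x : ℝ) : ℂ) ^ (-((σ:ℂ) + y * I)) = (x:ℂ) ^ ((σ:ℂ) + y * I) / (n:ℂ) ^ ((σ:ℂ) + y * I) := by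
      rw [cpow_neg, ofReal_div, div_eq_mul_inv, ← ofReal_inv, mul_cpow_ofReal_nonneg hn0.le (by positivity),
        ofReal_inv, inv_cpow_ofReal_nonneg hx.le, ofReal_natCast]
      rw [mul_inv, inv_inv]; ring
    rw [this]
    ring
  have key2 := key.const_smul (1 / (2 * Real.pi) : ℝ)
  simp only [e2] at key2
  rw [← key2.tsum_eq, tsum_eq_sum (s := Finset.range (⌊x⌋₊ + 1))]
  · refine Finset.sum_congr rfl fun n hn => ?_
    have h1 : n ≤ ⌊x⌋₊ := by simpa [Nat.lt_succ_iff] using hn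
    have h2 : (n:ℝ) ≤ x := (Nat.le_floor_iff hx.le).1 h1
    rw [max_eq_left]
    · push_cast; ring
    · rw [sub_nonneg, div_le_one hx]; exact h2
  · intro n hn
    have h1 : ⌊x⌋₊ < n := by simpa [Nat.lt_succ_iff] using hn
    have h2 : x < n := (Nat.floor_lt hx.le).1 h1
    rw [max_eq_right]
    · simp
    · rw [sub_nonpos, one_le_div hx]; exact h2.le

theorem continuous_Kch (χ : DirichletCharacter ℂ N) {σ : ℝ} (hs : 1 < σ) :
    Continuous fun y : ℝ => Kch χ ((σ:ℂ) + y * I) := by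
  unfold Kch
  have hd : Continuous (deriv (Gch χ)) :=
    ((differentiable_Gch χ).contDiff (n := 1)).continuous_deriv le_rfl
  refine (Continuous.div (hd.comp (by fun_prop)) ((differentiable_Gch χ).continuous.comp (by fun_prop))
    fun y => Gch_ne_zero χ (by simp; linarith)).neg

theorem norm_dl_le (χ : DirichletCharacter ℂ N) : ‖dl χ‖ ≤ 1 := by
  unfold dl; split_ifs <;> simp

theorem norm_Kch_le (χ : DirichletCharacter ℂ N) {s : ℂ} (hs : 1 < s.re) {d : ℝ} (hd : 0 < d)
    (h : d ≤ ‖s - 1‖) : ‖Kch χ s‖ ≤ AL s.re + 1 / d := by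
  have : Kch χ s = LSeries (cL χ) s - dl χ / (s - 1) := by rw [LSeries_eq_Kch χ hs]; ring
  rw [this]
  refine (norm_sub_le _ _).trans (add_le_add (norm_cL_le χ hs) ?_)
  rw [norm_div]
  gcongr
  exact norm_dl_le χ

theorem integrable_KP (χ : DirichletCharacter ℂ N) {x σ : ℝ} (hx : 0 < x) (hs : 1 < σ) :
    Integrable fun y : ℝ => Kch χ ((σ:ℂ) + y * I) * Pw x ((σ:ℂ) + y * I) := by
  refine (integrable_Pw hx (by linarith)).bdd_mul (c := AL σ + 1 / (σ - 1)) (continuous_Kch χ hs).aestronglyMeasurable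
    (ae_of_all _ fun y => ?_)
  have := norm_Kch_le χ (s := (σ:ℂ) + y * I) (by simpa using hs) (d := σ - 1) (by linarith) (by
    have := re_le_norm ((σ:ℂ) + y * I - 1)
    simpa using this)
  simpa using this

/-- Perron's formula with the contribution of the pole at `1` moved to the left-hand side, so that
the remaining integrand is holomorphic wherever `Gch χ` does not vanish. -/
theorem perron (χ : DirichletCharacter ℂ N) {x σ : ℝ} (hx : 1 ≤ x) (hs : 1 < σ) :
    ∑ n ∈ Finset.range (⌊x⌋₊ + 1), cL χ n * (1 - n / x) - dl χ * (((x - 1) ^ 2 / (2 * x) : ℝ) : ℂ) =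
      (1 / (2 * Real.pi) : ℝ) •
      ∫ y : ℝ, Kch χ ((σ:ℂ) + y * I) * Pw x ((σ:ℂ) + y * I) := by
  have hx0 : 0 < x := by linarith
  have hV := Vk_inv hs (u := x⁻¹) (by positivity)
  rw [max_eq_left (by rw [sub_nonneg]; exact inv_le_one_of_one_le₀ hx)] at hV
  have e0 : (1 - x⁻¹) ^ 2 / (2 * x⁻¹) = (x - 1) ^ 2 / (2 * x) := by field_simp
  rw [e0] at hV
  rw [perron_sum χ hx0 hs, hV, mul_smul_comm, ← smul_sub, ← integral_const_mul]
  have e1 : ∀ y : ℝ, ((x⁻¹:ℝ):ℂ) ^ (-((σ:ℂ) + y * I)) = (x:ℂ) ^ ((σ:ℂ) + y * I) := by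
    intro y
    rw [cpow_neg, ofReal_inv, inv_cpow_ofReal_nonneg hx0.le, inv_inv]
  simp only [e1]
  have hi2 : Integrable fun y : ℝ => dl χ * ((x:ℂ) ^ ((σ:ℂ) + y * I) * (1 / ((σ:ℂ) + y * I - 1) *
      (1 / (((σ:ℂ) + y * I) * ((σ:ℂ) + y * I + 1))))) := by
    apply Integrable.const_mul
    refine (integrable_ss1 hs).bdd_mul (c := x ^ σ) ?_ (ae_of_all _ fun y => ?_)
    · exact (Continuous.const_cpow (by fun_prop) (Or.inl (by exact_mod_cast hx0.ne'))).aestronglyMeasurable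
    · rw [norm_cpow_eq_rpow_re_of_pos hx0]; simp
  have e2 : ∀ y : ℝ, LSeries (cL χ) ((σ:ℂ) + y * I) * Pw x ((σ:ℂ) + y * I) =
      Kch χ ((σ:ℂ) + y * I) * Pw x ((σ:ℂ) + y * I) +
      dl χ * ((x:ℂ) ^ ((σ:ℂ) + y * I) * (1 / ((σ:ℂ) + y * I - 1) *
      (1 / (((σ:ℂ) + y * I) * ((σ:ℂ) + y * I + 1))))) := by
    intro y
    rw [LSeries_eq_Kch χ (by simpa using hs), Pw]
    ring
  simp only [e2]
  rw [integral_add (integrable_KP χ hx0 hs) hi2, add_sub_cancel_right]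

end SW

/-! ### The contour shift -/

namespace SW
open Complex Metric MeasureTheory Set
variable {N : ℕ} [NeZero N]

theorem arctan_tail {T : ℝ} (hT : 0 < T) : Real.pi / 2 - Real.arctan T ≤ 1 / T := by
  rw [← Real.arctan_inv_of_pos hT, one_div]
  have h1 : 0 ≤ Real.arctan T⁻¹ := Real.arctan_nonneg.2 (by positivity)
  have := Real.le_tan h1 (Real.arctan_lt_pi_div_two _)
  rwa [Real.tan_arctan] at this

/-- Splitting of an integral over the line into a central part and two tails dominated by
`D / (1 + y²)`. -/
theorem line_split {f : ℝ → ℂ} (hf : Integrable f) {D T : ℝ} (hT : 0 < T)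
    (hb : ∀ y : ℝ, T ≤ |y| → ‖f y‖ ≤ D * (1 + y ^ 2)⁻¹) :
    ‖∫ y, f y‖ ≤ ‖∫ y in (-T)..T, f y‖ + 2 * (D * (1 / T)) := by
  have hD : 0 ≤ D := by
    have := (norm_nonneg _).trans (hb T (le_abs_self T))
    by_contra h
    push Not at h
    have : D * (1 + T ^ 2)⁻¹ < 0 := mul_neg_of_neg_of_pos h (by positivity)
    linarith
  have h1 : ∫ y, f y = (∫ y in Iic (-T), f y) + (∫ y in (-T)..T, f y) + ∫ y in Ioi T, f y := by
    have e1 := intervalIntegral.integral_Iic_sub_Iic (a := -T) (b := T) hf.integrableOn hf.integrableOn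
    have e2 := integral_add_compl (measurableSet_Iic (a := T)) hf
    rw [compl_Iic] at e2
    rw [← e2, ← e1]; ring
  have h2 : ‖∫ y in Iic (-T), f y‖ ≤ D * (1 / T) := by
    calc ‖∫ y in Iic (-T), f y‖ ≤ ∫ y in Iic (-T), D * (1 + y ^ 2)⁻¹ := by
          refine norm_integral_le_of_norm_le (integrable_inv_one_add_sq.const_mul D).integrableOn ?_
          refine (ae_restrict_iff' measurableSet_Iic).2 (ae_of_all _ fun y hy => hb y ?_)
          rw [mem_Iic] at hy
          rw [abs_of_nonpos (by linarith)]; linarith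
      _ = D * (Real.pi / 2 - Real.arctan T) := by
          rw [integral_const_mul, integral_Iic_inv_one_add_sq, Real.arctan_neg]; ring
      _ ≤ _ := by gcongr; exact arctan_tail hT
  have h3 : ‖∫ y in Ioi T, f y‖ ≤ D * (1 / T) := by
    calc ‖∫ y in Ioi T, f y‖ ≤ ∫ y in Ioi T, D * (1 + y ^ 2)⁻¹ := by
          refine norm_integral_le_of_norm_le (integrable_inv_one_add_sq.const_mul D).integrableOn ?_
          refine (ae_restrict_iff' measurableSet_Ioi).2 (ae_of_all _ fun y hy => hb y ?_)
          rw [mem_Ioi] at hy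
          exact hy.le.trans (le_abs_self y)
      _ = D * (Real.pi / 2 - Real.arctan T) := by
          rw [integral_const_mul, integral_Ioi_inv_one_add_sq]
      _ ≤ _ := by gcongr; exact arctan_tail hT
  rw [h1]
  refine (norm_add₃_le).trans ?_
  linarith

/-- The integral over `Re s = σ` is bounded by moving its central part `|Im s| ≤ T` to the line
`Re s = σ₁`, inside a region where `Gch χ` has no zeros. -/
theorem shift_bound (χ : DirichletCharacter ℂ N) {x σ σ₁ T M : ℝ} (hx : 1 ≤ x) (hσ : 1 < σ)
    (hσ2 : σ ≤ 2) (h₁ : 1 / 2 ≤ σ₁) (h₁' : σ₁ < 1) (hT : 1 ≤ T)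
    (hG : ∀ s : ℂ, σ₁ ≤ s.re → s.re ≤ 2 → |s.im| ≤ T →
      Gch χ s ≠ 0 ∧ ‖deriv (Gch χ) s / Gch χ s‖ ≤ M) :
    ‖∫ y : ℝ, Kch χ ((σ:ℂ) + y * I) * Pw x ((σ:ℂ) + y * I)‖ ≤
      x ^ σ * (4 * (AL σ + 1) + 6 * M) / T + 2 * Real.pi * M * x ^ σ₁ := by
  have hx0 : 0 < x := by linarith
  have hM : 0 ≤ M := (norm_nonneg _).trans (hG 1 (by simpa using h₁'.le) (by simp) (by simp; linarith)).2
  set f : ℂ → ℂ := fun s => Kch χ s * Pw x s with hf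
  have hK : ∀ s : ℂ, σ₁ ≤ s.re → s.re ≤ 2 → |s.im| ≤ T → ‖Kch χ s‖ ≤ M := fun s a b c => by
    rw [Kch, norm_neg]; exact (hG s a b c).2
  have htail := line_split (integrable_KP χ hx0 hσ) (D := 2 * (AL σ + 1) * x ^ σ) (T := T) (by linarith)
    (fun y hy => by
      have h1 := norm_Kch_le χ (s := (σ:ℂ) + y * I) (by simpa using hσ) one_pos (by
        have := abs_im_le_norm ((σ:ℂ) + y * I - 1)
        simp at this; linarith)
      have h2 := norm_Pw_le hx0 (s := (σ:ℂ) + y * I) (by simp; linarith)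
      simp at h1 h2
      rw [norm_mul]
      calc _ ≤ (AL σ + 1) * (x ^ σ * (2 * (1 + y ^ 2)⁻¹)) := by
            refine mul_le_mul h1 h2 (norm_nonneg _) ((norm_nonneg _).trans h1)
        _ = _ := by ring)
  -- Cauchy's theorem on the rectangle `[σ₁, σ] × [-T, T]`
  have hdiff : DifferentiableOn ℂ f (uIcc σ₁ σ ×ℂ uIcc (-T) T) := by
    intro s hs
    rw [mem_reProdIm, uIcc_of_le (by linarith), uIcc_of_le (by linarith)] at hs
    simp only [mem_Icc] at hs
    obtain ⟨⟨a, b⟩, c, d⟩ := hs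
    have hg := (hG s a (by linarith) (abs_le.2 ⟨c, d⟩)).1
    obtain ⟨n1, n2⟩ := ss_ne (s := s) (by linarith)
    have hd1 : DifferentiableAt ℂ (deriv (Gch χ)) s :=
      ((differentiable_Gch χ).analyticAt s).deriv.differentiableAt
    apply DifferentiableAt.differentiableWithinAt
    apply DifferentiableAt.mul
    · exact (hd1.div (differentiable_Gch χ s) hg).neg
    · apply DifferentiableAt.mul
      · exact DifferentiableAt.const_cpow differentiableAt_id (Or.inl (by exact_mod_cast hx0.ne'))
      · exact DifferentiableAt.div (by fun_prop) (by fun_prop) (mul_ne_zero n1 n2)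
  have hrect := integral_boundary_rect_eq_zero_of_differentiableOn f ⟨σ₁, -T⟩ ⟨σ, T⟩ hdiff
  simp only at hrect
  have hhor : ∀ τ : ℝ, |τ| = T → ‖∫ u : ℝ in σ₁..σ, f (u + τ * I)‖ ≤ 3 * M * x ^ σ / T := by
    intro τ hτ
    have := intervalIntegral.norm_integral_le_of_norm_le_const (a := σ₁) (b := σ)
      (f := fun u : ℝ => f (u + τ * I)) (C := M * (x ^ σ * (2 / T))) (fun u hu => by
      rw [uIoc_of_le (by linarith)] at hu
      have hre : ((u:ℂ) + τ * I).re = u := by simp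
      have him : ((u:ℂ) + τ * I).im = τ := by simp
      have h1 := hK ((u:ℂ) + τ * I) (by rw [hre]; exact hu.1.le) (by rw [hre]; linarith [hu.2])
        (by rw [him]; exact hτ.le)
      have h2 := norm_Pw_le hx0 (s := (u:ℂ) + τ * I) (by rw [hre]; linarith [hu.1])
      rw [hre, him] at h2
      simp only [hf, norm_mul]
      refine mul_le_mul h1 (h2.trans ?_) (norm_nonneg _) hM
      have h3 : (1 + τ ^ 2)⁻¹ ≤ 1 / T := by
        rw [← sq_abs, hτ, one_div]
        apply inv_anti₀ (by linarith)
        nlinarith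
      calc x ^ u * (2 * (1 + τ ^ 2)⁻¹) ≤ x ^ σ * (2 * (1 / T)) := by
            gcongr
            exact hu.2
        _ = _ := by ring)
    refine this.trans ?_
    rw [abs_of_nonneg (by linarith)]
    have h4 : σ - σ₁ ≤ 3 / 2 := by linarith
    calc M * (x ^ σ * (2 / T)) * (σ - σ₁) ≤ M * (x ^ σ * (2 / T)) * (3 / 2) := by gcongr
      _ = _ := by ring
  have hleft : ‖∫ y : ℝ in (-T)..T, f (σ₁ + y * I)‖ ≤ 2 * Real.pi * M * x ^ σ₁ := by
    have h5 := intervalIntegral.norm_integral_le_of_norm_le (μ := volume) (a := -T) (b := T)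
      (f := fun y : ℝ => f (σ₁ + y * I)) (g := fun y => 2 * M * x ^ σ₁ * (1 + y ^ 2)⁻¹) (by linarith)
      (ae_of_all _ fun y hy => by
        have hre : ((σ₁:ℂ) + y * I).re = σ₁ := by simp
        have him : ((σ₁:ℂ) + y * I).im = y := by simp
        have h1 := hK ((σ₁:ℂ) + y * I) (by rw [hre]) (by rw [hre]; linarith)
          (by rw [him]; exact abs_le.2 ⟨hy.1.le, hy.2⟩)
        have h2 := norm_Pw_le hx0 (s := (σ₁:ℂ) + y * I) (by rw [hre]; exact h₁)
        rw [hre, him] at h2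
        simp only [hf, norm_mul]
        calc _ ≤ M * (x ^ σ₁ * (2 * (1 + y ^ 2)⁻¹)) := mul_le_mul h1 h2 (norm_nonneg _) hM
          _ = _ := by ring) ((integrable_inv_one_add_sq.const_mul _).intervalIntegrable)
    refine h5.trans ?_
    rw [intervalIntegral.integral_const_mul]
    have h6 : ∫ y : ℝ in (-T)..T, (1 + y ^ 2)⁻¹ ≤ Real.pi := by
      have := integral_inv_one_add_sq (a := -T) (b := T)
      have h7 := Real.arctan_lt_pi_div_two T
      rw [Real.arctan_neg] at this
      have h8 : ∫ y : ℝ in (-T)..T, (1 + y ^ 2)⁻¹ = Real.arctan T - -Real.arctan T := by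
        simp
      rw [h8]; linarith
    calc 2 * M * x ^ σ₁ * _ ≤ 2 * M * x ^ σ₁ * Real.pi := by gcongr
      _ = _ := by ring
  have hmid : ‖∫ y : ℝ in (-T)..T, f (σ + y * I)‖ ≤ 6 * M * x ^ σ / T + 2 * Real.pi * M * x ^ σ₁ := by
    have e : I • (∫ y : ℝ in (-T)..T, f (σ + y * I)) = I • (∫ y : ℝ in (-T)..T, f (σ₁ + y * I)) -
        (∫ u : ℝ in σ₁..σ, f (u + (-T : ℝ) * I)) + ∫ u : ℝ in σ₁..σ, f (u + (T:ℝ) * I) := by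
      rw [← sub_eq_zero, ← hrect]; ring
    have e2 := congrArg norm e
    rw [norm_smul, norm_I, one_mul] at e2
    rw [e2]
    refine (norm_add_le _ _).trans ?_
    have := norm_sub_le (I • (∫ y : ℝ in (-T)..T, f (σ₁ + y * I))) (∫ u : ℝ in σ₁..σ, f (u + (-T : ℝ) * I))
    rw [norm_smul, norm_I, one_mul] at this
    have h1 := hhor (-T) (by rw [abs_neg, abs_of_nonneg (by linarith)])
    have h2 := hhor T (by rw [abs_of_nonneg (by linarith)])
    have e3 : 6 * M * x ^ σ / T = 3 * M * x ^ σ / T + 3 * M * x ^ σ / T := by ring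
    linarith
  calc _ ≤ _ := htail
    _ ≤ (6 * M * x ^ σ / T + 2 * Real.pi * M * x ^ σ₁) + 2 * (2 * (AL σ + 1) * x ^ σ * (1 / T)) := by
        gcongr
    _ = _ := by ring

end SW

/-! ### Smoothed prime sums over characters -/

namespace SW
open Complex Metric MeasureTheory Set

/-- Powers of `log x` are eventually dominated by `exp (√(log x))`. -/
theorem eventually_pow_log_le (A : ℝ) : ∀ᶠ x : ℝ in atTop,
    (Real.log x) ^ A ≤ Real.exp (Real.sqrt (Real.log x)) := by
  have h1 : Tendsto (fun x => Real.sqrt (Real.log x)) atTop atTop :=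
    Real.tendsto_sqrt_atTop.comp Real.tendsto_log_atTop
  have h2 := h1.eventually (isLittleO_rpow_exp_atTop (2 * A)).eventuallyLE
  filter_upwards [h2, eventually_ge_atTop 1] with x hx hx1
  have hl := Real.log_nonneg hx1
  rw [Real.rpow_mul (Real.sqrt_nonneg _), Real.rpow_two, Real.sq_sqrt hl] at hx
  have h3 : 0 ≤ Real.log x ^ A := by positivity
  rwa [Real.norm_of_nonneg h3, Real.norm_of_nonneg (Real.exp_pos _).le] at hx

set_option maxHeartbeats 800000 in
/-- The smoothed prime number theorem for characters, uniform in moduli `N ≤ (log x)^A`. With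
`l = √(log x)`, Siegel's theorem with exponent `1 / (2 A)` makes the zero-free region of width
`δ / l` available up to height `e^l - 1`, and the contour is moved to its edge. -/
theorem psi_smooth {A : ℝ} (hA : 1 ≤ A) : ∃ c : ℝ, 0 < c ∧ c ≤ 1 ∧ ∃ C : ℝ, 0 < C ∧ ∃ x₀ : ℝ, ∀ x : ℝ, x₀ ≤ x →
    ∀ (N : ℕ) [NeZero N] (χ : DirichletCharacter ℂ N), (N:ℝ) ≤ (Real.log x) ^ A →
    ‖∑ n ∈ Finset.range (⌊x⌋₊ + 1), cL χ n * (1 - n / x) - dl χ * ((x / 2 : ℝ) : ℂ)‖ ≤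
      C * x * Real.exp (-c * Real.sqrt (Real.log x)) := by
  obtain ⟨cS, hcS, hS⟩ := siegel (ε := 1 / (2 * A)) (by positivity) (by
    rw [div_le_one (by positivity)]; linarith)
  obtain ⟨δ, hδ, hδ4, B, hB, hZ⟩ := zero_free hcS
  obtain ⟨C₁, hC₁, hAL⟩ := exists_vonMangoldt_bound
  obtain ⟨x₁, hx₁⟩ := eventually_atTop.1 (eventually_pow_log_le A)
  set D : ℝ := Real.exp 1 * (4 * (2 + C₁) + 6 * B) * 2 + 2 * Real.pi * B + 1 with hD
  have hpi := Real.pi_pos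
  have hD0 : 0 < D := by positivity
  refine ⟨δ / 2, by positivity, by linarith, D * (8 / δ ^ 2), by positivity, max x₁ (Real.exp 4), ?_⟩
  intro x hx N _ χ hN
  have hxx₁ : x₁ ≤ x := (le_max_left _ _).trans hx
  have hx4 : Real.exp 4 ≤ x := (le_max_right _ _).trans hx
  have hx1 : 1 ≤ x := (Real.one_le_exp (by norm_num)).trans hx4
  have hx0 : 0 < x := by linarith
  have hlog : 4 ≤ Real.log x := (Real.le_log_iff_exp_le hx0).2 hx4
  set l := Real.sqrt (Real.log x) with hl
  have hll : l ^ 2 = Real.log x := Real.sq_sqrt (by linarith)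
  have hl2 : 2 ≤ l := Real.le_sqrt_of_sq_le (by linarith)
  have hxe : x = Real.exp (l ^ 2) := by rw [hll, Real.exp_log hx0]
  have hl0 : 0 < l := by linarith
  have hNe : (N:ℝ) ≤ Real.exp l := hN.trans (hx₁ x hxx₁)
  have hN1 := Nr_pos (N := N)
  have hsieg : χ ^ 2 = 1 → ∀ s : ℂ, ‖s - 1‖ ≤ cS / l → Gch χ s ≠ 0 := by
    intro h s hs
    refine hS N χ h s (hs.trans ?_)
    rw [div_eq_mul_inv]
    gcongr
    rw [Real.rpow_neg (by linarith)]
    apply inv_anti₀ (by positivity)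
    calc (N:ℝ) ^ (1 / (2 * A)) ≤ ((Real.log x) ^ A) ^ (1 / (2 * A)) := by gcongr
      _ = l := by
        rw [← Real.rpow_mul (by linarith), hl, Real.sqrt_eq_rpow]
        congr 1
        field_simp
  have hzf := hZ N χ l (by linarith) hNe hsieg
  have hexp : 2 < Real.exp l := by
    have := Real.add_one_le_exp l; linarith
  have hδl : δ / l ≤ 1 / 2 := by
    rw [div_le_iff₀ hl0]; linarith
  have hδl0 : 0 < δ / l := by positivity
  have hσ : 1 / l ^ 2 ≤ 1 := by
    rw [div_le_one (by positivity)]; nlinarith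
  have hσ0 : 0 < 1 / l ^ 2 := by positivity
  have hsh := shift_bound χ (x := x) (σ := 1 + 1 / l ^ 2) (σ₁ := 1 - δ / l) (T := Real.exp l - 1)
    (M := B * l ^ 2) hx1 (by linarith) (by linarith) (by linarith) (by linarith) (by linarith)
    hzf
  have hper := perron χ hx1 (σ := 1 + 1 / l ^ 2) (by linarith)
  have e1 : x ^ (1 + 1 / l ^ 2) = x * Real.exp 1 := by
    rw [Real.rpow_add hx0, Real.rpow_one]
    congr 1
    rw [hxe, ← Real.exp_mul]
    congr 1
    field_simp
  have e2 : x ^ (1 - δ / l) = x * Real.exp (-δ * l) := by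
    rw [sub_eq_add_neg, Real.rpow_add hx0, Real.rpow_one]
    congr 1
    rw [hxe, ← Real.exp_mul]
    congr 1
    field_simp
  have hALb : AL (1 + 1 / l ^ 2) ≤ l ^ 2 + C₁ := by
    refine (hAL (1 + 1 / l ^ 2) (by linarith) (by linarith)).2.trans_eq ?_
    rw [add_sub_cancel_left, one_div_one_div]
  have hT : 1 / (Real.exp l - 1) ≤ 2 * Real.exp (-δ * l) := by
    have h1 : Real.exp (-l) ≤ Real.exp (-δ * l) := Real.exp_le_exp.2 (by nlinarith)
    have h2 : 1 / (Real.exp l - 1) ≤ 2 * Real.exp (-l) := by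
      rw [div_le_iff₀ (by linarith), mul_assoc, mul_sub, ← Real.exp_add]
      simp
      have : Real.exp (-l) ≤ 1 / 2 := by
        rw [Real.exp_neg, inv_le_comm₀ (by linarith) (by norm_num)]; norm_num; linarith
      linarith
    linarith
  have hone : 1 ≤ x * Real.exp (-δ * l) := by
    rw [hxe, ← Real.exp_add]
    apply Real.one_le_exp
    nlinarith
  have hE := Real.exp_pos (-δ * l)
  have hl21 : 1 ≤ l ^ 2 := by nlinarith
  -- assembling the pieces
  have hInt : ‖∫ y : ℝ, Kch χ (((1 + 1 / l ^ 2 : ℝ):ℂ) + y * I) * Pw x (((1 + 1 / l ^ 2 : ℝ):ℂ) + y * I)‖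
      ≤ (D - 1) * l ^ 2 * x * Real.exp (-δ * l) := by
    refine hsh.trans ?_
    rw [e1, e2]
    have h1 : 4 * (AL (1 + 1 / l ^ 2) + 1) + 6 * (B * l ^ 2) ≤ (4 * (2 + C₁) + 6 * B) * l ^ 2 := by
      have := mul_le_mul_of_nonneg_left hl21 hC₁.le
      linarith
    calc x * Real.exp 1 * (4 * (AL (1 + 1 / l ^ 2) + 1) + 6 * (B * l ^ 2)) / (Real.exp l - 1) +
          2 * Real.pi * (B * l ^ 2) * (x * Real.exp (-δ * l))
        ≤ x * Real.exp 1 * ((4 * (2 + C₁) + 6 * B) * l ^ 2) * (2 * Real.exp (-δ * l)) +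
          2 * Real.pi * (B * l ^ 2) * (x * Real.exp (-δ * l)) := by
          rw [div_eq_mul_one_div]
          gcongr
          have : 0 < Real.exp l - 1 := by linarith
          positivity
      _ = _ := by rw [hD]; ring
  have hmain : ‖∑ n ∈ Finset.range (⌊x⌋₊ + 1), cL χ n * (1 - n / x) -
      dl χ * (((x - 1) ^ 2 / (2 * x) : ℝ) : ℂ)‖ ≤ (D - 1) * l ^ 2 * x * Real.exp (-δ * l) := by
    rw [hper, norm_smul, Real.norm_of_nonneg (by positivity)]
    refine le_trans ?_ hInt
    refine mul_le_of_le_one_left (norm_nonneg _) ?_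
    rw [div_le_one (by positivity)]
    linarith [Real.pi_gt_three]
  have hdl : ‖dl χ * (((x - 1) ^ 2 / (2 * x) : ℝ) : ℂ) - dl χ * ((x / 2 : ℝ) : ℂ)‖ ≤ 1 := by
    rw [← mul_sub, norm_mul, ← ofReal_sub, norm_real]
    have : (x - 1) ^ 2 / (2 * x) - x / 2 = 1 / (2 * x) - 1 := by field_simp; ring
    rw [this]
    refine mul_le_one₀ (norm_dl_le χ) (norm_nonneg _) ?_
    have h3 : 1 / (2 * x) ≤ 1 := by rw [div_le_one (by positivity)]; linarith
    have h4 : 0 ≤ 1 / (2 * x) := by positivity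
    rw [Real.norm_eq_abs, abs_le]
    constructor <;> linarith
  have htot : ‖∑ n ∈ Finset.range (⌊x⌋₊ + 1), cL χ n * (1 - n / x) - dl χ * ((x / 2 : ℝ) : ℂ)‖ ≤
      D * l ^ 2 * x * Real.exp (-δ * l) := by
    have := norm_add_le_of_le hmain hdl
    rw [sub_add_sub_cancel] at this
    refine this.trans ?_
    have : (1:ℝ) ≤ l ^ 2 * (x * Real.exp (-δ * l)) := one_le_mul_of_one_le_of_one_le hl21 hone
    linarith
  refine htot.trans ?_
  have h8 : l ^ 2 ≤ 8 / δ ^ 2 * Real.exp (δ / 2 * l) := by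
    have := Real.quadratic_le_exp_of_nonneg (x := δ / 2 * l) (by positivity)
    rw [div_mul_eq_mul_div, le_div_iff₀ (by positivity)]
    nlinarith [mul_pos hδ hl0]
  calc D * l ^ 2 * x * Real.exp (-δ * l) ≤ D * (8 / δ ^ 2 * Real.exp (δ / 2 * l)) * x * Real.exp (-δ * l) := by
        gcongr
    _ = D * (8 / δ ^ 2) * x * (Real.exp (δ / 2 * l) * Real.exp (-δ * l)) := by ring
    _ = _ := by rw [← Real.exp_add]; congr 2; ring

end SW

/-! ### Smoothed prime sums in residue classes -/

namespace SW
open Complex Metric MeasureTheory Set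

/-- The indicator of the residue class of `a` modulo `N`, weighted by the von Mangoldt function. -/
noncomputable def wcl (N : ℕ) (a : ZMod N) (n : ℕ) : ℝ :=
  if (n : ZMod N) = a then ArithmeticFunction.vonMangoldt n else 0

theorem wcl_nonneg (N : ℕ) (a : ZMod N) (n : ℕ) : 0 ≤ wcl N a n := by
  unfold wcl; split_ifs
  · exact ArithmeticFunction.vonMangoldt_nonneg
  · exact le_rfl

/-- Orthogonality of characters: the twisted von Mangoldt functions detect the class of `a`. -/
theorem wcl_orth {N : ℕ} [NeZero N] {a : ZMod N} (ha : IsUnit a) (n : ℕ) :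
    ∑ χ : DirichletCharacter ℂ N, χ a⁻¹ * cL χ n = (N.totient : ℂ) * (wcl N a n : ℂ) := by
  have h := DirichletCharacter.sum_char_inv_mul_char_eq ℂ ha (n : ZMod N)
  simp only [cL, Pi.mul_apply, ← mul_assoc]
  rw [← Finset.sum_mul, h, wcl]
  by_cases e : a = n
  · rw [if_pos e, if_pos e.symm]
  · rw [if_neg e, if_neg (Ne.symm e)]; simp

/-- The smoothed prime number theorem in a residue class modulo `N ≤ (log x)^A`. -/
theorem psi_smooth_class {A : ℝ} (hA : 1 ≤ A) : ∃ c : ℝ, 0 < c ∧ c ≤ 1 ∧ ∃ C : ℝ, 0 < C ∧ ∃ x₀ : ℝ, ∀ x : ℝ, x₀ ≤ x →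
    ∀ (N : ℕ) [NeZero N] (a : ZMod N), IsUnit a → (N:ℝ) ≤ (Real.log x) ^ A →
    |∑ n ∈ Finset.range (⌊x⌋₊ + 1), wcl N a n * (1 - n / x) - 1 / N.totient * x / 2| ≤
      C * x * Real.exp (-c * Real.sqrt (Real.log x)) := by
  obtain ⟨c, hc, hc1, C, hC, x₀, H⟩ := psi_smooth hA
  refine ⟨c, hc, hc1, C, hC, x₀, fun x hx N _ a ha hN => ?_⟩
  have hφ : (0:ℝ) < N.totient := by exact_mod_cast Nat.totient_pos.2 (Nat.pos_of_ne_zero (NeZero.ne N))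
  set E := C * x * Real.exp (-c * Real.sqrt (Real.log x)) with hE
  have hcard : ((Finset.univ : Finset (DirichletCharacter ℂ N)).card : ℝ) = N.totient := by
    have h1 := DirichletCharacter.card_eq_totient_of_hasEnoughRootsOfUnity ℂ N
    rw [Nat.card_eq_fintype_card] at h1
    exact_mod_cast h1
  have hinv : IsUnit a⁻¹ := by
    exact IsUnit.of_mul_eq_one a (ZMod.inv_mul_of_unit a ha)
  have key : (N.totient : ℂ) * ((∑ n ∈ Finset.range (⌊x⌋₊ + 1), wcl N a n * (1 - n / x) -
      1 / N.totient * x / 2 : ℝ) : ℂ) = ∑ χ : DirichletCharacter ℂ N, χ a⁻¹ *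
      (∑ n ∈ Finset.range (⌊x⌋₊ + 1), cL χ n * (1 - n / x) - dl χ * ((x / 2 : ℝ) : ℂ)) := by
    have e1 : ∑ χ : DirichletCharacter ℂ N, χ a⁻¹ * dl χ * ((x / 2 : ℝ):ℂ) = ((x / 2 : ℝ):ℂ) := by
      rw [Finset.sum_eq_single 1]
      · simp [dl, MulChar.one_apply hinv]
      · intro χ _ h; simp [dl, h]
      · simp
    have e2 : ∀ χ : DirichletCharacter ℂ N, χ a⁻¹ * (∑ n ∈ Finset.range (⌊x⌋₊ + 1),
        cL χ n * (1 - n / x) - dl χ * ((x / 2 : ℝ) : ℂ)) = ∑ n ∈ Finset.range (⌊x⌋₊ + 1),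
        (χ a⁻¹ * cL χ n) * (1 - n / x) - χ a⁻¹ * dl χ * ((x / 2 : ℝ) : ℂ) := by
      intro χ
      rw [mul_sub, Finset.mul_sum]
      congr 1
      · exact Finset.sum_congr rfl fun n _ => by ring
      · ring
    have hφ' : (N.totient : ℂ) ≠ 0 := by exact_mod_cast hφ.ne'
    rw [Finset.sum_congr rfl fun χ _ => e2 χ, Finset.sum_sub_distrib, e1, Finset.sum_comm]
    simp only [← Finset.sum_mul, wcl_orth ha]
    push_cast
    rw [mul_sub, Finset.mul_sum]
    congr 1
    · exact Finset.sum_congr rfl fun n _ => by ring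
    · field_simp
  have h2 := congrArg norm key
  rw [norm_mul, Complex.norm_natCast, norm_real, Real.norm_eq_abs] at h2
  have h3 : (N.totient : ℝ) * |∑ n ∈ Finset.range (⌊x⌋₊ + 1), wcl N a n * (1 - n / x) -
      1 / N.totient * x / 2| ≤ N.totient * E := by
    rw [h2]
    refine (norm_sum_le _ _).trans ?_
    rw [← hcard, ← nsmul_eq_mul, ← Finset.sum_const]
    refine Finset.sum_le_sum fun χ _ => ?_
    rw [norm_mul]
    exact (mul_le_of_le_one_left (norm_nonneg _) (χ.norm_le_one _)).trans (H x hx N χ hN)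
  exact le_of_mul_le_mul_left h3 hφ

/-- Removal of the linear weight: a smoothed asymptotic with relative error `η²` gives the sharp
one with relative error `η`. -/
theorem desmooth {w : ℕ → ℝ} (hw : ∀ n, 0 ≤ w n) {k η C y₀ : ℝ} (hk : 0 ≤ k) (hk1 : k ≤ 1)
    (hη : 0 < η) (hη1 : η ≤ 1 / 2) (hC : 0 ≤ C) (hy₀ : 0 < y₀)
    (H : ∀ y, y₀ ≤ y → |∑ n ∈ Finset.range (⌊y⌋₊ + 1), w n * (1 - n / y) - k * y / 2| ≤ C * y * η ^ 2)
    {y : ℝ} (hy : 2 * y₀ ≤ y) :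
    |∑ n ∈ Finset.range (⌊y⌋₊ + 1), w n - k * y| ≤ (1 + 4 * C) * η * y := by
  have hy0 : 0 < y := by linarith
  set h := η * y with hh
  have hh0 : 0 < h := by positivity
  have hhy : h ≤ y / 2 := by rw [hh]; nlinarith
  set M := ⌊y + h⌋₊ + 1 with hM
  set S : ℝ → ℝ := fun z => ∑ n ∈ Finset.range M, w n * max (z - n) 0 with hS
  have hS1 : ∀ z, y₀ ≤ z → z ≤ y + h → |S z - k * z ^ 2 / 2| ≤ C * z ^ 2 * η ^ 2 := by
    intro z hz hz2
    have hz0 : 0 < z := by linarith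
    have e : S z = z * ∑ n ∈ Finset.range (⌊z⌋₊ + 1), w n * (1 - n / z) := by
      rw [hS, Finset.mul_sum]
      symm
      have hsub : Finset.range (⌊z⌋₊ + 1) ⊆ Finset.range M :=
        Finset.range_mono (Nat.add_le_add_right (Nat.floor_le_floor hz2) 1)
      refine (Finset.sum_congr rfl fun n hn => ?_).trans (Finset.sum_subset hsub fun n _ hn => ?_)
      · have h1 : n ≤ ⌊z⌋₊ := by simpa [Nat.lt_succ_iff] using hn
        have h2 : (n:ℝ) ≤ z := (Nat.le_floor_iff hz0.le).1 h1
        rw [max_eq_left (by linarith)]; field_simp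
      · have h1 : ⌊z⌋₊ < n := by simpa [Nat.lt_succ_iff] using hn
        have h2 : z < n := (Nat.floor_lt hz0.le).1 h1
        rw [max_eq_right (by linarith)]; simp
    have e2 : S z - k * z ^ 2 / 2 =
        z * (∑ n ∈ Finset.range (⌊z⌋₊ + 1), w n * (1 - n / z) - k * z / 2) := by rw [e]; ring
    rw [e2, abs_mul, abs_of_pos hz0]
    calc _ ≤ z * (C * z * η ^ 2) := by gcongr; exact H z hz
      _ = _ := by ring
  have hP : ∑ n ∈ Finset.range (⌊y⌋₊ + 1), w n =
      ∑ n ∈ Finset.range M, if (n:ℝ) ≤ y then w n else 0 := by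
    have hsub : Finset.range (⌊y⌋₊ + 1) ⊆ Finset.range M :=
      Finset.range_mono (Nat.add_le_add_right (Nat.floor_le_floor (by linarith)) 1)
    refine (Finset.sum_congr rfl fun n hn => ?_).trans (Finset.sum_subset hsub fun n _ hn => ?_)
    · have h1 : n ≤ ⌊y⌋₊ := by simpa [Nat.lt_succ_iff] using hn
      rw [if_pos ((Nat.le_floor_iff hy0.le).1 h1)]
    · have h1 : ⌊y⌋₊ < n := by simpa [Nat.lt_succ_iff] using hn
      have h2 : y < n := (Nat.floor_lt hy0.le).1 h1
      rw [if_neg (by linarith)]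
  set P := ∑ n ∈ Finset.range (⌊y⌋₊ + 1), w n with hPd
  have hup : h * P ≤ S (y + h) - S y := by
    rw [hP, hS, ← Finset.sum_sub_distrib, Finset.mul_sum]
    refine Finset.sum_le_sum fun n _ => ?_
    rw [← mul_sub]
    split_ifs with hn
    · rw [max_eq_left (by linarith), max_eq_left (by linarith)]; nlinarith [hw n]
    · rw [mul_zero]
      refine mul_nonneg (hw n) (sub_nonneg.2 (max_le_max_right _ (by linarith)))
  have hlow : S y - S (y - h) ≤ h * P := by
    rw [hP, hS, ← Finset.sum_sub_distrib, Finset.mul_sum]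
    refine Finset.sum_le_sum fun n _ => ?_
    rw [← mul_sub]
    split_ifs with hn
    · rw [max_eq_left (by linarith : 0 ≤ y - n), mul_comm h]
      refine mul_le_mul_of_nonneg_left ?_ (hw n)
      have := le_max_left (y - h - n) 0
      linarith
    · rw [max_eq_right (by linarith), max_eq_right (by linarith)]; simp
  have b1 := abs_le.1 (hS1 (y + h) (by linarith) le_rfl)
  have b2 := abs_le.1 (hS1 y (by linarith) (by linarith))
  have b3 := abs_le.1 (hS1 (y - h) (by linarith) (by linarith))
  have q : C * η ^ 2 * (y + h) ^ 2 ≤ C * η ^ 2 * (9 / 4 * y ^ 2) := by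
    gcongr; nlinarith
  have q' : C * η ^ 2 * (y - h) ^ 2 ≤ C * η ^ 2 * y ^ 2 := by
    gcongr
    · linarith
    · linarith
  have qk : k * h ^ 2 ≤ h ^ 2 := by nlinarith [sq_nonneg h]
  have e3 : C * η ^ 2 * y ^ 2 = C * η * y * h := by rw [hh]; ring
  have e4 : h ^ 2 = η * y * h := by rw [hh]; ring
  have hpos : 0 ≤ C * η * y * h := by positivity
  rw [abs_le]
  constructor
  · have : h * (-((1 + 4 * C) * η * y)) ≤ h * (P - k * y) := by
      nlinarith
    exact le_of_mul_le_mul_left this hh0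
  · have : h * (P - k * y) ≤ h * ((1 + 4 * C) * η * y) := by
      nlinarith
    exact le_of_mul_le_mul_left this hh0

end SW

/-! ### The Siegel–Walfisz theorem for prime counts -/

namespace SW
open Complex Metric MeasureTheory Set

/-- The indicator of the primes in the residue class of `a` modulo `N`, weighted by `log`. -/
noncomputable def wth (N : ℕ) (a : ZMod N) (n : ℕ) : ℝ :=
  if n.Prime ∧ (n : ZMod N) = a then Real.log n else 0

/-- Proper prime powers account for the difference between the `Λ`- and `log`-weighted sums. -/
theorem wcl_sub_wth (N : ℕ) (a : ZMod N) (y : ℝ) :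
    |∑ n ∈ Finset.range (⌊y⌋₊ + 1), wcl N a n - ∑ n ∈ Finset.range (⌊y⌋₊ + 1), wth N a n| ≤
      Chebyshev.psi y - Chebyshev.theta y := by
  rw [Chebyshev.psi_sub_theta_eq_sum_not_prime, ← Finset.sum_sub_distrib]
  have key : ∀ n, 0 ≤ wcl N a n - wth N a n ∧ wcl N a n - wth N a n ≤
      if ¬ n.Prime then ArithmeticFunction.vonMangoldt n else 0 := by
    intro n
    have h0 : 0 ≤ ArithmeticFunction.vonMangoldt n := ArithmeticFunction.vonMangoldt_nonneg
    unfold wcl wth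
    by_cases hn : n.Prime
    · have := ArithmeticFunction.vonMangoldt_apply_prime hn
      by_cases ha : (n : ZMod N) = a <;> simp [hn, ha, this]
    · by_cases ha : (n : ZMod N) = a <;> simp [hn, ha, h0]
  rw [abs_of_nonneg (Finset.sum_nonneg fun n _ => (key n).1)]
  refine (Finset.sum_le_sum fun n _ => (key n).2).trans (le_of_eq ?_)
  rw [← Finset.sum_filter]
  symm
  refine Finset.sum_subset (fun n hn => ?_) fun n hn hn' => ?_
  · simp only [Finset.mem_filter, Finset.mem_Ioc, Finset.mem_range] at hn ⊢
    exact ⟨by omega, hn.2⟩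
  · simp only [Finset.mem_filter, Finset.mem_Ioc, Finset.mem_range] at hn hn'
    have : n = 0 := by
      by_contra h
      exact hn' ⟨⟨by omega, by omega⟩, hn.2⟩
    simp [this]

/-- The prime number theorem for `θ(y; N, a)`, uniformly for `√x ≤ y` with a relative error
that depends on `x` only. This form is suited to partial summation over `[√x, x]`. -/
theorem theta_class {A : ℝ} (hA : 1 ≤ A) : ∃ c : ℝ, 0 < c ∧ c ≤ 1 ∧ ∃ C : ℝ, 0 < C ∧ ∃ x₀ : ℝ,
    ∀ x : ℝ, x₀ ≤ x → ∀ (N : ℕ) [NeZero N] (a : ZMod N), IsUnit a → (N:ℝ) ≤ (Real.log x) ^ A →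
    ∀ y : ℝ, Real.sqrt x ≤ y → |∑ n ∈ Finset.range (⌊y⌋₊ + 1), wth N a n - 1 / N.totient * y| ≤
      C * Real.exp (-c * Real.sqrt (Real.log x)) * y := by
  obtain ⟨c, hc, hc1, C, hC, x₁, H⟩ := psi_smooth_class (A := A + 1) (by linarith)
  obtain ⟨B₀, hB₀⟩ := Chebyshev.psi_sub_theta_le_mul_sqrt
  obtain ⟨B, hB, hBb⟩ : ∃ B : ℝ, 0 < B ∧ ∀ y : ℝ,
      Chebyshev.psi y - Chebyshev.theta y ≤ B * Real.sqrt y :=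
    ⟨max B₀ 1, by positivity, fun y => (hB₀ y).trans
      (mul_le_mul_of_nonneg_right (le_max_left _ _) (Real.sqrt_nonneg _))⟩
  have hT : Tendsto (fun x => Real.sqrt (Real.log x)) atTop atTop :=
    Real.tendsto_sqrt_atTop.comp Real.tendsto_log_atTop
  have hq : Tendsto (fun x => Real.exp (Real.log x / 4)) atTop atTop :=
    Real.tendsto_exp_atTop.comp (Real.tendsto_log_atTop.atTop_div_const (by norm_num))
  obtain ⟨x₀, h₀⟩ := eventually_atTop.1 ((hT.eventually_ge_atTop (4 / c)).and
    ((hq.eventually_ge_atTop x₁).and ((hq.eventually_ge_atTop 2).and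
    ((Real.tendsto_log_atTop.eventually_ge_atTop (4 * 4 ^ A)).and (eventually_ge_atTop 1)))))
  refine ⟨c / 4, by positivity, by linarith, 1 + 4 * C + B, by positivity, x₀, ?_⟩
  intro x hx N _ a ha hN y hy
  obtain ⟨h1, h2, h3, h4, h5⟩ := h₀ x hx
  have hx0 : 0 < x := by linarith
  set l := Real.sqrt (Real.log x) with hl
  have hlog0 : 0 ≤ Real.log x := Real.log_nonneg h5
  have hll : l ^ 2 = Real.log x := Real.sq_sqrt hlog0
  have hl0 : 0 ≤ l := Real.sqrt_nonneg _
  -- the smoothed error over `y ≥ x ^ (1/4)` is at most `η²`, and removing the weight costs a square root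
  set η := Real.exp (-(c / 4) * l) with hη
  set y₀ := Real.exp (Real.log x / 4) with hy₀
  have hy₀0 : 0 < y₀ := Real.exp_pos _
  have hsq : Real.sqrt x = y₀ ^ 2 := by
    rw [hy₀, ← Real.exp_nat_mul, Real.sqrt_eq_iff_mul_self_eq hx0.le (Real.exp_pos _).le, ← Real.exp_add]
    rw [← Real.exp_log hx0]
    simp only [Real.log_exp]
    congr 1
    push_cast; ring
  have hη1 : η ≤ 1 / 2 := by
    have : 1 ≤ c / 4 * l := by
      have := mul_le_mul_of_nonneg_left h1 (by positivity : 0 ≤ c / 4)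
      calc (1:ℝ) = c / 4 * (4 / c) := by field_simp
        _ ≤ _ := this
    have h6 : η ≤ Real.exp (-1) := Real.exp_le_exp.2 (by linarith)
    have h7 := Real.exp_one_gt_d9
    rw [Real.exp_neg] at h6
    refine h6.trans ?_
    rw [one_div]
    exact inv_anti₀ (by norm_num) (by linarith)
  have hφ : (1:ℝ) ≤ N.totient := by
    exact_mod_cast Nat.totient_pos.2 (Nat.pos_of_ne_zero (NeZero.ne N))
  have hyy : 2 * y₀ ≤ y := by
    refine le_trans ?_ (hsq ▸ hy)
    nlinarith
  have hy1 : 1 ≤ y := by linarith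
  have hmain := desmooth (w := wcl N a) (wcl_nonneg N a) (k := 1 / N.totient) (η := η) (C := C)
    (y₀ := y₀) (by positivity) (by rw [div_le_one (by linarith)]; exact hφ) (Real.exp_pos _) hη1 hC.le
    hy₀0 (fun z hz => by
      have hz0 : 0 < z := by linarith
      have hlz : Real.log x / 4 ≤ Real.log z := (Real.le_log_iff_exp_le hz0).2 hz
      refine (H z (by linarith) N a ha ?_).trans ?_
      · refine hN.trans ?_
        have hp : (4:ℝ) ^ A ≤ Real.log x / 4 := by linarith
        have h4A : (1:ℝ) ≤ 4 ^ A := Real.one_le_rpow (by norm_num) (by linarith)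
        calc Real.log x ^ A = (4 : ℝ) ^ A * (Real.log x / 4) ^ A := by
              rw [← Real.mul_rpow (by norm_num) (by linarith)]; congr 1; ring
          _ ≤ (Real.log x / 4) * (Real.log x / 4) ^ A := by gcongr
          _ = (Real.log x / 4) ^ (A + 1) := by
              rw [Real.rpow_add (by linarith), Real.rpow_one, mul_comm]
          _ ≤ _ := by gcongr
      · rw [hη, ← Real.exp_nat_mul]
        refine mul_le_mul_of_nonneg_left (Real.exp_le_exp.2 ?_) (by positivity)
        have : l / 2 ≤ Real.sqrt (Real.log z) := by
          apply Real.le_sqrt_of_sq_le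
          rw [div_pow, hll]; linarith
        push_cast
        nlinarith) hyy
  have hsqy : Real.sqrt y ≤ η * y := by
    have e1 : Real.sqrt y * Real.sqrt y = y := Real.mul_self_sqrt (by linarith)
    have e2 : η⁻¹ ≤ Real.sqrt y := by
      have : y₀ ≤ Real.sqrt y := by
        apply Real.le_sqrt_of_sq_le
        rw [← hsq]; exact hy
      refine le_trans ?_ this
      rw [hη, ← Real.exp_neg, hy₀, ← hll]
      refine Real.exp_le_exp.2 ?_
      have : 1 ≤ l := by
        refine le_trans ?_ h1
        rw [le_div_iff₀ hc]; linarith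
      nlinarith
    have hη0 : 0 < η := Real.exp_pos _
    have : 1 ≤ η * Real.sqrt y := by
      rw [inv_le_iff_one_le_mul₀ hη0] at e2; linarith
    nlinarith [Real.sqrt_nonneg y]
  have hd := (wcl_sub_wth N a y).trans (hBb y)
  have e := abs_sub_le (∑ n ∈ Finset.range (⌊y⌋₊ + 1), wth N a n)
    (∑ n ∈ Finset.range (⌊y⌋₊ + 1), wcl N a n) (1 / N.totient * y)
  rw [abs_sub_comm (∑ n ∈ Finset.range (⌊y⌋₊ + 1), wth N a n)
    (∑ n ∈ Finset.range (⌊y⌋₊ + 1), wcl N a n)] at e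
  have := mul_le_mul_of_nonneg_left hsqy hB.le
  nlinarith

/-- The number of primes `p ≤ x` in the residue class of `a` modulo `N`. -/
noncomputable def piC (N : ℕ) (a : ZMod N) (x : ℝ) : ℕ :=
  ((Finset.range (⌊x⌋₊ + 1)).filter fun p : ℕ => p.Prime ∧ (p : ZMod N) = a).card


/-- Counting primes by `log`-weighted sums over `(√x, x]`; the primes below `√x` are discarded. -/
theorem piC_eq (N : ℕ) (a : ZMod N) {x : ℝ} (hx : 4 ≤ x) :
    |(piC N a x : ℝ) - ∑ k ∈ Finset.Ioc ⌊Real.sqrt x⌋₊ ⌊x⌋₊, (Real.log k)⁻¹ * wth N a k| ≤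
      Real.sqrt x + 1 := by
  have hs2 : 2 ≤ Real.sqrt x := Real.le_sqrt_of_sq_le (by linarith)
  have hfl : 2 ≤ ⌊Real.sqrt x⌋₊ := Nat.le_floor (by exact_mod_cast hs2)
  have hle : ⌊Real.sqrt x⌋₊ ≤ ⌊x⌋₊ := Nat.floor_le_floor (by
    rw [Real.sqrt_le_left (by linarith)]; nlinarith)
  have e1 : ∀ k ∈ Finset.Ioc ⌊Real.sqrt x⌋₊ ⌊x⌋₊, (Real.log k)⁻¹ * wth N a k =
      if k.Prime ∧ (k : ZMod N) = a then 1 else 0 := by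
    intro k hk
    have hk1 : 1 < k := by have := (Finset.mem_Ioc.1 hk).1; omega
    have : 0 < Real.log k := Real.log_pos (by exact_mod_cast hk1)
    unfold wth
    split_ifs
    · field_simp
    · simp
  have e2 : (piC N a x : ℝ) = ∑ k ∈ Finset.range (⌊x⌋₊ + 1),
      if k.Prime ∧ (k : ZMod N) = a then (1:ℝ) else 0 := by
    rw [piC, Finset.sum_boole]
  have e3 : ∑ k ∈ Finset.range (⌊x⌋₊ + 1), (if k.Prime ∧ (k : ZMod N) = a then (1:ℝ) else 0) =
      ∑ k ∈ Finset.range (⌊Real.sqrt x⌋₊ + 1), (if k.Prime ∧ (k : ZMod N) = a then (1:ℝ) else 0) +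
      ∑ k ∈ Finset.Ioc ⌊Real.sqrt x⌋₊ ⌊x⌋₊, if k.Prime ∧ (k : ZMod N) = a then (1:ℝ) else 0 := by
    rw [Finset.range_eq_Ico, Finset.range_eq_Ico, ← Finset.Ico_add_one_add_one_eq_Ioc,
      Finset.sum_Ico_consecutive _ (by omega) (by omega)]
  rw [Finset.sum_congr rfl e1, e2, e3, add_sub_cancel_right, Finset.sum_boole,
    abs_of_nonneg (Nat.cast_nonneg _)]
  calc _ ≤ (((Finset.range (⌊Real.sqrt x⌋₊ + 1)).card : ℕ) : ℝ) := by
        exact_mod_cast Finset.card_filter_le _ _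
    _ = ⌊Real.sqrt x⌋₊ + 1 := by simp
    _ ≤ _ := by gcongr; exact Nat.floor_le (by positivity)

set_option maxHeartbeats 1000000 in
/-- The prime number theorem for arithmetic progressions with the Siegel–Walfisz uniformity. -/
theorem pi_class {A : ℝ} (hA : 1 ≤ A) : ∃ c : ℝ, 0 < c ∧ c ≤ 1 ∧ ∃ C : ℝ, 0 < C ∧ ∃ x₀ : ℝ,
    ∀ x : ℝ, x₀ ≤ x → ∀ (N : ℕ) [NeZero N] (a : ZMod N), IsUnit a → (N:ℝ) ≤ (Real.log x) ^ A →
    |(piC N a x : ℝ) - 1 / N.totient * ∫ t in (2:ℝ)..x, 1 / Real.log t| ≤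
      C * x * Real.exp (-c * Real.sqrt (Real.log x)) := by
  obtain ⟨c, hc, hc1, C, hC, x₁, H⟩ := theta_class hA
  refine ⟨c, hc, hc1, 3 * C + 4, by positivity, max x₁ (Real.exp 16), ?_⟩
  intro x hx N _ a ha hN
  have hx1 : x₁ ≤ x := (le_max_left _ _).trans hx
  have hx16 : Real.exp 16 ≤ x := (le_max_right _ _).trans hx
  have hx0 : 0 < x := (Real.exp_pos _).trans_le hx16
  have hlog : 16 ≤ Real.log x := (Real.le_log_iff_exp_le hx0).2 hx16
  set y := Real.sqrt x with hy
  have hyexp : y = Real.exp (Real.log x / 2) := by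
    rw [hy, Real.sqrt_eq_iff_mul_self_eq hx0.le (Real.exp_pos _).le, ← Real.exp_add]
    rw [add_halves, Real.exp_log hx0]
  have hy16 : 4 ≤ y := by
    rw [hyexp]
    have := Real.add_one_le_exp (Real.log x / 2)
    linarith
  have hyy : y * y = x := Real.mul_self_sqrt hx0.le
  have hyx : y ≤ x := by nlinarith
  have hylog : 1 ≤ Real.log y := by rw [hyexp, Real.log_exp]; linarith
  set l := Real.sqrt (Real.log x) with hl
  have hll : l ^ 2 = Real.log x := Real.sq_sqrt (by linarith)
  have hl4 : 4 ≤ l := Real.le_sqrt_of_sq_le (by linarith)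
  set E := Real.exp (-c * l) with hE
  have hE0 : 0 < E := Real.exp_pos _
  -- the square root is absorbed by the error term
  have hyE : y ≤ x * E := by
    have : 1 ≤ y * E := by
      rw [hyexp, hE, ← Real.exp_add]
      apply Real.one_le_exp
      rw [← hll]; nlinarith
    nlinarith
  set κ : ℝ := 1 / N.totient with hκ
  have hφ : (1:ℝ) ≤ N.totient := by
    exact_mod_cast Nat.totient_pos.2 (Nat.pos_of_ne_zero (NeZero.ne N))
  have hκ0 : 0 ≤ κ := by positivity
  have hκ1 : κ ≤ 1 := by rw [hκ, div_le_one (by linarith)]; exact hφ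
  have hl1 : ∀ t ∈ Icc y x, 1 ≤ Real.log t := fun t ht =>
    hylog.trans (Real.log_le_log (by linarith) ht.1)
  have ht0 : ∀ t ∈ Icc y x, 4 ≤ t := fun t ht => hy16.trans ht.1
  set f : ℝ → ℝ := fun t => (Real.log t)⁻¹ with hf
  set f' : ℝ → ℝ := fun t => -(t⁻¹) / (Real.log t) ^ 2 with hf'
  have hder : ∀ t ∈ Icc y x, HasDerivAt f (f' t) t := by
    intro t ht
    have h1 := hl1 t ht
    have h2 := ht0 t ht
    exact (Real.hasDerivAt_log (by linarith)).inv (by linarith)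
  have hf'c : ContinuousOn f' (Icc y x) := by
    have h1 : ∀ t ∈ Icc y x, t ≠ 0 := fun t ht => by have := ht0 t ht; linarith
    have h2 : ∀ t ∈ Icc y x, (Real.log t) ^ 2 ≠ 0 := fun t ht => by
      have := hl1 t ht; positivity
    exact ((continuousOn_id.inv₀ h1).neg).div ((continuousOn_id.log h1).pow 2) h2
  have hfi : IntegrableOn (deriv f) (Icc y x) :=
    (hf'c.integrableOn_Icc).congr_fun (fun t ht => ((hder t ht).deriv).symm) measurableSet_Icc
  have abel := sum_mul_eq_sub_sub_integral_mul (f := f) (wth N a) (by linarith : 0 ≤ y) hyx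
    (fun t ht => (hder t ht).differentiableAt) hfi
  have hInt := integrableOn_mul_sum_Icc (m := 0) (wth N a) (by linarith : 0 ≤ y) hfi
  set θ : ℝ → ℝ := fun t => ∑ k ∈ Finset.Icc 0 ⌊t⌋₊, wth N a k with hθ
  have hR : ∀ t, y ≤ t → |θ t - κ * t| ≤ C * E * t := by
    intro t ht
    have := H x hx1 N a ha hN t ht
    rwa [Nat.range_succ_eq_Icc_zero] at this
  have hIoc : Ioc y x ⊆ Icc y x := Ioc_subset_Icc_self
  have i1 : ∫ t in Ioc y x, deriv f t * θ t = ∫ t in Ioc y x, f' t * θ t :=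
    setIntegral_congr_fun measurableSet_Ioc fun t ht => by
      simp only [(hder t (hIoc ht)).deriv]
  have hint1 : IntegrableOn (fun t => f' t * θ t) (Ioc y x) :=
    (hInt.mono_set hIoc).congr_fun (fun t ht => by simp only [(hder t (hIoc ht)).deriv, hθ]) measurableSet_Ioc
  have hint2 : IntegrableOn (fun t => f' t * (κ * t)) (Ioc y x) :=
    ((hf'c.mul (continuousOn_const.mul continuousOn_id)).integrableOn_Icc).mono_set hIoc
  have i2 : ∫ t in Ioc y x, f' t * θ t = (∫ t in Ioc y x, f' t * (κ * t)) +
      ∫ t in Ioc y x, f' t * (θ t - κ * t) := by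
    rw [← integral_add hint2 (by
      refine (hint1.sub hint2).congr (Eventually.of_forall fun t => ?_)
      simp only [Pi.sub_apply]; ring)]
    congr 1; ext t; ring
  have i3 : |∫ t in Ioc y x, f' t * (θ t - κ * t)| ≤ C * E * x := by
    have := norm_setIntegral_le_of_norm_le_const (μ := volume) (s := Ioc y x)
      (f := fun t => f' t * (θ t - κ * t)) (C := C * E) (by simp) (fun t ht => by
        have h1 := hl1 t (hIoc ht)
        have h2 := ht0 t (hIoc ht)
        have h3 := hR t ht.1.le
        rw [Real.norm_eq_abs, abs_mul]
        have h4 : |f' t| ≤ t⁻¹ := by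
          rw [hf', abs_div, abs_neg, abs_of_pos (by positivity : 0 < t⁻¹), abs_of_pos (by positivity)]
          exact div_le_self (by positivity) (by nlinarith)
        calc _ ≤ t⁻¹ * (C * E * t) := mul_le_mul h4 h3 (abs_nonneg _) (by positivity)
          _ = _ := by field_simp)
    rw [Real.norm_eq_abs] at this
    refine this.trans ?_
    rw [measureReal_def, Real.volume_Ioc, ENNReal.toReal_ofReal (by linarith)]
    exact mul_le_mul_of_nonneg_left (by linarith) (by positivity)
  have hparts : ∫ t in Ioc y x, f' t * (κ * t) =
      κ * (f x * x - f y * y - ∫ t in y..x, 1 / Real.log t) := by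
    have h1 := intervalIntegral.integral_deriv_mul_eq_sub (u := f) (v := id) (u' := f') (v' := fun _ => 1)
      (a := y) (b := x) (fun t ht => hder t (by rwa [uIcc_of_le hyx] at ht))
      (fun t _ => hasDerivAt_id t) (by
        apply ContinuousOn.intervalIntegrable; rwa [uIcc_of_le hyx]) (by simp)
    have hfc : ContinuousOn f (uIcc y x) := by
      rw [uIcc_of_le hyx]; exact fun t ht => (hder t ht).continuousAt.continuousWithinAt
    rw [intervalIntegral.integral_add] at h1
    · rw [← intervalIntegral.integral_of_le hyx]
      have h2 : ∀ t, f' t * (κ * t) = κ * (f' t * id t) := fun t => by simp only [id]; ring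
      simp only [h2, intervalIntegral.integral_const_mul]
      congr 1
      have h3 : ∀ t, f t * 1 = 1 / Real.log t := fun t => by simp [hf]
      simp only [h3] at h1
      simp only [id] at h1 ⊢
      linarith
    · apply ContinuousOn.intervalIntegrable; rw [uIcc_of_le hyx]; exact hf'c.mul continuousOn_id
    · apply ContinuousOn.intervalIntegrable; exact hfc.mul continuousOn_const
  have hLi : ∫ t in (2:ℝ)..x, 1 / Real.log t = (∫ t in (2:ℝ)..y, 1 / Real.log t) +
      ∫ t in y..x, 1 / Real.log t := by
    have hc : ∀ u v : ℝ, 2 ≤ u → u ≤ v → IntervalIntegrable (fun t => 1 / Real.log t) volume u v := by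
      intro u v hu huv
      apply ContinuousOn.intervalIntegrable
      rw [uIcc_of_le huv]
      have h0 : ∀ t ∈ Icc u v, t ≠ 0 := fun t ht => by have := ht.1; linarith
      exact continuousOn_const.div (continuousOn_id.log h0) fun t ht =>
        (Real.log_pos (by have := ht.1; show (1:ℝ) < t; linarith)).ne'
    exact (intervalIntegral.integral_add_adjacent_intervals (hc _ _ le_rfl (by linarith))
      (hc _ _ (by linarith) hyx)).symm
  have hLi2 : |∫ t in (2:ℝ)..y, 1 / Real.log t| ≤ 2 * y := by
    have := intervalIntegral.norm_integral_le_of_norm_le_const (a := 2) (b := y)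
      (f := fun t => 1 / Real.log t) (C := 2) (fun t ht => by
        rw [uIoc_of_le (by linarith)] at ht
        have h2 : Real.log 2 ≤ Real.log t := Real.log_le_log (by norm_num) ht.1.le
        have h3 := Real.log_two_gt_d9
        rw [Real.norm_eq_abs, abs_of_nonneg (one_div_nonneg.2 (by linarith)), div_le_iff₀ (by linarith)]
        linarith)
    rw [Real.norm_eq_abs] at this
    refine this.trans ?_
    rw [abs_of_nonneg (by linarith)]; linarith
  have hp := piC_eq N a (x := x) (by linarith)
  have hfx : |f x * (θ x - κ * x)| ≤ C * E * x := by
    rw [abs_mul]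
    have h1 := hl1 x ⟨hyx, le_rfl⟩
    refine (mul_le_of_le_one_left (abs_nonneg _) ?_).trans (hR x hyx)
    rw [hf, abs_of_pos (by positivity)]; exact inv_le_one_of_one_le₀ h1
  have hfy : |f y * (θ y - κ * y)| ≤ C * E * x := by
    rw [abs_mul]
    refine (mul_le_of_le_one_left (abs_nonneg _) ?_).trans ((hR y le_rfl).trans (by gcongr))
    rw [hf, abs_of_pos (by positivity)]; exact inv_le_one_of_one_le₀ hylog
  have hκL : |κ * ∫ t in (2:ℝ)..y, 1 / Real.log t| ≤ 2 * y := by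
    rw [abs_mul, abs_of_nonneg hκ0]
    exact (mul_le_of_le_one_left (abs_nonneg _) hκ1).trans hLi2
  rw [abel, i1, i2, hparts] at hp
  rw [hLi]
  change |(piC N a x : ℝ) - (f x * θ x - f y * θ y - _)| ≤ _ at hp
  have a1 := abs_le.1 hp
  have a2 := abs_le.1 hfx
  have a3 := abs_le.1 hfy
  have a4 := abs_le.1 i3
  have a5 := abs_le.1 hκL
  have e4 : C * E * x = C * x * E := by ring
  have e5 : (3 * C + 4) * x * E = 3 * (C * x * E) + 4 * (x * E) := by ring
  rw [e4] at a2 a3 a4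
  rw [e5, abs_le]
  clear_value θ f y E
  constructor
  · linarith [a1.1, a2.1, a3.2, a4.2, a5.2]
  · linarith [a1.2, a2.2, a3.1, a4.1, a5.1]

end SW

/-! ### Character sums and Frobenius -/

namespace SW
open Complex Metric MeasureTheory Set

/-- In a cyclic group of order divisible by `m`, exactly the `(n/m)`-torsion consists of
`m`-th powers; this is the form needed for `(ℤ/pℤ)ˣ`. -/
theorem exists_pow_iff {p m : ℕ} [Fact p.Prime] (hm : m ∣ p - 1) {u : ZMod p} (hu : u ≠ 0) :
    (∃ y, y ^ m = u) ↔ u ^ ((p - 1) / m) = 1 := by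
  have hp := (Fact.out : p.Prime)
  have hp1 : 0 < p - 1 := by have := hp.two_le; omega
  obtain ⟨k, hk⟩ := hm
  have hm0 : 0 < m := Nat.pos_of_ne_zero (by rintro rfl; simp at hk; omega)
  have hk0 : 0 < k := Nat.pos_of_ne_zero (by rintro rfl; simp at hk; omega)
  have hkd : (p - 1) / m = k := by rw [hk]; exact Nat.mul_div_cancel_left k hm0
  rw [hkd]
  constructor
  · rintro ⟨y, rfl⟩
    have hy : y ≠ 0 := by rintro rfl; simp [hm0.ne'] at hu
    rw [← pow_mul, ← hk]; exact ZMod.pow_card_sub_one_eq_one hy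
  · intro h
    obtain ⟨γ, hγ⟩ := IsCyclic.exists_generator (α := (ZMod p)ˣ)
    have hord : orderOf γ = p - 1 := by
      rw [orderOf_eq_card_of_forall_mem_zpowers hγ, Nat.card_eq_fintype_card, ZMod.card_units]
    obtain ⟨j, hj⟩ := (mem_powers_iff_mem_zpowers.2 (hγ (Units.mk0 u hu)))
    simp only at hj
    have h1 : γ ^ (j * k) = 1 := by
      rw [pow_mul, hj]; ext; simpa using h
    have h2 := orderOf_dvd_of_pow_eq_one h1
    rw [hord, hk] at h2
    obtain ⟨i, rfl⟩ := Nat.dvd_of_mul_dvd_mul_right hk0 h2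
    refine ⟨((γ ^ i : (ZMod p)ˣ) : ZMod p), ?_⟩
    have := congrArg (Units.val) hj
    simp only [Units.val_mk0] at this
    rw [← this]; push_cast; ring

/-- Summing the characters of order `d` over the divisors `d` of `m` gives all characters with
`χ ^ m = 1`, whose sum detects `m`-th powers. -/
theorem sum_psi {p m : ℕ} [Fact p.Prime] (hm : m ∣ p - 1) {u : ZMod p} (hu : u ≠ 0) :
    ∑ d ∈ m.divisors, (∑ᶠ χ ∈ {χ : MulChar (ZMod p) ℂ | orderOf χ = d}, χ u) =
      if ∃ y, y ^ m = u then (m : ℂ) else 0 := by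
  have hp := (Fact.out : p.Prime)
  have hp1 : 0 < p - 1 := by have := hp.two_le; omega
  have hm0 : 0 < m := Nat.pos_of_dvd_of_pos hm hp1
  have hfu : Fintype.card (ZMod p)ˣ = p - 1 := ZMod.card_units p
  have : Fintype (MulChar (ZMod p) ℂ) := Fintype.ofFinite _
  obtain ⟨e⟩ : Nonempty (MulChar (ZMod p) ℂ ≃* (ZMod p)ˣ) := MulChar.mulEquiv_units (ZMod p) ℂ
  have : IsCyclic (MulChar (ZMod p) ℂ) := isCyclic_of_surjective e.symm e.symm.surjective
  have hcardX : Nat.card (MulChar (ZMod p) ℂ) = p - 1 := by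
    rw [Nat.card_congr e.toEquiv, Nat.card_eq_fintype_card, hfu]
  set S : Finset (MulChar (ZMod p) ℂ) := Finset.univ.filter fun χ => χ ^ m = 1 with hS
  have hcard : S.card = m := by
    rw [hS, ← sum_card_orderOf_eq_card_pow_eq_one hm0.ne']
    conv_rhs => rw [← Nat.sum_totient m]
    refine Finset.sum_congr ?_ fun d hd => ?_
    · ext d; simp [hm0.ne']
    · refine IsCyclic.card_orderOf_eq_totient ?_
      have : d ∣ m := by simp at hd; exact hd.1
      have h2 := this.trans hm
      rw [← hcardX, Nat.card_eq_fintype_card] at h2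
      exact h2
  have hsum : ∑ d ∈ m.divisors, (∑ᶠ χ ∈ {χ : MulChar (ZMod p) ℂ | orderOf χ = d}, χ u) =
      ∑ χ ∈ S, χ u := by
    have h1 : ∀ d, (∑ᶠ χ ∈ {χ : MulChar (ZMod p) ℂ | orderOf χ = d}, χ u) =
        ∑ χ ∈ S.filter (fun χ => orderOf χ = d) ∪ (Finset.univ.filter fun χ => orderOf χ = d), χ u := by
      intro d
      rw [finsum_mem_eq_finite_toFinset_sum _ (Set.toFinite _)]
      refine Finset.sum_congr ?_ fun _ _ => rfl
      ext χ; simp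
    rw [← Finset.sum_fiberwise_of_maps_to (s := S) (t := m.divisors) (g := orderOf)]
    · refine Finset.sum_congr rfl fun d hd => ?_
      rw [h1]
      refine Finset.sum_congr ?_ fun _ _ => rfl
      ext χ
      have hd' : d ∣ m := (Nat.mem_divisors.1 hd).1
      simp only [hS, Finset.mem_union, Finset.mem_filter, Finset.mem_univ, true_and]
      constructor
      · rintro (h | h)
        · exact h
        · exact ⟨orderOf_dvd_iff_pow_eq_one.1 (h ▸ hd'), h⟩
      · exact fun h => Or.inl h
    · intro χ hχ
      rw [hS, Finset.mem_filter] at hχ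
      exact Nat.mem_divisors.2 ⟨orderOf_dvd_of_pow_eq_one hχ.2, hm0.ne'⟩
  rw [hsum]
  split_ifs with hy
  · obtain ⟨y, rfl⟩ := hy
    have hy0 : y ≠ 0 := by rintro rfl; simp [hm0.ne'] at hu
    have : ∀ χ ∈ S, χ (y ^ m) = 1 := by
      intro χ hχ
      rw [hS, Finset.mem_filter] at hχ
      rw [map_pow, ← MulChar.pow_apply' χ hm0.ne', hχ.2]
      exact MulChar.one_apply (Ne.isUnit hy0)
    rw [Finset.sum_congr rfl this]; simp [hcard]
  · obtain ⟨χ₀, hχ₀⟩ := MulChar.exists_mulChar_orderOf (ZMod p) (n := m) (R := ℂ)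
      (by rw [ZMod.card]; exact hm) (Complex.isPrimitiveRoot_exp m hm0.ne')
    have hne : χ₀ u ≠ 1 := by
      intro h
      apply hy
      obtain ⟨γ, hγ⟩ := IsCyclic.exists_generator (α := (ZMod p)ˣ)
      obtain ⟨j, hj⟩ := (mem_powers_iff_mem_zpowers.2 (hγ (Units.mk0 u hu)))
      simp only at hj
      have hju : ((γ : ZMod p)) ^ j = u := by
        have := congrArg (Units.val) hj
        simpa using this
      have h1 : χ₀ ^ j = 1 := by
        ext v
        obtain ⟨i, hi⟩ := (mem_powers_iff_mem_zpowers.2 (hγ v))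
        simp only at hi
        rw [MulChar.pow_apply_coe, MulChar.one_apply_coe, ← hi]
        push_cast
        rw [map_pow, ← pow_mul, mul_comm, pow_mul, ← map_pow, hju, h, one_pow]
      have h2 := orderOf_dvd_of_pow_eq_one h1
      rw [hχ₀] at h2
      obtain ⟨i, rfl⟩ := h2
      exact ⟨(γ : ZMod p) ^ i, by rw [← hju]; ring⟩
    have hinv : χ₀ u * ∑ χ ∈ S, χ u = ∑ χ ∈ S, χ u := by
      rw [Finset.mul_sum]
      refine Finset.sum_bij (fun χ _ => χ₀ * χ) ?_ ?_ ?_ ?_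
      · intro χ hχ
        rw [hS, Finset.mem_filter] at hχ ⊢
        refine ⟨Finset.mem_univ _, ?_⟩
        rw [mul_pow, hχ.2, ← hχ₀, pow_orderOf_eq_one, one_mul]
      · intro χ _ χ' _ h; exact mul_left_cancel h
      · intro χ hχ
        rw [hS, Finset.mem_filter] at hχ
        refine ⟨χ₀⁻¹ * χ, ?_, by simp⟩
        rw [hS, Finset.mem_filter]
        refine ⟨Finset.mem_univ _, ?_⟩
        rw [mul_pow, hχ.2, inv_pow, ← hχ₀, pow_orderOf_eq_one]; simp
      · intro χ _; simp
    have : (χ₀ u - 1) * ∑ χ ∈ S, χ u = 0 := by rw [sub_mul, hinv]; ring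
    exact (mul_eq_zero.1 this).resolve_left (sub_ne_zero.2 hne)

/-- A ring homomorphism to a field of characteristic `p` turns an automorphism sending a
generator `ζ` to `ζ ^ p` into the Frobenius. -/
theorem frob_congr {K k : Type*} [Field K] [Field k] {p : ℕ} [Fact p.Prime] [CharP k p] {ζ : K}
    (σ : K →+* K) (hσ : σ ζ = ζ ^ p) (ψ : Algebra.adjoin ℤ {ζ} →+* k) :
    ∀ x (hx : x ∈ Algebra.adjoin ℤ {ζ}), ∃ hx' : σ x ∈ Algebra.adjoin ℤ {ζ},
      ψ ⟨σ x, hx'⟩ = ψ ⟨x, hx⟩ ^ p := by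
  intro x hx
  induction hx using Algebra.adjoin_induction with
  | mem x h =>
    obtain rfl : x = ζ := h
    have hm : x ∈ Algebra.adjoin ℤ {x} := Algebra.subset_adjoin rfl
    refine ⟨hσ ▸ pow_mem hm p, ?_⟩
    rw [← map_pow]
    congr 1
    exact Subtype.ext hσ
  | algebraMap n =>
    have e : σ (algebraMap ℤ K n) = algebraMap ℤ K n := by simp
    refine ⟨by rw [e]; exact algebraMap_mem _ n, ?_⟩
    have h1 : ψ ⟨σ (algebraMap ℤ K n), by rw [e]; exact algebraMap_mem _ n⟩ = (n : k) := by
      rw [← map_intCast ψ n]; congr 1; exact Subtype.ext (by simp)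
    have h2 : ψ ⟨algebraMap ℤ K n, algebraMap_mem _ n⟩ = (n : k) := by
      rw [← map_intCast ψ n]; congr 1
    rw [h1, h2]
    have := map_intCast (frobenius k p) n
    rw [frobenius_def] at this
    exact this.symm
  | add x y hx hy ix iy =>
    obtain ⟨hx', ex⟩ := ix
    obtain ⟨hy', ey⟩ := iy
    refine ⟨by rw [map_add]; exact add_mem hx' hy', ?_⟩
    have h1 : (⟨σ (x + y), by rw [map_add]; exact add_mem hx' hy'⟩ : Algebra.adjoin ℤ {ζ}) =
        ⟨σ x, hx'⟩ + ⟨σ y, hy'⟩ := by ext; simp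
    have h2 : (⟨x + y, add_mem hx hy⟩ : Algebra.adjoin ℤ {ζ}) = ⟨x, hx⟩ + ⟨y, hy⟩ := rfl
    rw [h1, h2, map_add, map_add, ex, ey, add_pow_char]
  | mul x y hx hy ix iy =>
    obtain ⟨hx', ex⟩ := ix
    obtain ⟨hy', ey⟩ := iy
    refine ⟨by rw [map_mul]; exact mul_mem hx' hy', ?_⟩
    have h1 : (⟨σ (x * y), by rw [map_mul]; exact mul_mem hx' hy'⟩ : Algebra.adjoin ℤ {ζ}) =
        ⟨σ x, hx'⟩ * ⟨σ y, hy'⟩ := by ext; simp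
    have h2 : (⟨x * y, mul_mem hx hy⟩ : Algebra.adjoin ℤ {ζ}) = ⟨x, hx⟩ * ⟨y, hy⟩ := rfl
    rw [h1, h2, map_mul, map_mul, ex, ey, mul_pow]

/-- If `β ∈ ℤ[ζ_N]` is an `m`-th root of the integer `c` and `p ≡ 1 (mod m)`, then the
automorphism `ζ ↦ ζ ^ p` fixes `β` exactly when `c` is an `m`-th power modulo `p`. Indeed
`σ β / β` is an `m`-th root of unity congruent to `c ^ ((p - 1) / m)` modulo a prime above `p`, and
`m`-th roots of unity stay distinct there. -/
theorem frob_fix {K : Type*} [Field K] [CharZero K] {N p m : ℕ} [NeZero N] [Fact p.Prime] {ζ : K}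
    (hζ : IsPrimitiveRoot ζ N) (σ : K →+* K) (hσ : σ ζ = ζ ^ p) (hm : m ∣ p - 1) {c : ℤ}
    (hc : ¬ (p : ℤ) ∣ c) {β : K} (hβ : β ∈ Algebra.adjoin ℤ {ζ}) (hβm : β ^ m = c) :
    σ β = β ↔ ∃ y : ZMod p, y ^ m = c := by
  have hp := (Fact.out : p.Prime)
  have hp1 : 0 < p - 1 := by have := hp.two_le; omega
  have hm0 : 0 < m := Nat.pos_of_dvd_of_pos hm hp1
  have hpm : ¬ p ∣ m := fun h => by
    have := Nat.le_of_dvd hp1 (h.trans hm); omega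
  set R := Algebra.adjoin ℤ {ζ} with hR
  have hInt : Algebra.IsIntegral ℤ R :=
    Algebra.IsIntegral.adjoin fun x hx => by
      obtain rfl : x = ζ := hx
      exact hζ.isIntegral (NeZero.pos N)
  have hmax : (Ideal.span {(p : ℤ)}).IsMaximal :=
    PrincipalIdealRing.isMaximal_of_irreducible (Nat.prime_iff_prime_int.1 hp).irreducible
  obtain ⟨Q, hQ, hQc⟩ := Ideal.exists_ideal_over_maximal_of_isIntegral (S := R)
    (Ideal.span {(p : ℤ)}) (by
      have : Function.Injective (algebraMap ℤ R) := RingHom.injective_int (algebraMap ℤ R)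
      rw [(RingHom.injective_iff_ker_eq_bot _).1 this]; exact bot_le)
  obtain ⟨k, _, _, ⟨ψ⟩⟩ : ∃ (k : Type _) (_ : Field k) (_ : CharP k p), Nonempty (R →+* k) := by
    let fk : Field (R ⧸ Q) := Ideal.Quotient.field Q
    have hpk : ((p : ℕ) : R ⧸ Q) = 0 := by
      rw [← map_natCast (Ideal.Quotient.mk Q) p]
      refine Ideal.Quotient.eq_zero_iff_mem.2 ?_
      have : (p : ℤ) ∈ Q.comap (algebraMap ℤ R) := hQc ▸ Ideal.mem_span_singleton_self _
      simpa using this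
    exact ⟨R ⧸ Q, fk, (CharP.charP_iff_prime_eq_zero hp).2 hpk, ⟨Ideal.Quotient.mk Q⟩⟩
  have hcp : ((c : ℤ) : ZMod p) ≠ 0 := by
    rwa [Ne, ZMod.intCast_zmod_eq_zero_iff_dvd]
  have hck : ((c : ℤ) : k) ≠ 0 := by
    rwa [Ne, CharP.intCast_eq_zero_iff k p]
  set b : R := ⟨β, hβ⟩ with hb
  have hbm : ψ b ^ m = c := by
    rw [← map_pow, ← map_intCast ψ c]; congr 1; ext; simp [hb, hβm]
  have hb0 : ψ b ≠ 0 := by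
    intro h; rw [h, zero_pow hm0.ne'] at hbm; exact hck hbm.symm
  obtain ⟨hσβ, hfr⟩ := frob_congr σ hσ ψ β hβ
  obtain ⟨j, hj⟩ := hm
  have hkd : (p - 1) / m = j := by rw [hj]; exact Nat.mul_div_cancel_left j hm0
  rw [exists_pow_iff ⟨j, hj⟩ hcp, hkd]
  have hkey : ((c : ZMod p) ^ j = 1) ↔ ψ b ^ p = ψ b := by
    have e1 : ψ b ^ (p - 1) = (c : k) ^ j := by rw [hj, pow_mul, hbm]
    have e2 : ψ b ^ p = ψ b ^ (p - 1) * ψ b := by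
      rw [← pow_succ]; congr 1; omega
    rw [e2, e1]
    have e3 : ((c : ZMod p) ^ j = 1) ↔ ((c : k) ^ j = 1) := by
      have f1 := ZMod.intCast_zmod_eq_zero_iff_dvd (c ^ j - 1) p
      have f2 := CharP.intCast_eq_zero_iff k p (c ^ j - 1)
      push_cast at f1 f2
      rw [sub_eq_zero] at f1 f2
      exact f1.trans f2.symm
    rw [e3, mul_eq_right₀ hb0]
  rw [hkey]
  constructor
  · intro h
    rw [← hfr]; congr 1; ext; exact h
  · intro h
    rw [h] at hfr
    by_contra hne
    have hs : (σ β) ^ m = β ^ m := by rw [← map_pow, hβm]; simp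
    have h0 : ∑ i ∈ Finset.range m, (⟨σ β, hσβ⟩ : R) ^ i * b ^ (m - 1 - i) = 0 := by
      have h1 := Commute.geom_sum₂_mul (Commute.all (⟨σ β, hσβ⟩ : R) b) m
      have h2 : (⟨σ β, hσβ⟩ : R) ^ m - b ^ m = 0 := by
        rw [sub_eq_zero]; ext; simpa [hb] using hs
      rw [h2] at h1
      refine (mul_eq_zero.1 h1).resolve_right (sub_ne_zero.2 fun h => hne ?_)
      exact congrArg Subtype.val h
    have h1 := congrArg ψ h0
    rw [map_sum, map_zero] at h1
    have h2 : ∀ i ∈ Finset.range m, ψ ((⟨σ β, hσβ⟩ : R) ^ i * b ^ (m - 1 - i)) = ψ b ^ (m - 1) := by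
      intro i hi
      rw [map_mul, map_pow, map_pow, hfr, ← pow_add]
      congr 1; have := Finset.mem_range.1 hi; omega
    rw [Finset.sum_congr rfl h2, Finset.sum_const, Finset.card_range, nsmul_eq_mul] at h1
    rcases mul_eq_zero.1 h1 with h3 | h3
    · exact hpm ((CharP.cast_eq_zero_iff k p m).1 h3)
    · exact pow_ne_zero _ hb0 h3

end SW

/-! ### Quadratic irrationalities and abelian radicals -/

namespace SW
open Complex Metric MeasureTheory Set

/-- `√M` lies in `ℤ[ζ_{4M}]`: it is `∏ 2 sin(πj/2M)` up to sign. -/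
theorem exists_sqrt {K : Type*} [Field K] [CharZero K] {M : ℕ} (hM : 0 < M) {ξ : K}
    (hξ : IsPrimitiveRoot ξ (4 * M)) : ∃ s ∈ Algebra.adjoin ℤ {ξ}, s ^ 2 = (M : K) := by
  set R := Algebra.adjoin ℤ {ξ} with hR
  have hξR : ξ ∈ R := Algebra.subset_adjoin rfl
  have hξ4 : ξ ^ (4 * M) = 1 := hξ.pow_eq_one
  have hω : IsPrimitiveRoot (ξ ^ 2) (2 * M) := hξ.pow (by omega) (by ring)
  have hhalf : ξ ^ (2 * M) = -1 := by
    have h1 : IsPrimitiveRoot (ξ ^ (2 * M)) 2 := hξ.pow (by omega) (by ring)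
    exact h1.eq_neg_one_of_two_right
  obtain ⟨n, rfl⟩ : ∃ n, M = n + 1 := ⟨M - 1, by omega⟩
  have hprod := IsPrimitiveRoot.prod_one_sub_pow_eq_order (n := 2 * n + 1) (μ := ξ ^ 2)
    (by convert hω using 1; ring)
  have hsplit : ∏ k ∈ Finset.range (2 * n + 1), (1 - (ξ ^ 2) ^ (k + 1)) =
      (∏ k ∈ Finset.range n, (1 - (ξ ^ 2) ^ (k + 1))) * 2 *
        ∏ k ∈ Finset.range n, (1 - (ξ ^ 2) ^ (2 * n + 1 - k)) := by
    rw [show 2 * n + 1 = (n + 1) + n by ring, Finset.prod_range_add, Finset.prod_range_succ,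
      ← Finset.prod_range_reflect (fun k => 1 - (ξ ^ 2) ^ (n + 1 + n - k))]
    congr 1
    · congr 1
      rw [← pow_mul, hhalf]; norm_num
    · refine Finset.prod_congr rfl fun k hk => ?_
      have := Finset.mem_range.1 hk
      congr 2; omega
  rw [hsplit] at hprod
  have hmain : (∏ k ∈ Finset.range n, (1 - (ξ ^ 2) ^ (k + 1))) *
      ∏ k ∈ Finset.range n, (1 - (ξ ^ 2) ^ (2 * n + 1 - k)) = (n + 1 : K) := by
    have h2 : (2:K) ≠ 0 := two_ne_zero
    apply mul_left_cancel₀ h2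
    push_cast at hprod
    linear_combination hprod
  refine ⟨∏ k ∈ Finset.range n, ξ ^ (n + 1) * (ξ ^ (k + 1) - ξ ^ (4 * n + 3 - k)), ?_, ?_⟩
  · exact prod_mem fun k _ => mul_mem (pow_mem hξR _) (sub_mem (pow_mem hξR _) (pow_mem hξR _))
  · rw [← Finset.prod_pow]
    push_cast
    rw [← hmain, ← Finset.prod_mul_distrib]
    refine Finset.prod_congr rfl fun k hk => ?_
    have hk' := Finset.mem_range.1 hk
    have e1 : ξ ^ (k + 1) * ξ ^ (4 * n + 3 - k) = 1 := by
      rw [← pow_add, show k + 1 + (4 * n + 3 - k) = 4 * (n + 1) by omega, hξ4]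
    have e2 : (ξ ^ 2) ^ (2 * n + 1 - k) = (ξ ^ (4 * n + 3 - k)) ^ 2 := by
      have : ξ ^ (4 * n + 4) = 1 := hξ4
      rw [← pow_mul, ← pow_mul, show (4 * n + 3 - k) * 2 = 2 * (2 * n + 1 - k) + (4 * n + 4) by omega,
        pow_add, this, mul_one]
    have e3 : (ξ ^ (n + 1)) ^ 2 = -1 := by rw [← pow_mul, mul_comm, hhalf]
    rw [e2, mul_pow, e3, ← pow_mul, mul_comm 2 (k + 1), pow_mul]
    linear_combination (1 - ξ ^ (k + 1) * ξ ^ (4 * n + 3 - k)) * e1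

/-- If `g₀ > 0` is not a perfect power and `r ^ e = g₀ ^ k` with `r > 0`, then `e ∣ k`. -/
theorem dvd_of_pow_eq {g₀ : ℚ} (h0 : 0 < g₀) (hnp : ¬ ∃ (r : ℚ) (k : ℕ), 2 ≤ k ∧ r ^ k = g₀)
    {r : ℚ} (hr : 0 < r) {e k : ℕ} (he : 0 < e) (h : r ^ e = g₀ ^ k) : e ∣ k := by
  set D := Nat.gcd e k with hD
  have hD0 : 0 < D := Nat.gcd_pos_of_pos_left _ he
  obtain ⟨e', he'⟩ := Nat.gcd_dvd_left e k
  obtain ⟨k', hk'⟩ := Nat.gcd_dvd_right e k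
  rw [← hD] at he' hk'
  have hcop : Nat.Coprime e' k' := by
    have := Nat.coprime_div_gcd_div_gcd (m := e) (n := k) hD0
    rwa [← hD, Nat.div_eq_of_eq_mul_right hD0 he', Nat.div_eq_of_eq_mul_right hD0 hk'] at this
  have h1 : r ^ e' = g₀ ^ k' := by
    rw [he', hk', mul_comm D, mul_comm D, pow_mul, pow_mul] at h
    exact (pow_left_inj₀ (by positivity) (by positivity) hD0.ne').1 h
  have hbez := Nat.gcd_eq_gcd_ab e' k'
  rw [hcop] at hbez
  set u := Nat.gcdA e' k'
  set v := Nat.gcdB e' k'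
  have h2 : (g₀ ^ u * r ^ v) ^ e' = g₀ := by
    calc (g₀ ^ u * r ^ v) ^ e' = g₀ ^ ((e' : ℤ) * u) * (r ^ e') ^ v := by
          rw [mul_pow, ← zpow_natCast, ← zpow_mul, ← zpow_natCast (r ^ v), ← zpow_mul,
            ← zpow_natCast r, ← zpow_mul, mul_comm u, mul_comm v]
      _ = g₀ ^ ((e' : ℤ) * u + k' * v) := by
          rw [h1, zpow_add₀ h0.ne', ← zpow_natCast g₀ k', ← zpow_mul]
      _ = g₀ := by rw [← hbez]; simp
  have he1 : e' = 1 := by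
    have h3 : e' < 2 := by
      by_contra h3; exact hnp ⟨_, e', by omega, h2⟩
    have : e' ≠ 0 := by rintro rfl; omega
    omega
  rw [he', he1, mul_one]; exact Nat.gcd_dvd_right e k

/-- An element of an abelian extension of `ℚ` inside `ℂ` which is an `e`-th root of
`± g₀ ^ h` forces `e ∣ 2 h`. -/
theorem abelian_dvd {g g₀ : ℚ} {h : ℕ} (h0 : 0 < g₀)
    (hnp : ¬ ∃ (r : ℚ) (k : ℕ), 2 ≤ k ∧ r ^ k = g₀) (hg : g = g₀ ^ h ∨ g = -(g₀ ^ h))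
    (K : IntermediateField ℚ ℂ) [IsGalois ℚ K] [FiniteDimensional ℚ K]
    (hcomm : ∀ σ τ : K ≃ₐ[ℚ] K, σ * τ = τ * σ)
    {γ : ℂ} (hγK : γ ∈ K) {e : ℕ} (he : 0 < e) (hγ : γ ^ e = (g : ℂ)) : e ∣ 2 * h := by
  have hgabs : |g| = g₀ ^ h := by
    rcases hg with rfl | rfl
    · exact abs_of_pos (by positivity)
    · rw [abs_neg]; exact abs_of_pos (by positivity)
  let cc : ℂ ≃ₐ[ℚ] ℂ := Complex.conjAe.restrictScalars ℚ
  let c : K ≃ₐ[ℚ] K := cc.restrictNormal K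
  have hc : ∀ x : K, ((c x : K) : ℂ) = (starRingEnd ℂ) (x : ℂ) := fun x =>
    AlgEquiv.restrictNormal_commutes cc K x
  set γ' : K := ⟨γ, hγK⟩ with hγ'
  have hpow : γ' ^ e = algebraMap ℚ K g := by
    apply Subtype.ext; simpa [hγ'] using hγ
  have hn : ∀ τ : K ≃ₐ[ℚ] K, ‖((τ γ' : K) : ℂ)‖ ^ e = |(g : ℝ)| := by
    intro τ
    have h1 : (τ γ') ^ e = algebraMap ℚ K g := by rw [← map_pow, hpow]; simp
    have h2 : ((τ γ' : K) : ℂ) ^ e = (g : ℂ) := by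
      have := congrArg (fun z : K => (z : ℂ)) h1
      simpa using this
    rw [← norm_pow, h2]
    rw [show (g : ℂ) = ((g : ℝ) : ℂ) by push_cast; rfl, Complex.norm_real, Real.norm_eq_abs]
  have hmul : ∀ x : K, ((x * c x : K) : ℂ) = ((‖(x : ℂ)‖ ^ 2 : ℝ) : ℂ) := by
    intro x
    push_cast
    rw [hc, Complex.mul_conj, Complex.normSq_eq_norm_sq]; push_cast; rfl
  have hfix : ∀ τ : K ≃ₐ[ℚ] K, τ (γ' * c γ') = γ' * c γ' := by
    intro τ
    have h1 : τ (c γ') = c (τ γ') := by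
      have := congrArg (fun f : K ≃ₐ[ℚ] K => f γ') (hcomm τ c)
      simpa using this
    rw [map_mul, h1]
    apply Subtype.ext
    rw [hmul, hmul]
    have h2 := hn τ
    have h3 := hn 1
    rw [← h3] at h2
    have := (pow_left_inj₀ (norm_nonneg _) (norm_nonneg _) he.ne').1 h2
    rw [this]; rfl
  obtain ⟨r, hr⟩ := (IsGalois.mem_range_algebraMap_iff_fixed (F := ℚ) _).2 hfix
  have hrr : (r : ℝ) = ‖γ‖ ^ 2 := by
    have := congrArg (fun z : K => (z : ℂ)) hr
    simp only [hmul] at this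
    have h2 : ((r : ℝ) : ℂ) = ((‖γ‖ ^ 2 : ℝ) : ℂ) := by
      rw [← this]; simp
    exact_mod_cast h2
  have hγn : ‖γ‖ ^ e = |(g : ℝ)| := hn 1
  have hg0 : g ≠ 0 := by rw [← abs_pos, hgabs]; positivity
  have hγ0 : 0 < ‖γ‖ := by
    rw [norm_pos_iff]; rintro rfl
    rw [zero_pow he.ne'] at hγ; exact hg0 (by exact_mod_cast hγ.symm)
  have hrpos : 0 < r := by
    have : (0:ℝ) < r := by rw [hrr]; positivity
    exact_mod_cast this
  refine dvd_of_pow_eq h0 hnp hrpos he ?_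
  have h5 : (r : ℝ) ^ e = ((g₀ ^ (2 * h) : ℚ) : ℝ) := by
    rw [hrr, ← pow_mul, mul_comm 2 e, pow_mul, hγn, mul_comm 2 h, pow_mul, ← hgabs]
    push_cast; rfl
  exact_mod_cast h5

end SW

/-! ### The degree of the splitting field -/

namespace SW
open Complex Metric MeasureTheory Set

/-- Kummer theory over `E = ℚ(ζ_t, g^{1/m})` with `m = gcd(2h, t)`: the remaining radical
`g^{1/t}` has full degree `t / m` over `E`, because `E` is abelian over `ℚ`. -/
theorem finrank_split {g g₀ : ℚ} {h : ℕ} (h0 : 0 < g₀)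
    (hnp : ¬ ∃ (r : ℚ) (k : ℕ), 2 ≤ k ∧ r ^ k = g₀) (hg : g = g₀ ^ h ∨ g = -(g₀ ^ h))
    (K : IntermediateField ℚ ℂ) [IsGalois ℚ K] [FiniteDimensional ℚ K]
    (hcomm : ∀ σ τ : K ≃ₐ[ℚ] K, σ * τ = τ * σ) {t m n : ℕ} (hm : m = Nat.gcd (2 * h) t)
    (ht : 0 < t) (hmn : t = n * m) {ω β : ℂ} (hω : IsPrimitiveRoot ω t) (hβ : β ^ m = (g : ℂ))
    (E : IntermediateField ℚ ℂ) (hE : E = IntermediateField.adjoin ℚ {ω, β}) (hEK : E ≤ K) :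
    Module.finrank ℚ (SplittingField (X ^ t - C g : ℚ[X])) = n * Module.finrank ℚ E := by
  have : NeZero t := ⟨ht.ne'⟩
  have hn0 : 0 < n := by rcases Nat.eq_zero_or_pos n with rfl | h; (· omega); exact h
  have hg0 : (g : ℂ) ≠ 0 := by
    have : g ≠ 0 := by
      have := pow_pos h0 h
      rcases hg with rfl | rfl
      · exact this.ne'
      · exact (neg_neg_of_pos this).ne
    exact_mod_cast this
  have hωE : ω ∈ E := hE ▸ IntermediateField.subset_adjoin _ _ (by simp)
  have hβE : β ∈ E := hE ▸ IntermediateField.subset_adjoin _ _ (by simp)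
  obtain ⟨α, hα⟩ := IsAlgClosed.exists_pow_nat_eq β hn0
  have hαt : α ^ t = (g : ℂ) := by rw [hmn, pow_mul, hα, hβ]
  have hα0 : α ≠ 0 := by
    rintro rfl; rw [zero_pow ht.ne'] at hαt; exact hg0 hαt.symm
  have hαi : IsIntegral E α := by
    refine IsIntegral.of_pow hn0 ?_
    rw [hα]; exact isIntegral_algebraMap (R := E) (A := ℂ) (x := ⟨β, hβE⟩)
  set d := Module.finrank E (IntermediateField.adjoin E {α}) with hd
  -- the splitting field inside `ℂ`
  have hf0 : (X ^ t - C g : ℚ[X]) ≠ 0 := X_pow_sub_C_ne_zero ht g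
  have hroot : ∀ z : ℂ, z ∈ (X ^ t - C g : ℚ[X]).rootSet ℂ ↔ z ^ t = (g : ℂ) := by
    intro z
    rw [mem_rootSet_of_ne hf0]
    simp [sub_eq_zero]
  have hS : IntermediateField.adjoin ℚ ((X ^ t - C g : ℚ[X]).rootSet ℂ) =
      (IntermediateField.adjoin E {α}).restrictScalars ℚ := by
    subst hE
    refine Eq.trans ?_ (IntermediateField.adjoin_adjoin_left ℚ ({ω, β} : Set ℂ) {α}).symm
    apply le_antisymm
    · rw [IntermediateField.adjoin_le_iff]
      intro z hz
      have hz' := (hroot z).1 hz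
      have h1 : (z / α) ^ t = 1 := by rw [div_pow, hz', hαt, div_self hg0]
      obtain ⟨i, -, hi⟩ := hω.eq_pow_of_pow_eq_one h1
      have : z = α * ω ^ i := by rw [hi]; field_simp
      rw [this]
      exact mul_mem (IntermediateField.subset_adjoin _ _ (by simp))
        (pow_mem (IntermediateField.subset_adjoin _ _ (by simp)) _)
    · rw [IntermediateField.adjoin_le_iff]
      have hαS := IntermediateField.subset_adjoin ℚ _ ((hroot α).2 hαt)
      have hαωS := IntermediateField.subset_adjoin ℚ _ ((hroot (α * ω)).2 (by
        rw [mul_pow, hω.pow_eq_one, mul_one, hαt]))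
      rintro z ((rfl | rfl) | rfl)
      · have := div_mem hαωS hαS
        rwa [mul_div_cancel_left₀ _ hα0] at this
      · rw [SetLike.mem_coe, ← hα]; exact pow_mem hαS _
      · exact hαS
  have hfin : Module.finrank ℚ (SplittingField (X ^ t - C g : ℚ[X])) = Module.finrank ℚ E * d := by
    have hsp : IsSplittingField ℚ
        (IntermediateField.adjoin ℚ ((X ^ t - C g : ℚ[X]).rootSet ℂ)) (X ^ t - C g) :=
      IntermediateField.adjoin_rootSet_isSplittingField (IsAlgClosed.splits _)
    rw [← (IsSplittingField.algEquiv (IntermediateField.adjoin ℚ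
      ((X ^ t - C g : ℚ[X]).rootSet ℂ)) (X ^ t - C g)).toLinearEquiv.finrank_eq, hS]
    exact (Module.finrank_mul_finrank ℚ E (IntermediateField.adjoin E {α})).symm
  rw [hfin, mul_comm]
  congr 1
  -- `d ≤ n`
  have hd0 : 0 < d := by
    have := IntermediateField.adjoin.finiteDimensional hαi
    exact Module.finrank_pos
  have hdn : d ≤ n := by
    rw [hd, IntermediateField.adjoin.finrank hαi]
    have h1 : (X ^ n - C (⟨β, hβE⟩ : E)) ≠ 0 := X_pow_sub_C_ne_zero hn0 _
    have h2 := natDegree_le_natDegree (minpoly.degree_le_of_ne_zero E α h1 (by simp [hα]))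
    rwa [natDegree_X_pow_sub_C] at h2
  -- `α ^ d ∈ E`
  have hαd : α ^ d ∈ E := by
    set c : E := Algebra.norm E (IntermediateField.AdjoinSimple.gen E α) with hc
    have h1 : c ^ n = (⟨β, hβE⟩ : E) ^ d := by
      rw [hc, ← map_pow, hd, ← Algebra.norm_algebraMap]
      congr 1
      apply Subtype.ext
      simpa using hα
    have h2 : (c : ℂ) ^ n = β ^ d := by
      have := congrArg (fun z : E => (z : ℂ)) h1
      simpa using this
    have hc0 : (c : ℂ) ≠ 0 := by
      intro h; rw [h, zero_pow hn0.ne', ← hα] at h2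
      exact pow_ne_zero _ (pow_ne_zero _ hα0) h2.symm
    have h3 : (α ^ d / c) ^ t = 1 := by
      rw [hmn, pow_mul, div_pow, h2, ← hα, ← pow_mul, ← pow_mul, mul_comm n d, div_self, one_pow]
      exact pow_ne_zero _ hα0
    obtain ⟨i, -, hi⟩ := hω.eq_pow_of_pow_eq_one h3
    have : α ^ d = c * ω ^ i := by rw [hi]; field_simp
    rw [this]; exact mul_mem c.2 (pow_mem hωE _)
  have hαn : α ^ n ∈ E := by rw [hα]; exact hβE
  have hαk : α ^ (Nat.gcd d n) ∈ E := by
    have h1 : α ^ (Nat.gcd d n) = (α ^ d) ^ (Nat.gcdA d n) * (α ^ n) ^ (Nat.gcdB d n) := by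
      rw [← zpow_natCast, Nat.gcd_eq_gcd_ab, zpow_add₀ hα0, zpow_mul, zpow_mul, zpow_natCast,
        zpow_natCast]
    rw [h1]; exact mul_mem (zpow_mem hαd _) (zpow_mem hαn _)
  obtain ⟨f, hf⟩ := Nat.gcd_dvd_right d n
  set k := Nat.gcd d n with hk
  have hkd : k ≤ d := Nat.le_of_dvd hd0 (Nat.gcd_dvd_left d n)
  have he : 0 < f * m := by
    rcases Nat.eq_zero_or_pos (f * m) with h | h
    · rw [hmn, hf, mul_assoc, h] at ht; omega
    · exact h
  have h2h : f * m ∣ 2 * h := by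
    refine abelian_dvd h0 hnp hg K hcomm (hEK hαk) he ?_
    rw [← pow_mul, ← mul_assoc, ← hf, ← hmn, hαt]
  have htm : f * m ∣ m := by
    conv_rhs => rw [hm]
    refine Nat.dvd_gcd h2h ⟨k, ?_⟩
    rw [hmn]; conv_lhs => rw [hf]
    ring
  have hm0 : 0 < m := by
    rcases Nat.eq_zero_or_pos m with h | h
    · rw [h] at he; omega
    · exact h
  have hf1 : f = 1 := by
    have := Nat.le_of_dvd hm0 htm
    have hf0 : f ≠ 0 := by rintro rfl; omega
    nlinarith [Nat.one_le_iff_ne_zero.2 hf0]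
  rw [hf1, mul_one] at hf
  omega

end SW

/-! ### The residue classes of the primes counted -/

namespace SW
open Complex Metric MeasureTheory Set

/-- The set `H` of classes modulo `N` corresponds, under `Gal(ℚ(ζ_N)/ℚ) ≃ (ℤ/N)ˣ`, to the
automorphisms fixing `E = ℚ(ζ_t, g^{1/m})`. Its size is `φ(N) / [E : ℚ]`, and `finrank_split` expresses
`[E : ℚ]` through the degree of the splitting field of `X ^ t - g`. For `p ∤ N`, the prime `p` lies in `H`
exactly when `p ≡ 1 (mod t)` and `± (ab)^h`, which is `g` up to `m`-th powers, is an `m`-th power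
modulo `p`. -/
theorem exists_class {g g₀ : ℚ} {h : ℕ} (h0 : 0 < g₀)
    (hnp : ¬ ∃ (r : ℚ) (k : ℕ), 2 ≤ k ∧ r ^ k = g₀) {a b : ℕ} (ha : 0 < a) (hb : 0 < b)
    (hab : g₀ = a / b) {s : ℤ} (hs : s = 1 ∨ s = -1) (hg : g = s * g₀ ^ h) {t m : ℕ}
    (hm : m = Nat.gcd (2 * h) t) (ht : 0 < t) {N : ℕ} [NeZero N] (hN : N = 4 * (a * b) * t) :
    ∃ H : Finset (ZMod N), (∀ u ∈ H, IsUnit u) ∧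
      H.card * m * Module.finrank ℚ (SplittingField (X ^ t - C g : ℚ[X])) = t * N.totient ∧
      ∀ p : ℕ, p.Prime → ¬ p ∣ N → ((p : ZMod N) ∈ H ↔ p ≡ 1 [MOD t] ∧
        ∃ y : ZMod p, y ^ m = ((s * (a * b : ℕ) ^ h : ℤ) : ZMod p)) := by
  have hm2 : m ∣ 2 * h := hm ▸ Nat.gcd_dvd_left _ _
  have hmt : m ∣ t := hm ▸ Nat.gcd_dvd_right _ _
  obtain ⟨n, hn⟩ := hmt
  rw [mul_comm] at hn
  obtain ⟨l, hl⟩ := hm2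
  have hm0 : 0 < m := by
    rcases Nat.eq_zero_or_pos m with h | h
    · rw [h] at hn; omega
    · exact h
  have hM0 : 0 < a * b := Nat.mul_pos ha hb
  set K : IntermediateField ℚ ℂ := IntermediateField.adjoin ℚ {Complex.exp (2 * Real.pi * I / N)}
    with hK
  have hζℂ : IsPrimitiveRoot (Complex.exp (2 * Real.pi * I / N)) N :=
    Complex.isPrimitiveRoot_exp N (NeZero.ne N)
  have : IsCyclotomicExtension {N} ℚ K := by
    have hInt : IsIntegral ℚ (Complex.exp (2 * Real.pi * I / N)) :=
      (hζℂ.isIntegral (NeZero.pos N)).tower_top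
    change IsCyclotomicExtension {N} ℚ K.toSubalgebra
    rw [hK, IntermediateField.adjoin_simple_toSubalgebra_of_isAlgebraic hInt.isAlgebraic]
    exact hζℂ.adjoin_isCyclotomicExtension ℚ
  have : IsGalois ℚ K := IsCyclotomicExtension.isGalois {N} ℚ K
  have : FiniteDimensional ℚ K := IsCyclotomicExtension.finiteDimensional {N} ℚ K
  have hirr : Irreducible (cyclotomic N ℚ) := cyclotomic.irreducible_rat (NeZero.pos N)
  set e := IsCyclotomicExtension.autEquivPow K hirr with he
  have hcomm : ∀ σ τ : K ≃ₐ[ℚ] K, σ * τ = τ * σ := fun σ τ => e.injective (by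
    rw [map_mul, map_mul, mul_comm])
  set ζ := IsCyclotomicExtension.zeta N ℚ K with hζdef
  have hζ : IsPrimitiveRoot ζ N := IsCyclotomicExtension.zeta_spec N ℚ K
  have hspec : ∀ σ : K ≃ₐ[ℚ] K, σ ζ = ζ ^ ((e σ : (ZMod N)ˣ) : ZMod N).val := fun σ =>
    (hζ.autToPow_spec ℚ σ).symm
  have hζR : ζ ∈ Algebra.adjoin ℤ {ζ} := Algebra.subset_adjoin rfl
  -- the elements of the cyclotomic field
  set ω := ζ ^ (4 * (a * b)) with hω
  have hωp : IsPrimitiveRoot ω t := hζ.pow (NeZero.pos N) (by rw [hN])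
  obtain ⟨r, hrR, hr⟩ := exists_sqrt hM0 (ξ := ζ ^ t) (hζ.pow (NeZero.pos N) (by rw [hN]; ring))
  have hrR' : r ∈ Algebra.adjoin ℤ {ζ} := by
    refine (Algebra.adjoin_le (S := Algebra.adjoin ℤ {ζ}) ?_) hrR
    rintro _ rfl; exact pow_mem hζR _
  obtain ⟨ε, hεR, hε⟩ : ∃ ε ∈ Algebra.adjoin ℤ {ζ}, ε ^ m = ((s : ℤ) : K) := by
    rcases hs with rfl | rfl
    · exact ⟨1, one_mem _, by simp⟩
    · refine ⟨ζ ^ (2 * (a * b) * n), pow_mem hζR _, ?_⟩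
      have h2 : IsPrimitiveRoot ((ζ ^ (2 * (a * b) * n)) ^ m) 2 := by
        rw [← pow_mul]
        exact hζ.pow (NeZero.pos N) (by rw [hN, hn]; ring)
      rw [h2.eq_neg_one_of_two_right]; simp
  set c : ℤ := s * (a * b : ℕ) ^ h with hc
  set β₁ := r ^ l * ε with hβ₁
  have hβ₁R : β₁ ∈ Algebra.adjoin ℤ {ζ} := mul_mem (pow_mem hrR' _) hεR
  have hβ₁m : β₁ ^ m = (c : K) := by
    rw [hβ₁, mul_pow, hε, ← pow_mul, mul_comm l m, ← hl, pow_mul, hr, hc]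
    push_cast; ring
  set β : K := β₁ / ((b ^ l : ℕ) : K) with hβ
  have hbK : ((b : ℕ) : K) ≠ 0 := Nat.cast_ne_zero.2 hb.ne'
  have hβm : β ^ m = (g : K) := by
    rw [hβ, div_pow, hβ₁m, hc, hg, hab]
    push_cast
    rw [← pow_mul, mul_comm l m, ← hl, two_mul, pow_add, div_pow, mul_pow]
    field_simp
  set E' : IntermediateField ℚ K := IntermediateField.adjoin ℚ {ω, β} with hE'
  let f : K →ₐ[ℚ] ℂ := K.toSubfield.subtype.toRatAlgHom
  have hlift : E'.map f = IntermediateField.adjoin ℚ {(ω : ℂ), (β : ℂ)} := by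
    rw [hE', IntermediateField.adjoin_map, Set.image_pair]; rfl
  have hωℂ : IsPrimitiveRoot (ω : ℂ) t := (IsPrimitiveRoot.coe_submonoidClass_iff).2 hωp
  have hβℂ : (β : ℂ) ^ m = (g : ℂ) := by
    have := congrArg (fun z : K => (z : ℂ)) hβm
    simpa using this
  have hg' : g = g₀ ^ h ∨ g = -(g₀ ^ h) := by
    rcases hs with rfl | rfl
    · left; simpa using hg
    · right; simpa using hg
  have hfin := finrank_split h0 hnp hg' K hcomm hm ht hn hωℂ hβℂ (E'.map f) hlift (by
    rw [hlift, IntermediateField.adjoin_le_iff]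
    rintro z (rfl | rfl)
    · exact ω.2
    · exact β.2)
  have hEE : Module.finrank ℚ (E'.map f) = Module.finrank ℚ E' :=
    (IntermediateField.equivMap E' f).toLinearEquiv.finrank_eq.symm
  have hinj : Function.Injective (fun σ : K ≃ₐ[ℚ] K => ((e σ : (ZMod N)ˣ) : ZMod N)) :=
    Units.val_injective.comp e.injective
  refine ⟨(Finset.univ.filter (· ∈ E'.fixingSubgroup)).image
    (fun σ : K ≃ₐ[ℚ] K => ((e σ : (ZMod N)ˣ) : ZMod N)), ?_, ?_, ?_⟩
  · intro u hu
    obtain ⟨σ, -, rfl⟩ := Finset.mem_image.1 hu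
    exact (e σ).isUnit
  · rw [Finset.card_image_of_injective _ hinj]
    have h1 : (Finset.univ.filter (· ∈ E'.fixingSubgroup)).card = Module.finrank E' K := by
      rw [← IsGalois.card_fixingSubgroup_eq_finrank, Nat.card_eq_fintype_card,
        Fintype.card_subtype]
    have h2 : Module.finrank ℚ E' * Module.finrank E' K = Module.finrank ℚ K :=
      Module.finrank_mul_finrank ℚ E' K
    have h3 : Module.finrank ℚ K = N.totient := IsCyclotomicExtension.finrank K hirr
    rw [h1, hfin, hEE, ← h3, ← h2, hn]; ring
  · intro p hp hpN
    have : Fact p.Prime := ⟨hp⟩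
    have hcop : Nat.Coprime p N := (Nat.Prime.coprime_iff_not_dvd hp).2 hpN
    set σ := e.symm (ZMod.unitOfCoprime p hcop) with hσ
    have heσ : ((e σ : (ZMod N)ˣ) : ZMod N) = (p : ZMod N) := by
      rw [hσ, MulEquiv.apply_symm_apply, ZMod.coe_unitOfCoprime]
    have hσζ : σ ζ = ζ ^ p := by
      rw [hspec, heσ, ZMod.val_natCast]
      conv_lhs => rw [hζ.eq_orderOf]
      rw [pow_mod_orderOf]
    have h1 : (p : ZMod N) ∈ (Finset.univ.filter (· ∈ E'.fixingSubgroup)).image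
        (fun σ : K ≃ₐ[ℚ] K => ((e σ : (ZMod N)ˣ) : ZMod N)) ↔ σ ∈ E'.fixingSubgroup := by
      rw [← heσ]
      constructor
      · intro h
        obtain ⟨τ, hτ, hτ'⟩ := Finset.mem_image.1 h
        rw [← hinj hτ']; exact (Finset.mem_filter.1 hτ).2
      · intro h
        exact Finset.mem_image.2 ⟨σ, Finset.mem_filter.2 ⟨Finset.mem_univ _, h⟩, rfl⟩
    have h2 : σ ∈ E'.fixingSubgroup ↔ σ ω = ω ∧ σ β = β := by
      rw [IntermediateField.mem_fixingSubgroup_iff]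
      constructor
      · intro h
        exact ⟨h _ (IntermediateField.subset_adjoin _ _ (by simp)),
          h _ (IntermediateField.subset_adjoin _ _ (by simp))⟩
      · rintro ⟨ho, hbb⟩ x hx
        induction hx using IntermediateField.adjoin_induction with
        | mem x hx => rcases hx with rfl | rfl <;> assumption
        | algebraMap x => simp
        | add x y _ _ hx hy => rw [map_add, hx, hy]
        | inv x _ hx => rw [map_inv₀, hx]
        | mul x y _ _ hx hy => rw [map_mul, hx, hy]
    have h3 : σ ω = ω ↔ p ≡ 1 [MOD t] := by
      have h3a : σ ω = ω ^ p := by rw [hω, map_pow, hσζ, ← pow_mul, ← pow_mul, mul_comm]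
      rw [h3a]
      have hω0 : ω ≠ 0 := hωp.ne_zero ht.ne'
      have h3b : ω ^ p = ω ^ (p - 1) * ω := by rw [← pow_succ, Nat.sub_add_cancel hp.one_lt.le]
      rw [h3b, mul_eq_right₀ hω0, hωp.pow_eq_one_iff_dvd, ← Nat.modEq_iff_dvd' hp.one_lt.le]
      exact ⟨fun h => h.symm, fun h => h.symm⟩
    have h4 : σ β = β ↔ σ β₁ = β₁ := by
      rw [hβ, map_div₀, map_natCast]
      have hbl : ((b ^ l : ℕ) : K) ≠ 0 := by push_cast; exact pow_ne_zero _ hbK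
      exact div_left_inj' hbl
    rw [h1, h2, h3, h4]
    refine and_congr_right fun hpt => ?_
    have htp : t ∣ p - 1 := (Nat.modEq_iff_dvd' hp.one_lt.le).1 hpt.symm
    have hpM : ¬ p ∣ a * b := fun h => hpN (hN ▸ (h.mul_left 4).mul_right t)
    have hpc : ¬ (p : ℤ) ∣ c := by
      intro hd
      have hd' : (p : ℤ) ∣ ((a * b : ℕ) : ℤ) ^ h := by
        rcases hs with hs | hs
        · rw [hc, hs, one_mul] at hd; exact hd
        · rw [hc, hs, neg_one_mul] at hd; exact (dvd_neg).1 hd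
      have := Int.Prime.dvd_pow' hp hd'
      exact hpM (by exact_mod_cast this)
    exact frob_fix hζ (σ : K →+* K) hσζ ((Dvd.intro_left n hn.symm).trans htp) hpc hβ₁R hβ₁m

end SW

/-! ### The asymptotic formula -/

namespace SW
open Complex Metric MeasureTheory Set

theorem num_den {g g₀ : ℚ} {h : ℕ} {s : ℤ} (hs : s = 1 ∨ s = -1) (hg : g = s * g₀ ^ h) :
    g.num = s * g₀.num ^ h ∧ g.den = g₀.den ^ h := by
  rcases hs with rfl | rfl
  · have : g = g₀ ^ h := by simpa using hg
    rw [this, Rat.num_pow, Rat.den_pow]; simp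
  · have : g = -(g₀ ^ h) := by simpa using hg
    rw [this, Rat.neg_num, Rat.neg_den, Rat.num_pow, Rat.den_pow]; simp

/-- The primes dividing the numerator or denominator of `g = ± g₀ ^ h` are those dividing the
numerator or denominator of `g₀`. -/
theorem ordZero_iff {g g₀ : ℚ} {h a : ℕ} (hh : 1 ≤ h) (ha : g₀.num = a) {s : ℤ}
    (hs : s = 1 ∨ s = -1) (hg : g = s * g₀ ^ h) {p : ℕ} (hp : p.Prime) :
    OrdZero g p ↔ ¬ p ∣ a * g₀.den := by
  obtain ⟨h1, h2⟩ := num_den hs hg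
  have h3 : (p : ℤ) ∣ g.num ↔ p ∣ a := by
    have : (p : ℤ) ∣ g.num ↔ (p : ℤ) ∣ (a : ℤ) ^ h := by
      rw [h1, ha]
      rcases hs with rfl | rfl
      · rw [one_mul]
      · rw [neg_one_mul, dvd_neg]
    rw [this, (Nat.prime_iff_prime_int.1 hp).dvd_pow_iff_dvd (by omega)]
    exact Int.natCast_dvd_natCast
  have h4 : p ∣ g.den ↔ p ∣ g₀.den := by
    rw [h2, hp.prime.dvd_pow_iff_dvd (by omega)]
  rw [OrdZero, h3, h4, hp.dvd_mul, not_or]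

/-- Modulo `m`-th powers, `g` agrees with the integer `± (a b) ^ h`. -/
theorem pow_iff {g g₀ : ℚ} {h a : ℕ} (ha : g₀.num = a) {s : ℤ}
    (hs : s = 1 ∨ s = -1) (hg : g = s * g₀ ^ h) {p m : ℕ} (hp : p.Prime) (hpb : ¬ p ∣ g₀.den)
    (hm : m ∣ 2 * h) :
    (∃ y : ZMod p, y ^ m = ratRed g p) ↔
      ∃ y : ZMod p, y ^ m = ((s * (a * g₀.den : ℕ) ^ h : ℤ) : ZMod p) := by
  have : Fact p.Prime := ⟨hp⟩
  obtain ⟨h1, h2⟩ := num_den hs hg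
  obtain ⟨l, hl⟩ := hm
  have hb : (g₀.den : ZMod p) ≠ 0 := by
    rwa [Ne, ZMod.natCast_eq_zero_iff]
  set b : ZMod p := (g₀.den : ZMod p) with hbdef
  have hr : ratRed g p * (b ^ l) ^ m = ((s * (a * g₀.den : ℕ) ^ h : ℤ) : ZMod p) := by
    rw [ratRed, h1, h2, ha]
    push_cast
    rw [← hbdef, ← pow_mul, mul_comm l m, ← hl, two_mul, pow_add, mul_pow]
    field_simp
  rw [← hr]
  constructor
  · rintro ⟨y, hy⟩; exact ⟨y * b ^ l, by rw [mul_pow, hy]⟩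
  · rintro ⟨y, hy⟩
    refine ⟨y / b ^ l, ?_⟩
    rw [div_pow, hy, mul_div_cancel_right₀]
    exact pow_ne_zero _ (pow_ne_zero _ hb)

/-- Orthogonality of characters turns `M_{g,t}(x)` into a count of primes modulo which `g` is an
`m`-th power, `m = gcd(2h, t)`. -/
theorem Mgt_eq {g : ℚ} {h t m : ℕ} (ht : 0 < t) (hm : m = Nat.gcd (2 * h) t)
    (x : ℝ) : Mgt g h t x = ((m / t * ((primesTo g t x).filter
      fun p => ∃ y : ZMod p, y ^ m = ratRed g p).card : ℝ) : ℂ) := by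
  have hm0 : m ≠ 0 := by rw [hm]; exact (Nat.gcd_pos_of_pos_right _ ht).ne'
  have key : ∀ p ∈ primesTo g t x, (∑ d ∈ (Nat.gcd h t).divisors, psiSum g p d) +
      ∑ d ∈ (Nat.gcd (2 * h) t).divisors.filter (fun d => ¬ d ∣ h), psiSum g p d =
        if ∃ y : ZMod p, y ^ m = ratRed g p then (m : ℂ) else 0 := by
    intro p hp
    obtain ⟨-, hp, -, ⟨ho1, ho2⟩, hpt⟩ := Finset.mem_filter.1 hp
    have : Fact p.Prime := ⟨hp⟩
    have htp : t ∣ p - 1 := (Nat.modEq_iff_dvd' hp.one_lt.le).1 hpt.symm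
    have hmp : m ∣ p - 1 := (hm ▸ Nat.gcd_dvd_right _ _ : m ∣ t).trans htp
    have hu : ratRed g p ≠ 0 := by
      rw [ratRed]
      refine mul_ne_zero ?_ (inv_ne_zero ?_)
      · rwa [Ne, ZMod.intCast_zmod_eq_zero_iff_dvd]
      · rwa [Ne, ZMod.natCast_eq_zero_iff]
    refine Eq.trans ?_ ((sum_psi hmp hu).trans (by congr))
    change _ = ∑ d ∈ m.divisors, psiSum g p d
    rw [← hm, ← Finset.sum_filter_add_sum_filter_not m.divisors (fun d => d ∣ h)]
    congr 1
    refine Finset.sum_congr ?_ fun _ _ => rfl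
    ext d
    simp only [Nat.mem_divisors, Finset.mem_filter, hm, Nat.dvd_gcd_iff]
    constructor
    · rintro ⟨⟨h1, h2⟩, h3⟩
      exact ⟨⟨⟨h1.mul_left 2, h2⟩, hm ▸ hm0⟩, h1⟩
    · rintro ⟨⟨⟨h1, h2⟩, h3⟩, h4⟩
      exact ⟨⟨h4, h2⟩, (Nat.gcd_pos_of_pos_right _ ht).ne'⟩
  rw [Mgt, Lgt, Qgt, ← mul_add, ← Finset.sum_add_distrib, Finset.sum_congr rfl key,
    ← Finset.sum_filter, Finset.sum_const, nsmul_eq_mul]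
  push_cast
  ring

/-- A set of primes cut out by congruence conditions is counted class by class. -/
theorem card_eq_sum_piC {N : ℕ} [NeZero N] (H : Finset (ZMod N)) (x : ℝ) {S : Finset ℕ}
    (hS : ∀ p, p ∈ S ↔ p ∈ Finset.range (⌊x⌋₊ + 1) ∧ p.Prime ∧ (p : ZMod N) ∈ H) :
    S.card = ∑ u ∈ H, piC N u x := by
  rw [Finset.card_eq_sum_card_fiberwise (f := fun p : ℕ => (p : ZMod N)) (t := H)]
  · refine Finset.sum_congr rfl fun u hu => ?_
    rw [piC]
    congr 1
    ext p
    simp only [Finset.mem_filter, hS]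
    constructor
    · rintro ⟨⟨h1, h2, h3⟩, h4⟩; exact ⟨h1, h2, h4⟩
    · rintro ⟨h1, h2, h3⟩; exact ⟨⟨h1, h2, h3 ▸ hu⟩, h3⟩
  · intro p hp
    exact ((hS p).1 hp).2.2

/-- `M_{g,t}(x)` as a weighted count of primes in residue classes, with the total weight
given by the degree of the splitting field. -/
theorem Mgt_class {g g₀ : ℚ} {h : ℕ} (hd : Decomp g g₀ h) {t : ℕ} (ht : 0 < t) {N : ℕ}
    [NeZero N] (hN : N = 4 * (g₀.num.natAbs * g₀.den) * t) :
    ∃ (m : ℕ) (H : Finset (ZMod N)), m ≤ t ∧ (∀ u ∈ H, IsUnit u) ∧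
      H.card * m * Module.finrank ℚ (splitField g t) = t * N.totient ∧
      ∀ x, Mgt g h t x = ((m / t * ∑ u ∈ H, (piC N u x : ℝ) : ℝ) : ℂ) := by
  obtain ⟨s, hs, hg⟩ : ∃ s : ℤ, (s = 1 ∨ s = -1) ∧ g = s * g₀ ^ h := by
    rcases hd.eq with h | h
    · exact ⟨1, Or.inl rfl, by simpa using h⟩
    · exact ⟨-1, Or.inr rfl, by simpa using h⟩
  have hnum : 0 < g₀.num := Rat.num_pos.2 hd.g₀_pos
  set a := g₀.num.natAbs with ha
  have ha' : g₀.num = a := (Int.natAbs_of_nonneg hnum.le).symm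
  have ha0 : 0 < a := Int.natAbs_pos.2 hnum.ne'
  have hab : g₀ = (a : ℚ) / g₀.den := by
    conv_lhs => rw [← Rat.num_div_den g₀, ha']
    simp
  obtain ⟨H, hH, hcard, hmem⟩ := exists_class hd.g₀_pos hd.not_power ha0 g₀.den_pos hab hs hg
    (t := t) rfl ht hN
  refine ⟨Nat.gcd (2 * h) t, H, Nat.gcd_le_right _ ht, hH, hcard, fun x => ?_⟩
  rw [Mgt_eq ht rfl, card_eq_sum_piC H x]
  · push_cast; rfl
  intro p
  rw [Finset.mem_filter, primesTo, Finset.mem_filter]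
  constructor
  · rintro ⟨⟨hpx, hp, hodd, hord, hpt⟩, hy⟩
    have hpM := (ordZero_iff hd.h_pos ha' hs hg hp).1 hord
    have hpN : ¬ p ∣ N := by
      rw [hN]
      intro hpd
      rcases (Nat.Prime.dvd_mul hp).1 hpd with hpd | hpd
      · rcases (Nat.Prime.dvd_mul hp).1 hpd with hpd | hpd
        · have : p ∣ 2 := hp.dvd_of_dvd_pow (n := 2) (by norm_num; exact hpd)
          have := (Nat.prime_dvd_prime_iff_eq hp Nat.prime_two).1 this
          subst this; exact absurd hodd (by decide)
        · exact hpM hpd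
      · have htp : t ∣ p - 1 := (Nat.modEq_iff_dvd' hp.one_lt.le).1 hpt.symm
        have := Nat.le_of_dvd (by have := hp.one_lt; omega) (hpd.trans htp)
        have := hp.one_lt; omega
    refine ⟨hpx, hp, (hmem p hp hpN).2 ⟨hpt, ?_⟩⟩
    exact (pow_iff ha' hs hg hp (fun hb => hpM (hb.mul_left a)) (Nat.gcd_dvd_left _ _)).1 hy
  · rintro ⟨hpx, hp, hpH⟩
    have hpN : ¬ p ∣ N := by
      have := (ZMod.isUnit_iff_coprime p N).1 (hH _ hpH)
      exact (Nat.Prime.coprime_iff_not_dvd hp).1 this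
    have hpM : ¬ p ∣ a * g₀.den := fun hpd => hpN (hN ▸ (hpd.mul_left 4).mul_right t)
    obtain ⟨hpt, hy⟩ := (hmem p hp hpN).1 hpH
    have hodd : Odd p := by
      refine hp.odd_of_ne_two fun h2 => hpN ?_
      rw [hN, h2]; exact ⟨2 * (a * g₀.den) * t, by ring⟩
    exact ⟨⟨hpx, hp, hodd, (ordZero_iff hd.h_pos ha' hs hg hp).2 hpM, hpt⟩,
      (pow_iff ha' hs hg hp (fun hb => hpM (hb.mul_left a)) (Nat.gcd_dvd_left _ _)).2 hy⟩

end SW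

/-- the asymptotic for `M_{g,t}(x)`, uniformly in `t ≤ (log x)^C / |d(g₀)|`. -/
theorem stmt9 (g g₀ : ℚ) (h : ℕ) (hd : Decomp g g₀ h) (C : ℝ) (hC : 1 < C) :
    ∃ c₃ : ℝ, 0 < c₃ ∧ ∃ C₀ : ℝ, 0 < C₀ ∧ ∃ x₀ : ℝ, ∀ x : ℝ, x₀ ≤ x → ∀ t : ℕ, 1 ≤ t →
      (t : ℝ) ≤ (Real.log x) ^ C / |(discQuad g₀ : ℝ)| →
      ‖Mgt g h t x - ((Li x / (Module.finrank ℚ (splitField g t) : ℝ) : ℝ) : ℂ)‖ ≤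
        C₀ * x * Real.exp (-c₃ * Real.sqrt (Real.log x)) := by
  obtain ⟨c, hc0, -, C₁, hC₁, x₁, hpi⟩ := SW.pi_class (A := C + 1) (by linarith)
  set M : ℕ := 4 * (g₀.num.natAbs * g₀.den) with hM
  have hM0 : 0 < M := by
    have : 0 < g₀.num.natAbs := Int.natAbs_pos.2 (Rat.num_pos.2 hd.g₀_pos).ne'
    have := g₀.den_pos
    positivity
  have hev := (SW.eventually_pow_log_le (2 * (C + 1) / c)).and
    ((Real.tendsto_log_atTop.eventually_ge_atTop (max (M : ℝ) 1)).and
      (eventually_ge_atTop (max x₁ 0)))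
  obtain ⟨x₀, hx₀⟩ := eventually_atTop.1 hev
  refine ⟨c / 2, by positivity, C₁, hC₁, x₀, fun x hx t ht htx => ?_⟩
  obtain ⟨hpow, hlog, hxx⟩ := hx₀ x hx
  have hx1 : x₁ ≤ x := (le_max_left _ _).trans hxx
  have hx0 : 0 ≤ x := (le_max_right _ _).trans hxx
  have hlM : (M : ℝ) ≤ Real.log x := (le_max_left _ _).trans hlog
  have hl1 : 1 ≤ Real.log x := (le_max_right _ _).trans hlog
  have hl0 : 0 < Real.log x := by linarith
  set N : ℕ := M * t with hN
  have hN0 : 0 < N := Nat.mul_pos hM0 ht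
  have : NeZero N := ⟨hN0.ne'⟩
  -- a vanishing discriminant would leave no admissible `t`
  have htC : (t : ℝ) ≤ (Real.log x) ^ C := by
    have ht1 : (1 : ℝ) ≤ t := by exact_mod_cast ht
    rcases eq_or_ne (discQuad g₀) 0 with h0 | h0
    · rw [h0] at htx; simp at htx; linarith
    · refine htx.trans (div_le_self (by positivity) ?_)
      have := Int.one_le_abs h0
      exact_mod_cast this
  have hNA : (N : ℝ) ≤ (Real.log x) ^ (C + 1) := by
    rw [hN, Real.rpow_add_one hl0.ne', mul_comm]
    push_cast
    gcongr
  obtain ⟨m, H, hmt, hH, hcard, hMgt⟩ := SW.Mgt_class hd ht hN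
  set D := Module.finrank ℚ (splitField g t) with hD
  have hφ : 0 < N.totient := Nat.totient_pos.2 hN0
  have hD0 : D ≠ 0 := by
    rintro h0; rw [h0, mul_zero] at hcard
    have := Nat.mul_pos ht hφ
    omega
  have ht0 : (t : ℝ) ≠ 0 := by positivity
  set E := C₁ * x * Real.exp (-c * Real.sqrt (Real.log x)) with hE
  have hE0 : 0 ≤ E := by positivity
  have hmain : Li x / (D : ℝ) = m / t * ∑ u ∈ H, (1 / (N.totient : ℝ) * Li x) := by
    rw [Finset.sum_const, nsmul_eq_mul]
    have h1 : (H.card : ℝ) * m * D = t * N.totient := by exact_mod_cast hcard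
    have h2 : (D : ℝ) ≠ 0 := by exact_mod_cast hD0
    have h3 : (N.totient : ℝ) ≠ 0 := by exact_mod_cast hφ.ne'
    field_simp
    linear_combination (-Li x) * h1
  rw [hMgt, ← Complex.ofReal_sub, Complex.norm_real, Real.norm_eq_abs, hmain, ← mul_sub,
    ← Finset.sum_sub_distrib, abs_mul, abs_of_nonneg (by positivity)]
  have hsum : |∑ u ∈ H, ((SW.piC N u x : ℝ) - 1 / (N.totient : ℝ) * Li x)| ≤ H.card * E := by
    refine (Finset.abs_sum_le_sum_abs _ _).trans ?_
    rw [← nsmul_eq_mul]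
    exact Finset.sum_le_card_nsmul _ _ _ fun u hu => hpi x hx1 N u (hH u hu) hNA
  have hHN : (H.card : ℝ) ≤ N := by
    have := Finset.card_le_univ H
    rw [ZMod.card] at this
    exact_mod_cast this
  have hmt' : (m : ℝ) / t ≤ 1 := div_le_one_of_le₀ (by exact_mod_cast hmt) (by positivity)
  -- the number of classes, at most `N`, is absorbed by giving up half of the exponent `c`
  have hsq : (Real.log x) ^ (C + 1) ≤ Real.exp (c / 2 * Real.sqrt (Real.log x)) := by
    have h1 := Real.rpow_le_rpow (by positivity) hpow (show (0:ℝ) ≤ c / 2 by positivity)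
    rw [← Real.rpow_mul hl0.le, ← Real.exp_mul] at h1
    rw [mul_comm (c / 2)]
    convert h1 using 2
    field_simp
  calc _ ≤ 1 * (H.card * E) := by gcongr
    _ ≤ Real.exp (c / 2 * Real.sqrt (Real.log x)) * E := by
        rw [one_mul]; gcongr; exact hHN.trans (hNA.trans hsq)
    _ = _ := by
        rw [hE, show -c * Real.sqrt (Real.log x) = -(c / 2) * Real.sqrt (Real.log x) +
          -(c / 2 * Real.sqrt (Real.log x)) by ring, Real.exp_add, Real.exp_neg]
        field_simp
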